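/- There are exactly 716 equivalence classes of pure double circulant self-dual binary codes of length 90 (hence dimension 45) with minimum weight 14, where two codes are equivalent if one is obtained from the other by a permutation of coordinates. -/

import Mathlib

/-- The standard inner product on `ι → ZMod 2`. -/
def dot {ι : Type*} [Fintype ι] (x y : ι → ZMod 2) : ZMod 2 := ∑ i, x i * y i

/-- A binary linear code is self-dual if it coincides with its dual. -/
def IsSelfDual {ι : Type*} [Fintype ι] (C : Submodule (ZMod 2) (ι → ZMod 2)) : Prop :=
  ∀ x, x ∈ C ↔ ∀ y ∈ C, dot x y = 0

/-- `C` has minimum (nonzero) weight exactly `d`. -/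
def MinWeightIs {ι : Type*} [Fintype ι] (C : Submodule (ZMod 2) (ι → ZMod 2)) (d : ℕ) : Prop :=
  (∃ x ∈ C, x ≠ 0 ∧ hammingNorm x = d) ∧ ∀ x ∈ C, x ≠ 0 → d ≤ hammingNorm x

/-- `A_i(C)`: the number of codewords of `C` of Hamming weight `i`. -/
noncomputable def weightEnum {ι : Type*} [Fintype ι] (C : Submodule (ZMod 2) (ι → ZMod 2)) (i : ℕ) : ℕ :=
  Set.ncard {x : ι → ZMod 2 | x ∈ C ∧ hammingNorm x = i}

/-- Two codes are equivalent if a coordinate permutation maps one onto the other. -/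
def CodeEquiv {ι : Type*} [Fintype ι] (C C' : Submodule (ZMod 2) (ι → ZMod 2)) : Prop :=
  ∃ σ : Equiv.Perm ι, Submodule.map (LinearMap.funLeft (ZMod 2) (ZMod 2) ⇑σ) C = C'

/-- The order of the automorphism group of a code: the number of coordinate
permutations mapping the code onto itself. -/
noncomputable def autGroupOrder {ι : Type*} [Fintype ι] (C : Submodule (ZMod 2) (ι → ZMod 2)) : ℕ :=
  Nat.card {σ : Equiv.Perm ι // Submodule.map (LinearMap.funLeft (ZMod 2) (ZMod 2) ⇑σ) C = C}

/-- A circulant matrix: each row is the cyclic shift of the previous one. -/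
def IsCirculant {n : ℕ} (R : Matrix (Fin n) (Fin n) (ZMod 2)) : Prop :=
  ∃ v : Fin n → ZMod 2, R = Matrix.circulant v

/-- The pure double circulant code with generator matrix `(I_n | R)`. -/
def pureDCC {n : ℕ} (R : Matrix (Fin n) (Fin n) (ZMod 2)) :
    Submodule (ZMod 2) (Fin n ⊕ Fin n → ZMod 2) :=
  Submodule.span (ZMod 2)
    (Set.range fun i : Fin n =>
      Sum.elim (fun j => if j = i then (1 : ZMod 2) else 0) (R i))

/-- A bordered matrix: first row `(0,1,…,1)`, first column `(0,1,…,1)ᵀ`, and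
lower-right block an `n × n` circulant matrix. -/
def IsBorderMatrix {n : ℕ} (B : Matrix (Fin (n + 1)) (Fin (n + 1)) (ZMod 2)) : Prop :=
  B 0 0 = 0 ∧ (∀ j, j ≠ 0 → B 0 j = 1) ∧ (∀ i, i ≠ 0 → B i 0 = 1) ∧
  ∃ R' : Matrix (Fin n) (Fin n) (ZMod 2), IsCirculant R' ∧
    ∀ i j : Fin n, B i.succ j.succ = R' i j

/-- The bordered double circulant code with generator matrix `(I_{n+1} | B)`. -/
def borderedDCC {n : ℕ} (B : Matrix (Fin (n + 1)) (Fin (n + 1)) (ZMod 2)) :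
    Submodule (ZMod 2) (Fin (n + 1) ⊕ Fin (n + 1) → ZMod 2) :=
  Submodule.span (ZMod 2)
    (Set.range fun i : Fin (n + 1) =>
      Sum.elim (fun j => if j = i then (1 : ZMod 2) else 0) (B i))

/-!
Replacing the coordinates of the second half by their negatives turns the pure double circulant code
of `v` into the Hankel code `{(u, u ⋆ v)}`, where `⋆` is correlation on the group `ℤ/45`; it is
self-dual exactly when `v ⋆ v` is the unit `δ₀`. By the idempotents of `𝔽₂[ℤ/45]`, and up to
translations and dilations of `v`, which give equivalent codes, there are 12150 such `v`. Each of
them either has a codeword of weight less than 14 or gives a code equivalent to one of 716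
representatives.

In a self-dual Hankel code one half of a word of weight at most 14 has weight at most 7, and by the
cycle lemma some translate of this half is balanced: no initial segment of `ℤ/45` is denser than the
whole. Running through the balanced words of weight at most 7 shows that the representatives have
minimum weight 14 and yields their words of weight 14. The number of the latter through each pair of
coordinates, combined into one sum over the pairs containing a fixed coordinate, is an invariant
that separates the representatives.
-/

open scoped Finset

section CodeEquiv

variable {ι : Type*} [Fintype ι] {C C' C'' : Submodule (ZMod 2) (ι → ZMod 2)}

theorem hammingNorm_sumElim {κ : Type*} [Fintype κ] (u : ι → ZMod 2) (w : κ → ZMod 2) :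
    hammingNorm (Sum.elim u w) = hammingNorm u + hammingNorm w := by
  simp only [hammingNorm, Finset.card_filter, Fintype.sum_sum_type, Sum.elim_inl, Sum.elim_inr]
  rfl

theorem dot_sumElim {κ : Type*} [Fintype κ] (u u' : ι → ZMod 2) (w w' : κ → ZMod 2) :
    dot (Sum.elim u w) (Sum.elim u' w') = dot u u' + dot w w' :=
  Fintype.sum_sum_type _

theorem dot_comp_perm (σ : Equiv.Perm ι) (f g : ι → ZMod 2) : dot (f ∘ σ) (g ∘ σ) = dot f g :=
  Equiv.sum_comp σ fun i => f i * g i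

theorem hammingNorm_comp_perm (σ : Equiv.Perm ι) (f : ι → ZMod 2) :
    hammingNorm (f ∘ σ) = hammingNorm f :=
  Finset.card_equiv σ fun i => by simp

theorem comp_perm_ne_zero_iff {α M : Type*} [Zero M] (σ : Equiv.Perm α) (f : α → M) :
    f ∘ σ ≠ 0 ↔ f ≠ 0 :=
  σ.surjective.injective_comp_right.ne_iff' rfl

theorem codeEquiv_iff :
    CodeEquiv C C' ↔ ∃ σ : Equiv.Perm ι, ∀ f : ι → ZMod 2, f ∘ σ ∈ C' ↔ f ∈ C := by
  refine exists_congr fun σ => ⟨?_, fun h => ?_⟩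
  · rintro rfl f
    exact Submodule.mem_map.trans
      ⟨fun ⟨g, hg, e⟩ => σ.surjective.injective_comp_right e ▸ hg, fun hf => ⟨f, hf, rfl⟩⟩
  · ext g
    obtain ⟨f, rfl⟩ : ∃ f, f ∘ σ = g := ⟨g ∘ σ.symm, by ext; simp⟩
    rw [h f]
    exact Submodule.mem_map.trans
      ⟨fun ⟨g, hg, e⟩ => σ.surjective.injective_comp_right e ▸ hg, fun hf => ⟨f, hf, rfl⟩⟩

namespace CodeEquiv

theorem symm (h : CodeEquiv C C') : CodeEquiv C' C := by
  obtain ⟨σ, hσ⟩ := codeEquiv_iff.1 h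
  refine codeEquiv_iff.2 ⟨σ.symm, fun f => ?_⟩
  rw [← hσ (f ∘ σ.symm), Function.comp_assoc, σ.symm_comp_self, Function.comp_id]

theorem trans (h : CodeEquiv C C') (h' : CodeEquiv C' C'') : CodeEquiv C C'' := by
  obtain ⟨σ, hσ⟩ := codeEquiv_iff.1 h
  obtain ⟨τ, hτ⟩ := codeEquiv_iff.1 h'
  exact codeEquiv_iff.2 ⟨τ.trans σ, fun f => (hτ (f ∘ σ)).trans (hσ f)⟩

theorem isSelfDual (h : CodeEquiv C C') (hC : IsSelfDual C) : IsSelfDual C' := by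
  obtain ⟨σ, hσ⟩ := codeEquiv_iff.1 h
  have surj := σ.injective.surjective_comp_right (γ := ZMod 2)
  refine surj.forall.2 fun f => (hσ f).trans <| (hC f).trans <| Iff.symm <| surj.forall.trans ?_
  exact forall_congr' fun g => by rw [hσ, dot_comp_perm]

theorem minWeightIs {d : ℕ} (h : CodeEquiv C C') (hC : MinWeightIs C d) : MinWeightIs C' d := by
  obtain ⟨σ, hσ⟩ := codeEquiv_iff.1 h
  obtain ⟨⟨f, hf, hf0, hfd⟩, hmin⟩ := hC
  have surj := σ.injective.surjective_comp_right (γ := ZMod 2)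
  refine ⟨⟨f ∘ σ, (hσ f).2 hf, (comp_perm_ne_zero_iff σ f).2 hf0, ?_⟩,
    surj.forall.2 fun g hg hg0 => ?_⟩
  · rw [hammingNorm_comp_perm, hfd]
  · rw [hammingNorm_comp_perm]
    exact hmin g ((hσ g).1 hg) ((comp_perm_ne_zero_iff σ g).1 hg0)

end CodeEquiv

/-- The number of words of weight `d` of `C` whose support contains both `p` and `q`. -/
noncomputable def pairCount (C : Submodule (ZMod 2) (ι → ZMod 2)) (d : ℕ) (p q : ι) : ℕ :=
  {w | w ∈ C ∧ hammingNorm w = d ∧ w p ≠ 0 ∧ w q ≠ 0}.ncard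

/-- The sum over all coordinates `q` of `F` applied to the pair count of `p` and `q`. Coordinate
permutations carry it along; on a code with transitive automorphism group it does not depend on
`p` and is therefore an invariant of the equivalence class. -/
noncomputable def pairInvariant (F : ℕ → ℕ) (C : Submodule (ZMod 2) (ι → ZMod 2)) (d : ℕ) (p : ι) :
    ℕ :=
  ∑ q, F (pairCount C d p q)

theorem pairCount_of_perm {σ : Equiv.Perm ι} (hσ : ∀ f : ι → ZMod 2, f ∘ σ ∈ C' ↔ f ∈ C) (d : ℕ)
    (p q : ι) : pairCount C' d p q = pairCount C d (σ p) (σ q) := by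
  refine (Set.ncard_congr (fun f _ => f ∘ σ) ?_ ?_ ?_).symm
  · rintro f ⟨hf, hd, hpq⟩
    exact ⟨(hσ f).2 hf, (hammingNorm_comp_perm σ f).trans hd, hpq⟩
  · exact fun f g _ _ e => σ.surjective.injective_comp_right e
  · refine (σ.injective.surjective_comp_right (γ := ZMod 2)).forall.2 fun f hf => ⟨f, ?_, rfl⟩
    exact ⟨(hσ f).1 hf.1, (hammingNorm_comp_perm σ f).symm.trans hf.2.1, hf.2.2⟩

theorem pairInvariant_of_perm {σ : Equiv.Perm ι} (hσ : ∀ f : ι → ZMod 2, f ∘ σ ∈ C' ↔ f ∈ C)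
    (F : ℕ → ℕ) (d : ℕ) (p : ι) : pairInvariant F C' d p = pairInvariant F C d (σ p) :=
  Fintype.sum_equiv σ _ _ fun q => congrArg F (pairCount_of_perm hσ d p q)

end CodeEquiv

namespace DoubleCirculant

section Translate

variable {G : Type*} [AddCommGroup G]

/-- The translate `x ↦ u (x + a)` of a sequence `u`. -/
def translate (a : G) (u : G → ZMod 2) : G → ZMod 2 := fun x => u (x + a)

theorem translate_add (a b : G) (u : G → ZMod 2) :
    translate (a + b) u = translate a (translate b u) := by
  ext x
  simp only [translate, add_assoc]

theorem translate_zero (u : G → ZMod 2) : translate 0 u = u := by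
  ext x
  simp only [translate, add_zero]

theorem translate_injective (a : G) : Function.Injective (translate a) := by
  intro u v h
  rw [← translate_zero u, ← translate_zero v, ← neg_add_cancel a, translate_add, h, translate_add]

/-- The sequence `u` read backwards. -/
def reflect (u : G → ZMod 2) : G → ZMod 2 := fun x => u (-x)

theorem reflect_reflect (u : G → ZMod 2) : reflect (reflect u) = u := by
  ext x
  rw [reflect, reflect, neg_neg]

end Translate

/-- The correlation product of two binary sequences on a finite abelian group. It is the product
of the group algebra with the first factor reflected; a code with generator matrix
`(I | (v (i + j))ᵢⱼ)` consists of the words `(u, correlation u v)`. -/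
def correlation {G : Type*} [AddCommGroup G] [Fintype G] (u v : G → ZMod 2) : G → ZMod 2 :=
  fun j => ∑ i, u i * v (i + j)

local infixl:70 " ⋆ " => correlation

section Correlation

variable {G : Type*} [AddCommGroup G] [Fintype G]

theorem correlation_add_left (u u' v : G → ZMod 2) : (u + u') ⋆ v = u ⋆ v + u' ⋆ v := by
  ext j
  simp only [correlation, Pi.add_apply, add_mul, Finset.sum_add_distrib]

theorem correlation_smul_left (c : ZMod 2) (u v : G → ZMod 2) : (c • u) ⋆ v = c • (u ⋆ v) := by
  ext j
  simp only [correlation, Pi.smul_apply, smul_eq_mul, mul_assoc, Finset.mul_sum]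

theorem zero_correlation (v : G → ZMod 2) : 0 ⋆ v = 0 := by
  ext j
  simp only [correlation, Pi.zero_apply, zero_mul, Finset.sum_const_zero]

theorem translate_correlation (a : G) (u v : G → ZMod 2) :
    translate a u ⋆ v = translate (-a) (u ⋆ v) := by
  ext j
  refine Fintype.sum_equiv (Equiv.addRight a) _ _ fun i => ?_
  rw [Equiv.coe_addRight, add_add_add_comm, add_neg_cancel, add_zero]
  rfl

theorem correlation_translate (a : G) (u v : G → ZMod 2) :
    u ⋆ translate a v = translate a (u ⋆ v) := by
  ext j
  simp only [correlation, translate, add_assoc]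

theorem translate_correlation_translate (a : G) (u v : G → ZMod 2) :
    translate a u ⋆ translate a v = u ⋆ v := by
  rw [translate_correlation, correlation_translate, ← translate_add, neg_add_cancel,
    translate_zero]

theorem comp_correlation_comp (φ : G ≃+ G) (u v : G → ZMod 2) :
    (u ∘ φ) ⋆ (v ∘ φ) = (u ⋆ v) ∘ φ := by
  ext j
  refine Fintype.sum_equiv φ.toEquiv _ _ fun i => ?_
  simp only [Function.comp_apply, map_add]
  rfl

theorem reflect_correlation_reflect (u v : G → ZMod 2) :
    reflect u ⋆ reflect v = reflect (u ⋆ v) :=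
  comp_correlation_comp (AddEquiv.neg G) u v

theorem reflect_correlation_reflect_comm (u v : G → ZMod 2) : reflect v ⋆ reflect u = u ⋆ v := by
  ext j
  refine Fintype.sum_equiv ((Equiv.addRight j).trans (Equiv.neg G)) _ _ fun i => ?_
  simp [reflect, mul_comm]

theorem correlation_left_comm (u v w : G → ZMod 2) : u ⋆ v ⋆ w = w ⋆ v ⋆ u := by
  ext j
  simp only [correlation, Finset.sum_mul]
  calc ∑ i, ∑ k, u k * v (k + i) * w (i + j)
      = ∑ k, ∑ i, w (i + j) * v (i + j + (k - j)) * u (k - j + j) := by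
        rw [Finset.sum_comm]
        refine Finset.sum_congr rfl fun k _ => Finset.sum_congr rfl fun i _ => ?_
        rw [show i + j + (k - j) = k + i by abel, sub_add_cancel]
        ring
    _ = ∑ k, ∑ i, w i * v (i + k) * u (k + j) :=
        Fintype.sum_equiv (Equiv.subRight j) _ _ fun k =>
          Fintype.sum_equiv (Equiv.addRight j) _ _ fun i => rfl

theorem single_correlation [DecidableEq G] (t : G) (v : G → ZMod 2) :
    Pi.single t 1 ⋆ v = translate t v := by
  ext j
  simp only [correlation, Pi.single_apply, ite_mul, one_mul, zero_mul, Finset.sum_ite_eq',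
    Finset.mem_univ, if_true, translate, add_comm]

/-- A sequence `v` is orthogonal if its translates are pairwise orthogonal of odd weight, i.e. if
the matrix `(v (i + j))ᵢⱼ` is orthogonal. -/
def IsOrthogonal [DecidableEq G] (v : G → ZMod 2) : Prop := v ⋆ v = Pi.single 0 1

namespace IsOrthogonal

variable [DecidableEq G] {v : G → ZMod 2}

theorem correlation_correlation (hv : IsOrthogonal v) (u : G → ZMod 2) : u ⋆ v ⋆ v = u := by
  rw [correlation_left_comm, hv, single_correlation, translate_zero]

theorem translate (hv : IsOrthogonal v) (a : G) : IsOrthogonal (translate a v) :=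
  (translate_correlation_translate a v v).trans hv

end IsOrthogonal

end Correlation

section HankelCode

variable {G : Type*} [AddCommGroup G] [Fintype G]

/-- The double circulant code `{(u, u ⋆ v)}` in Hankel form: its generator matrix is `(I | H)`
with the symmetric matrix `H i j = v (i + j)`. -/
def hankelCode (v : G → ZMod 2) : Submodule (ZMod 2) (G ⊕ G → ZMod 2) where
  carrier := {f | f ∘ Sum.inr = (f ∘ Sum.inl) ⋆ v}
  add_mem' {f g} (hf : _ = _) (hg : _ = _) := by
    change f ∘ Sum.inr + g ∘ Sum.inr = (f ∘ Sum.inl + g ∘ Sum.inl) ⋆ v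
    rw [correlation_add_left, hf, hg]
  zero_mem' := (zero_correlation v).symm
  smul_mem' c f (hf : _ = _) := by
    change c • (f ∘ Sum.inr) = (c • (f ∘ Sum.inl)) ⋆ v
    rw [correlation_smul_left, hf]

theorem mem_hankelCode {v : G → ZMod 2} {f : G ⊕ G → ZMod 2} :
    f ∈ hankelCode v ↔ f ∘ Sum.inr = (f ∘ Sum.inl) ⋆ v := Iff.rfl

theorem elim_mem_hankelCode (u v : G → ZMod 2) : Sum.elim u (u ⋆ v) ∈ hankelCode v := rfl

theorem forall_mem_hankelCode {v : G → ZMod 2} {P : (G ⊕ G → ZMod 2) → Prop} :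
    (∀ f ∈ hankelCode v, P f) ↔ ∀ u, P (Sum.elim u (u ⋆ v)) := by
  refine ⟨fun h u => h _ (elim_mem_hankelCode u v), fun h f hf => ?_⟩
  rw [← Sum.elim_comp_inl_inr f, mem_hankelCode.1 hf]
  exact h _

theorem correlation_apply_eq_dot (u v : G → ZMod 2) (j : G) :
    (u ⋆ v) j = dot u (translate j v) := rfl

theorem dot_correlation_comm (u v w : G → ZMod 2) : dot u (w ⋆ v) = dot (u ⋆ v) w := by
  simp only [dot, correlation, Finset.mul_sum, Finset.sum_mul]
  rw [Finset.sum_comm]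
  refine Finset.sum_congr rfl fun i _ => Finset.sum_congr rfl fun j _ => ?_
  rw [add_comm i j]
  ring

theorem isSelfDual_hankelCode_iff [DecidableEq G] {v : G → ZMod 2} :
    IsSelfDual (hankelCode v) ↔ IsOrthogonal v := by
  constructor
  · intro h
    ext t
    have ht : dot (Pi.single 0 1) (Pi.single t 1) + (v ⋆ v) t = 0 := by
      have := (h _).1 (elim_mem_hankelCode (Pi.single 0 1) v) _
        (elim_mem_hankelCode (Pi.single t 1) v)
      rwa [dot_sumElim, single_correlation, single_correlation, translate_zero,
        ← correlation_apply_eq_dot] at this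
    rw [← CharTwo.add_eq_zero.1 ht]
    exact (dotProduct_single_one _ _).trans rfl
  · intro hv f
    obtain ⟨a, b, rfl⟩ : ∃ a b, Sum.elim a b = f := ⟨_, _, Sum.elim_comp_inl_inr f⟩
    calc Sum.elim a b ∈ hankelCode v ↔ a = b ⋆ v :=
          ⟨fun h => by rw [show b = a ⋆ v from h, hv.correlation_correlation],
            fun h => by rw [h]; exact (hv.correlation_correlation b).symm⟩
      _ ↔ ∀ u, dot (a + b ⋆ v) u = 0 := by
          rw [← CharTwo.add_eq_zero]; exact dotProduct_eq_zero_iff.symm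
      _ ↔ ∀ y ∈ hankelCode v, dot (Sum.elim a b) y = 0 := by
          rw [forall_mem_hankelCode]
          refine forall_congr' fun u => ?_
          rw [dot_sumElim, dot_correlation_comm]
          exact iff_of_eq (congrArg (· = 0) (add_dotProduct a (b ⋆ v) u))

theorem codeEquiv_hankelCode_comp (v : G → ZMod 2) (φ : G ≃+ G) :
    CodeEquiv (hankelCode v) (hankelCode (v ∘ φ)) := by
  refine codeEquiv_iff.2 ⟨Equiv.sumCongr φ.toEquiv φ.toEquiv, fun f => ?_⟩
  change (f ∘ Sum.inr) ∘ φ = ((f ∘ Sum.inl) ∘ φ) ⋆ (v ∘ φ) ↔ _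
  rw [comp_correlation_comp, φ.surjective.injective_comp_right.eq_iff, mem_hankelCode]

theorem codeEquiv_hankelCode_translate (v : G → ZMod 2) (t : G) :
    CodeEquiv (hankelCode v) (hankelCode (translate t v)) := by
  refine codeEquiv_iff.2 ⟨Equiv.sumCongr (Equiv.addRight t) (Equiv.refl G), fun f => ?_⟩
  change f ∘ Sum.inr = translate t (f ∘ Sum.inl) ⋆ translate t v ↔ _
  rw [translate_correlation_translate, mem_hankelCode]

theorem comp_translate_mem_hankelCode (v : G → ZMod 2) (a : G) (f : G ⊕ G → ZMod 2) :
    f ∘ Equiv.sumCongr (Equiv.addRight a) (Equiv.addRight (-a)) ∈ hankelCode v ↔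
      f ∈ hankelCode v := by
  change translate (-a) (f ∘ Sum.inr) = translate a (f ∘ Sum.inl) ⋆ v ↔ _
  rw [translate_correlation, (translate_injective (-a)).eq_iff, mem_hankelCode]

theorem comp_swap_mem_hankelCode [DecidableEq G] {v : G → ZMod 2} (hv : IsOrthogonal v)
    (f : G ⊕ G → ZMod 2) : f ∘ Equiv.sumComm G G ∈ hankelCode v ↔ f ∈ hankelCode v := by
  change f ∘ Sum.inl = (f ∘ Sum.inr) ⋆ v ↔ f ∘ Sum.inr = (f ∘ Sum.inl) ⋆ v
  constructor <;> intro h <;> rw [h, hv.correlation_correlation]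

section Invariant

variable [DecidableEq G] {v v' : G → ZMod 2} (F : ℕ → ℕ) (d : ℕ)

theorem pairInvariant_hankelCode_eq (hv : IsOrthogonal v) (p q : G ⊕ G) :
    pairInvariant F (hankelCode v) d p = pairInvariant F (hankelCode v) d q := by
  suffices h : ∀ p, pairInvariant F (hankelCode v) d p =
      pairInvariant F (hankelCode v) d (Sum.inl 0) from (h p).trans (h q).symm
  have hl (a : G) : pairInvariant F (hankelCode v) d (Sum.inl a) =
      pairInvariant F (hankelCode v) d (Sum.inl 0) := by
    rw [pairInvariant_of_perm (comp_translate_mem_hankelCode v a) F d (Sum.inl 0)]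
    simp
  rintro (a | a)
  · exact hl a
  · exact (pairInvariant_of_perm (comp_swap_mem_hankelCode hv) F d (Sum.inr a)).trans (hl a)

theorem pairInvariant_hankelCode_of_codeEquiv (hv : IsOrthogonal v)
    (h : CodeEquiv (hankelCode v) (hankelCode v')) (p : G ⊕ G) :
    pairInvariant F (hankelCode v') d p = pairInvariant F (hankelCode v) d p := by
  obtain ⟨σ, hσ⟩ := codeEquiv_iff.1 h
  rw [pairInvariant_of_perm hσ, pairInvariant_hankelCode_eq F d hv]

end Invariant

end HankelCode

section PureDoubleCirculant

variable {n : ℕ}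

theorem mem_pureDCC_circulant {v : Fin n → ZMod 2} {f : Fin n ⊕ Fin n → ZMod 2} :
    f ∈ pureDCC (Matrix.circulant v) ↔ ∀ j, f (Sum.inr j) = ∑ i, f (Sum.inl i) * v (i - j) := by
  constructor
  · intro h
    induction h using Submodule.span_induction with
    | mem x hx =>
      obtain ⟨i, rfl⟩ := hx
      intro j
      simp [Matrix.circulant_apply]
    | zero => simp
    | add x y _ _ hx hy => intro j; simp [hx j, hy j, add_mul, Finset.sum_add_distrib]
    | smul c x _ hx => intro j; simp [hx j, Finset.mul_sum, mul_assoc]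
  · intro h
    have hf : f = ∑ i, f (Sum.inl i) •
        Sum.elim (fun j => if j = i then (1 : ZMod 2) else 0) (Matrix.circulant v i) := by
      ext (j | j)
      · simp
      · simp [h j, Matrix.circulant_apply]
    rw [hf]
    exact Submodule.sum_mem _ fun i _ =>
      Submodule.smul_mem _ _ (Submodule.subset_span ⟨i, rfl⟩)

theorem codeEquiv_hankelCode_pureDCC [NeZero n] (v : Fin n → ZMod 2) :
    CodeEquiv (hankelCode v) (pureDCC (Matrix.circulant v)) := by
  refine codeEquiv_iff.2 ⟨Equiv.sumCongr (Equiv.refl _) (Equiv.neg _), fun f => ?_⟩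
  rw [mem_pureDCC_circulant, mem_hankelCode, funext_iff, ← (Equiv.neg (Fin n)).forall_congr_right]
  simp [correlation, sub_eq_add_neg]

end PureDoubleCirculant

section Orbits

variable {G : Type*} [AddCommGroup G] [Fintype G]

theorem hammingNorm_translate (a : G) (u : G → ZMod 2) :
    hammingNorm (translate a u) = hammingNorm u :=
  hammingNorm_comp_perm (Equiv.addRight a) u

theorem hammingNorm_nsmul_eq_zero_of_translate_eq {a : G} {u : G → ZMod 2}
    (h : translate a u = u) : hammingNorm u • a = 0 := by
  have hsum : ∑ i with u i ≠ 0, (i + a) = ∑ i with u i ≠ 0, i := by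
    refine Finset.sum_equiv (Equiv.addRight a) (fun i => ?_) fun i _ => rfl
    rw [Finset.mem_filter_univ, Finset.mem_filter_univ, ← congrFun h i]
    rfl
  rw [Finset.sum_add_distrib, Finset.sum_const] at hsum
  exact left_eq_add.1 hsum.symm

/-- The weight of the word `(u, u ⋆ v)` of `hankelCode v`. -/
def wordWeight (v u : G → ZMod 2) : ℕ := hammingNorm u + hammingNorm (u ⋆ v)

theorem hammingNorm_elim_correlation (u v : G → ZMod 2) :
    hammingNorm (Sum.elim u (u ⋆ v)) = wordWeight v u := hammingNorm_sumElim _ _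

theorem wordWeight_translate (v u : G → ZMod 2) (a : G) :
    wordWeight v (translate a u) = wordWeight v u := by
  rw [wordWeight, translate_correlation, hammingNorm_translate, hammingNorm_translate, wordWeight]

theorem wordWeight_correlation [DecidableEq G] {v : G → ZMod 2} (hv : IsOrthogonal v)
    (u : G → ZMod 2) : wordWeight v (u ⋆ v) = wordWeight v u := by
  rw [wordWeight, hv.correlation_correlation, add_comm, wordWeight]

theorem eq_zero_of_translate_eq {v u : G → ZMod 2} {a : G} (h : translate a u = u)
    (hfree : ∀ a : G, wordWeight v u • a = 0 → a = 0) : a = 0 := by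
  have h' : translate (-a) (u ⋆ v) = u ⋆ v := by rw [← translate_correlation, h]
  have h₁ := hammingNorm_nsmul_eq_zero_of_translate_eq h
  have h₂ := hammingNorm_nsmul_eq_zero_of_translate_eq h'
  rw [smul_neg, neg_eq_zero] at h₂
  exact hfree a (by rw [wordWeight, add_smul, h₁, h₂, add_zero])

/-- `R` contains exactly one `u` from each translation orbit of words `(u, u ⋆ v)` of weight
`d`. -/
structure IsOrbitTransversal (v : G → ZMod 2) (d : ℕ) (R : Finset (G → ZMod 2)) : Prop where
  wordWeight_eq : ∀ u ∈ R, wordWeight v u = d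
  exists_translate_mem : ∀ u, wordWeight v u = d → ∃ a, translate a u ∈ R
  eq_of_translate_eq : ∀ u ∈ R, ∀ w ∈ R, ∀ a, translate a u = w → u = w

namespace IsOrbitTransversal

variable {v : G → ZMod 2} {d : ℕ} {R : Finset (G → ZMod 2)}

theorem ncard_eq_sum (hR : IsOrbitTransversal v d R) (hfree : ∀ a : G, d • a = 0 → a = 0)
    (P : (G → ZMod 2) → Prop) [DecidablePred P] :
    {u | wordWeight v u = d ∧ P u}.ncard = ∑ u ∈ R, #{a | P (translate a u)} := by
  have himage : {u | wordWeight v u = d ∧ P u} =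
      (fun x : Σ _ : G → ZMod 2, G => translate x.2 x.1) ''
        (R.sigma fun u => {a | P (translate a u)} : Finset _) := by
    ext u
    simp only [Set.mem_ofPred_eq, Set.mem_image, Finset.mem_coe, Finset.mem_sigma,
      Finset.mem_filter_univ]
    constructor
    · rintro ⟨hu, hP⟩
      obtain ⟨a, ha⟩ := hR.exists_translate_mem u hu
      have hback : translate (-a) (translate a u) = u := by
        rw [← translate_add, neg_add_cancel, translate_zero]
      exact ⟨⟨translate a u, -a⟩, ⟨ha, by rwa [hback]⟩, hback⟩
    · rintro ⟨⟨w, a⟩, ⟨hw, hP⟩, rfl⟩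
      exact ⟨(wordWeight_translate v w a).trans (hR.wordWeight_eq w hw), hP⟩
  rw [himage, Set.InjOn.ncard_image, Set.ncard_coe_finset, Finset.card_sigma]
  rintro ⟨u, a⟩ hu ⟨w, b⟩ hw (h : translate a u = translate b w)
  have huR := (Finset.mem_sigma.1 (Finset.mem_coe.1 hu)).1
  have hshift : translate (-b + a) u = w := by
    rw [translate_add, h, ← translate_add, neg_add_cancel, translate_zero]
  obtain rfl := hR.eq_of_translate_eq u huR w (Finset.mem_sigma.1 (Finset.mem_coe.1 hw)).1 _ hshift
  rw [← hR.wordWeight_eq u huR] at hfree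
  rw [neg_add_eq_zero.1 (eq_zero_of_translate_eq hshift hfree)]

theorem pairCount_eq_sum (hR : IsOrbitTransversal v d R) (hfree : ∀ a : G, d • a = 0 → a = 0)
    (p q : G ⊕ G) : pairCount (hankelCode v) d p q = ∑ u ∈ R, #{a |
      Sum.elim (translate a u) (translate (-a) (u ⋆ v)) p ≠ 0 ∧
      Sum.elim (translate a u) (translate (-a) (u ⋆ v)) q ≠ 0} := by
  simp only [← translate_correlation]
  rw [← hR.ncard_eq_sum hfree fun u => Sum.elim u (u ⋆ v) p ≠ 0 ∧ Sum.elim u (u ⋆ v) q ≠ 0]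
  refine (Set.ncard_congr (fun u _ => Sum.elim u (u ⋆ v)) ?_ ?_ ?_).symm
  · exact fun u hu => ⟨elim_mem_hankelCode u v,
      (hammingNorm_elim_correlation u v).trans hu.1, hu.2⟩
  · exact fun u w _ _ h => congrArg (· ∘ Sum.inl) h
  · rintro f ⟨hf, hd, hpq⟩
    have hfu : Sum.elim (f ∘ Sum.inl) ((f ∘ Sum.inl) ⋆ v) = f := by
      rw [← mem_hankelCode.1 hf, Sum.elim_comp_inl_inr]
    exact ⟨f ∘ Sum.inl, ⟨by rw [← hammingNorm_elim_correlation, hfu, hd], by rwa [hfu]⟩, hfu⟩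

end IsOrbitTransversal

/-- The number of ways to write `j` as a sum of an element of the support of `x` and an element of
the support of `y`, i.e. the coefficients of the integral convolution of `x` and `y`. -/
def sumCount (x y : G → ZMod 2) (j : G) : ℕ := #{a | x a ≠ 0 ∧ y (j - a) ≠ 0}

theorem IsOrbitTransversal.pairInvariant_eq {v : G → ZMod 2} {d : ℕ}
    {R : Finset (G → ZMod 2)} (hR : IsOrbitTransversal v d R)
    (hfree : ∀ a : G, d • a = 0 → a = 0) (F : ℕ → ℕ) :
    pairInvariant F (hankelCode v) d (Sum.inl 0) =
      ∑ j, F (∑ u ∈ R, sumCount u (reflect u) j) +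
        ∑ j, F (∑ u ∈ R, sumCount u (u ⋆ v) j) := by
  rw [pairInvariant, Fintype.sum_sum_type, ← Equiv.sum_comp (Equiv.neg G)]
  simp only [hR.pairCount_eq_sum hfree, sumCount, reflect, Sum.elim_inl, Sum.elim_inr, translate,
    zero_add, Equiv.neg_apply, neg_sub, ← sub_eq_add_neg, neg_add_eq_sub]

/-- `L` contains exactly one `u` from each translation orbit of nonzero words `(u, u ⋆ v)` of
weight at most `2 * t` with `u` of weight at most `t`, and all of these words have weight
`2 * t`. -/
structure IsLowTransversal (v : G → ZMod 2) (t : ℕ) (L : Finset (G → ZMod 2)) : Prop where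
  wordWeight_eq : ∀ u ∈ L, wordWeight v u = 2 * t
  hammingNorm_le : ∀ u ∈ L, hammingNorm u ≤ t
  exists_translate_mem :
    ∀ u ≠ 0, hammingNorm u ≤ t → wordWeight v u ≤ 2 * t → ∃ a, translate a u ∈ L
  eq_of_translate_eq : ∀ u ∈ L, ∀ w ∈ L, ∀ a, translate a u = w → u = w

/-- The contribution to `IsOrbitTransversal.pairInvariant_eq` of `u` and, if `u` has weight less
than `t`, of `u ⋆ v`, at pairs of positions in the same half of the code. -/
def autoCount (v : G → ZMod 2) (t : ℕ) (u : G → ZMod 2) : G → ℕ :=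
  sumCount u (reflect u) + if hammingNorm u < t then sumCount (u ⋆ v) (reflect (u ⋆ v)) else 0

/-- The analogue of `autoCount` at pairs of positions in different halves of the code. -/
def crossCount (v : G → ZMod 2) (t : ℕ) (u : G → ZMod 2) : G → ℕ :=
  sumCount u (u ⋆ v) + if hammingNorm u < t then sumCount (u ⋆ v) u else 0

namespace IsLowTransversal

variable {v : G → ZMod 2} {t : ℕ} {L : Finset (G → ZMod 2)}

theorem lt_hammingNorm_correlation (hL : IsLowTransversal v t L) {u : G → ZMod 2} (hu : u ∈ L)
    (hut : hammingNorm u < t) : t < hammingNorm (u ⋆ v) := by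
  have := hL.wordWeight_eq u hu
  rw [wordWeight] at this
  omega

variable [DecidableEq G]

theorem le_wordWeight (hL : IsLowTransversal v t L) (hv : IsOrthogonal v) {u : G → ZMod 2}
    (hu : u ≠ 0) : 2 * t ≤ wordWeight v u := by
  have hlow {w : G → ZMod 2} (hw : w ≠ 0) (hwt : hammingNorm w ≤ t) : 2 * t ≤ wordWeight v w := by
    by_contra! hlt
    obtain ⟨a, ha⟩ := hL.exists_translate_mem w hw hwt hlt.le
    exact hlt.ne ((wordWeight_translate v w a).symm.trans (hL.wordWeight_eq _ ha))
  by_contra! hlt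
  have huv : u ⋆ v ≠ 0 := fun h => hu <| by
    rw [← hv.correlation_correlation u, h, zero_correlation]
  obtain h | h : hammingNorm u ≤ t ∨ hammingNorm (u ⋆ v) ≤ t := by
    rw [wordWeight] at hlt
    omega
  · exact hlt.not_ge (hlow hu h)
  · exact hlt.not_ge ((hlow huv h).trans_eq (wordWeight_correlation hv u))

theorem minWeightIs (hL : IsLowTransversal v t L) (hv : IsOrthogonal v) (hne : L.Nonempty)
    (ht : 0 < t) : MinWeightIs (hankelCode v) (2 * t) := by
  refine ⟨?_, forall_mem_hankelCode.2 fun u hu => ?_⟩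
  · obtain ⟨u, hu⟩ := hne
    have hd := (hammingNorm_elim_correlation u v).trans (hL.wordWeight_eq u hu)
    refine ⟨_, elim_mem_hankelCode u v, ?_, hd⟩
    rw [← hammingNorm_ne_zero_iff, hd]
    omega
  · rw [hammingNorm_elim_correlation]
    refine hL.le_wordWeight hv fun h => hu ?_
    rw [h, zero_correlation, Sum.elim_zero_zero]

theorem isOrbitTransversal (hL : IsLowTransversal v t L) (hv : IsOrthogonal v) (ht : 0 < t) :
    IsOrbitTransversal v (2 * t) (L ∪ {u ∈ L | hammingNorm u < t}.image (· ⋆ v)) where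
  wordWeight_eq w hw := by
    simp only [Finset.mem_union, Finset.mem_image, Finset.mem_filter] at hw
    obtain hu | ⟨u, ⟨hu, -⟩, rfl⟩ := hw
    · exact hL.wordWeight_eq w hu
    · exact (wordWeight_correlation hv u).trans (hL.wordWeight_eq u hu)
  exists_translate_mem u hu := by
    have hne {w : G → ZMod 2} (hw : wordWeight v w = 2 * t) : w ≠ 0 := by
      rintro rfl
      simp [wordWeight, zero_correlation] at hw
      omega
    by_cases hut : hammingNorm u ≤ t
    · obtain ⟨a, ha⟩ := hL.exists_translate_mem u (hne hu) hut hu.le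
      exact ⟨a, Finset.mem_union_left _ ha⟩
    · have hu' := (wordWeight_correlation hv u).trans hu
      have hlt : hammingNorm (u ⋆ v) < t := by
        rw [wordWeight] at hu
        omega
      obtain ⟨a, ha⟩ := hL.exists_translate_mem _ (hne hu') hlt.le hu'.le
      refine ⟨-a, Finset.mem_union_right _ (Finset.mem_image.2 ⟨_, Finset.mem_filter.2
        ⟨ha, (hammingNorm_translate a _).trans_lt hlt⟩, ?_⟩)⟩
      rw [translate_correlation, hv.correlation_correlation]
  eq_of_translate_eq := by
    intro u hu w hw a h
    have hnorm : hammingNorm u = hammingNorm w := by rw [← h, hammingNorm_translate]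
    simp only [Finset.mem_union, Finset.mem_image, Finset.mem_filter] at hu hw
    obtain hu | ⟨u, ⟨hu, hut⟩, rfl⟩ := hu <;> obtain hw | ⟨w, ⟨hw, hwt⟩, rfl⟩ := hw
    · exact hL.eq_of_translate_eq u hu w hw a h
    · exact absurd (hL.hammingNorm_le u hu) (hnorm ▸ hL.lt_hammingNorm_correlation hw hwt).not_ge
    · exact absurd (hL.hammingNorm_le w hw) (hnorm ▸ hL.lt_hammingNorm_correlation hu hut).not_ge
    · rw [hL.eq_of_translate_eq u hu w hw (-a)]
      rw [← hv.correlation_correlation w, ← h, translate_correlation, hv.correlation_correlation]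

theorem sum_union_image (hL : IsLowTransversal v t L) (hv : IsOrthogonal v)
    (g : (G → ZMod 2) → ℕ) : ∑ u ∈ L ∪ {u ∈ L | hammingNorm u < t}.image (· ⋆ v), g u =
      ∑ u ∈ L, (g u + if hammingNorm u < t then g (u ⋆ v) else 0) := by
  have hdisj : Disjoint L ({u ∈ L | hammingNorm u < t}.image (· ⋆ v)) := by
    refine Finset.disjoint_right.2 fun w hw hwL => ?_
    obtain ⟨u, hu, rfl⟩ := Finset.mem_image.1 hw
    rw [Finset.mem_filter] at hu
    exact (hL.hammingNorm_le _ hwL).not_gt (hL.lt_hammingNorm_correlation hu.1 hu.2)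
  have hinj : Function.LeftInverse (· ⋆ v) (· ⋆ v) := hv.correlation_correlation
  rw [Finset.sum_union hdisj, Finset.sum_image hinj.injective.injOn, Finset.sum_filter,
    ← Finset.sum_add_distrib]

theorem pairInvariant_eq (hL : IsLowTransversal v t L) (hv : IsOrthogonal v) (ht : 0 < t)
    (hfree : ∀ a : G, (2 * t) • a = 0 → a = 0) (F : ℕ → ℕ) :
    pairInvariant F (hankelCode v) (2 * t) (Sum.inl 0) =
      ∑ j, F (∑ u ∈ L, autoCount v t u j) + ∑ j, F (∑ u ∈ L, crossCount v t u j) := by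
  rw [(hL.isOrbitTransversal hv ht).pairInvariant_eq hfree]
  simp only [hL.sum_union_image hv, autoCount, crossCount, hv.correlation_correlation, Pi.add_apply,
    ite_apply, Pi.zero_apply]

end IsLowTransversal

end Orbits

section CycleLemma

variable {p : ℕ → Prop} [DecidablePred p] {n : ℕ}

theorem count_add_period (hp : Function.Periodic p n) (m : ℕ) :
    Nat.count p (m + n) = Nat.count p m + Nat.count p n := by
  rw [add_comm, Nat.count_add, add_comm]
  simp only [add_comm n, hp _]

/-- The starting point is where the line of slope `count p n / n` is furthest above the graph of
`count p`. -/
theorem exists_balanced_shift (hp : Function.Periodic p n) (hpos : 0 < Nat.count p n) :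
    ∃ a < n, p a ∧ ∀ k, Nat.count p n * k ≤ n * Nat.count (fun i => p (a + i)) k := by
  have hn : 0 < n := Nat.pos_of_ne_zero fun h => by simp [h] at hpos
  let excess (m : ℕ) : ℤ := Nat.count p n * m - n * Nat.count p m
  have hperiodic : Function.Periodic excess n := fun m => by
    simp only [excess, count_add_period hp]
    push_cast
    ring
  obtain ⟨a, ha, hmax⟩ := (Finset.range n).exists_max_image excess ⟨0, Finset.mem_range.2 hn⟩
  have hle (k : ℕ) : Nat.count p n * k ≤ n * Nat.count (fun i => p (a + i)) k := by
    have h := hmax _ (Finset.mem_range.2 (Nat.mod_lt (a + k) hn))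
    rw [hperiodic.map_mod_nat] at h
    simp only [excess, Nat.count_add] at h
    push_cast at h
    zify
    linarith
  refine ⟨a, Finset.mem_range.1 ha, ?_, hle⟩
  by_contra hpa
  have h := hle 1
  simp only [Nat.count_succ, Nat.count_zero, add_zero, hpa, if_false, mul_zero] at h
  omega

theorem eq_zero_of_strictly_balanced (hp : Function.Periodic p n) {a : ℕ} (ha : a < n)
    (h₀ : p 0) (hpa : p a)
    (h : ∀ k < n, 0 < k → p k → Nat.count p n * k < n * Nat.count p k)
    (h' : ∀ k < n, 0 < k → p (a + k) →
      Nat.count p n * k < n * Nat.count (fun i => p (a + i)) k) : a = 0 := by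
  by_contra hne
  have hbefore := h a ha (Nat.pos_of_ne_zero hne) hpa
  have hafter := h' (n - a) (by omega) (by omega) <| by
    rw [Nat.add_sub_cancel' ha.le, ← zero_add n, hp]
    exact h₀
  have hsplit := Nat.count_add p a (n - a)
  rw [Nat.add_sub_cancel' ha.le] at hsplit
  have := Nat.add_lt_add hbefore hafter
  rw [← mul_add, ← mul_add, ← hsplit, Nat.add_sub_cancel' ha.le, mul_comm] at this
  exact this.false

end CycleLemma

section SupportPattern

variable {n : ℕ} [NeZero n]

/-- The support of a sequence on `ℤ/n`, as a periodic predicate on the natural numbers. -/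
def supportPattern (u : Fin n → ZMod 2) (k : ℕ) : Prop := u (Fin.ofNat n k) ≠ 0

instance (u : Fin n → ZMod 2) : DecidablePred (supportPattern u) := fun _ =>
  inferInstanceAs (Decidable (_ ≠ _))

theorem periodic_supportPattern (u : Fin n → ZMod 2) :
    Function.Periodic (supportPattern u) n := fun k => by
  rw [supportPattern, supportPattern, show Fin.ofNat n (k + n) = Fin.ofNat n k from
    Fin.ext (Nat.add_mod_right k n)]

theorem supportPattern_val (u : Fin n → ZMod 2) (i : Fin n) :
    supportPattern u i ↔ u i ≠ 0 := by
  rw [supportPattern, Fin.ofNat_val_eq_self]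

theorem supportPattern_translate (a : Fin n) (u : Fin n → ZMod 2) :
    supportPattern (translate a u) = fun i => supportPattern u (a + i) := by
  ext i
  rw [supportPattern, supportPattern, translate, show Fin.ofNat n i + a = Fin.ofNat n (a + i) by
    ext; simp [Fin.val_add, add_comm]]

theorem count_supportPattern (u : Fin n → ZMod 2) :
    Nat.count (supportPattern u) n = hammingNorm u := by
  rw [Nat.count_eq_card_filter_range, hammingNorm, Finset.card_filter, Finset.card_filter,
    Finset.sum_range]
  simp only [supportPattern_val]

end SupportPattern

section BitSlicing

variable {α β : Type*}

/-- The bit-sliced representation of a Boolean function `f` on a list `L`: bit `p` of `x` is the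
value of `f` at the entry of `L` at position `p`, and the remaining bits vanish. -/
def Encodes (x : ℕ) (L : List α) (f : α → Bool) : Prop := ∀ p, x.testBit p = L[p]?.any f

/-- The number whose lowest `c` bits are set. -/
def ones (c : ℕ) : ℕ := 2 ^ c - 1

namespace Encodes

variable {x y : ℕ} {L M : List α} {f g : α → Bool}

theorem congr (hx : Encodes x L f) (h : ∀ a ∈ L, f a = g a) : Encodes x L g := fun p => by
  rw [hx p]
  cases hp : L[p]? with
  | none => rfl
  | some a => exact h a (List.mem_of_getElem? hp)

theorem map {g : β → α} {L : List β} (hx : Encodes x L (f ∘ g)) : Encodes x (L.map g) f :=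
  fun p => by rw [hx p, List.getElem?_map, Option.any_map]; rfl

theorem of_map {g : β → α} {L : List β} (hx : Encodes x (L.map g) f) : Encodes x L (f ∘ g) :=
  fun p => by rw [hx p, List.getElem?_map, Option.any_map]; rfl

theorem append (hx : Encodes x L f) (hy : Encodes y M f) :
    Encodes (x ||| y <<< L.length) (L ++ M) f := fun p => by
  rw [Nat.testBit_or, Nat.testBit_shiftLeft, hx p, hy, List.getElem?_append]
  split_ifs with h
  · simp [h]
  · simp [not_lt.1 h]

theorem low (h : Encodes x (L ++ M) f) : Encodes (x % 2 ^ L.length) L f := fun p => by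
  rw [Nat.testBit_mod_two_pow, h p, List.getElem?_append]
  split_ifs with hp
  · simp [hp]
  · simp [hp]

theorem high (h : Encodes x (L ++ M) f) : Encodes (x >>> L.length) M f := fun p => by
  rw [Nat.testBit_shiftRight, h, List.getElem?_append_right (Nat.le_add_right _ _),
    Nat.add_sub_cancel_left]

theorem xor (hx : Encodes x L f) (hy : Encodes y L g) :
    Encodes (x ^^^ y) L fun a => f a ^^ g a := fun p => by
  rw [Nat.testBit_xor, hx p, hy p]
  cases L[p]? <;> rfl

theorem filter_eq_nil (h : Encodes 0 L f) : L.filter f = [] := by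
  refine List.filter_eq_nil_iff.2 fun a ha => ?_
  obtain ⟨p, hp⟩ := List.getElem?_of_mem ha
  have := h p
  rw [Nat.zero_testBit, hp] at this
  simpa using this.symm

end Encodes

theorem encodes_zero (L : List α) : Encodes 0 L fun _ => false := fun p => by
  rw [Nat.zero_testBit]
  cases L[p]? <;> rfl

theorem encodes_ones (L : List α) : Encodes (ones L.length) L fun _ => true := fun p => by
  rw [ones, Nat.testBit_two_pow_sub_one]
  by_cases h : p < L.length <;> simp [h]

/-- The carries out of a bit-sliced counter: bit `p` of `s` and of the entries of the list are
added up, and the number of carries is half their sum. -/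
def carries : ℕ → List ℕ → List ℕ
  | s, a :: b :: l => ((s &&& a) ^^^ ((s ^^^ a) &&& b)) :: carries (s ^^^ a ^^^ b) l
  | s, [a] => [s &&& a]
  | _, [] => []

theorem countP_carries (p s : ℕ) (l : List ℕ) : (carries s l).countP (·.testBit p) =
    (l.countP (·.testBit p) + (s.testBit p).toNat) / 2 := by
  fun_induction carries s l with
  | case1 s a b l ih =>
    simp only [List.countP_cons, ih, Nat.testBit_xor, Nat.testBit_and]
    cases s.testBit p <;> cases a.testBit p <;> cases b.testBit p <;> simp <;> omega
  | case2 s a =>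
    simp only [List.countP_cons, List.countP_nil, Nat.testBit_and]
    cases s.testBit p <;> cases a.testBit p <;> rfl
  | case3 s => cases s.testBit p <;> simp

theorem testBit_foldr_lor (p : ℕ) (l : List ℕ) :
    (l.foldr (· ||| ·) 0).testBit p = decide (0 < l.countP (·.testBit p)) := by
  induction l with
  | nil => simp
  | cons a l ih =>
    rw [List.foldr_cons, Nat.testBit_or, ih, List.countP_cons]
    cases a.testBit p <;> simp

end BitSlicing

section Lanes

/-- Whether a position `x` preceded by `j` support elements is admissible in a balanced word of
length 45 and weight `K`. -/
def balanced (K x j : ℕ) : Bool := K * x ≤ 45 * j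

/-- The supports of balanced words, as decreasing lists: `lanes K n j` lists the supports contained
in `{0, …, n}` and containing `0` and `j` further elements. -/
def lanes (K : ℕ) : ℕ → ℕ → List (List ℕ)
  | 0, 0 => [[0]]
  | 0, _ + 1 => []
  | n + 1, 0 => lanes K n 0
  | n + 1, j + 1 =>
    bif balanced K (n + 1) (j + 1) then lanes K n (j + 1) ++ (lanes K n j).map ((n + 1) :: ·)
    else lanes K n (j + 1)

/-- `S` is the decreasing list of the elements of a set of size `k` with `{0} ⊆ S ⊆ {0, …, n}`. -/
structure IsSupportList (n k : ℕ) (S : List ℕ) : Prop where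
  length_eq : S.length = k
  zero_mem : 0 ∈ S
  le : ∀ x ∈ S, x ≤ n
  pairwise : S.Pairwise (· > ·)

theorem IsSupportList.succ {n k : ℕ} {S : List ℕ} (hS : IsSupportList n k S) :
    IsSupportList (n + 1) k S :=
  { hS with le := fun x hx => (hS.le x hx).trans n.le_succ }

theorem IsSupportList.cons {n k : ℕ} {S : List ℕ} (hS : IsSupportList n k S) :
    IsSupportList (n + 1) (k + 1) ((n + 1) :: S) where
  length_eq := congrArg (· + 1) hS.length_eq
  zero_mem := List.mem_cons_of_mem _ hS.zero_mem
  le := List.forall_mem_cons.2 ⟨le_rfl, hS.succ.le⟩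
  pairwise := List.pairwise_cons.2 ⟨fun x hx => Nat.lt_succ_of_le (hS.le x hx), hS.pairwise⟩

theorem isSupportList_of_mem_lanes {K n j : ℕ} {S : List ℕ} (hS : S ∈ lanes K n j) :
    IsSupportList n (j + 1) S := by
  fun_induction lanes K n j generalizing S with
  | case1 =>
    obtain rfl := List.mem_singleton.1 hS
    exact ⟨rfl, by simp, by simp, by simp⟩
  | case2 => simp at hS
  | case3 n ih => exact (ih hS).succ
  | case4 n j _ ih₁ ih₂ =>
    simp only [List.mem_append, List.mem_map] at hS
    obtain hS | ⟨T, hT, rfl⟩ := hS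
    · exact (ih₁ hS).succ
    · exact (ih₂ hT).cons
  | case5 n j _ ih => exact (ih hS).succ

theorem IsSupportList.eq_of_mem_iff {n k l : ℕ} {S T : List ℕ} (hS : IsSupportList n k S)
    (hT : IsSupportList n l T) (h : ∀ x, x ∈ S ↔ x ∈ T) : S = T :=
  ((List.perm_ext_iff_of_nodup (hS.pairwise.imp ne_of_gt) (hT.pairwise.imp ne_of_gt)).2
    h).eq_of_pairwise' hS.pairwise hT.pairwise

theorem nodup_lanes (K n j : ℕ) : (lanes K n j).Nodup := by
  fun_induction lanes K n j with
  | case1 => exact List.nodup_singleton _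
  | case2 => exact List.nodup_nil
  | case3 _ ih => exact ih
  | case4 n j _ ih₁ ih₂ =>
    refine ih₁.append (ih₂.map (List.cons_injective)) fun S hS hS' => ?_
    obtain ⟨T, -, rfl⟩ := List.mem_map.1 hS'
    exact ((isSupportList_of_mem_lanes hS).le _ List.mem_cons_self).not_gt n.lt_succ_self
  | case5 _ _ _ ih => exact ih

theorem filter_range_reverse_mem_lanes {p : ℕ → Prop} [DecidablePred p] (K n : ℕ) (h₀ : p 0)
    (h : ∀ x ≤ n, p x → K * x ≤ 45 * Nat.count p x) :
    ((List.range (n + 1)).filter p).reverse ∈ lanes K n (Nat.count p (n + 1) - 1) := by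
  induction n with
  | zero => simp [h₀, lanes, Nat.count_succ]
  | succ n ih =>
    specialize ih fun x hx => h x (hx.trans n.le_succ)
    have hpos : 0 < Nat.count p (n + 1) := by
      rw [Nat.count_succ']
      simp [h₀]
    obtain ⟨j, hj⟩ := Nat.exists_eq_add_one.2 hpos
    rw [hj, Nat.add_sub_cancel] at ih
    rw [List.range_succ, List.filter_append, List.reverse_append, Nat.count_succ, hj]
    by_cases hp : p (n + 1)
    · have hb : balanced K (n + 1) (j + 1) = true := by
        simpa [balanced, hj] using h (n + 1) le_rfl hp
      simp [hp, lanes, hb, ih]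
    · cases j with
      | zero => simpa [hp, lanes] using ih
      | succ j => cases hb : balanced K (n + 1) (j + 1) <;> simp [hp, lanes, hb, ih]

end Lanes

section LaneEnumeration

/-- The supports of balanced words of length 45 and weight at most `k ≤ 7`; in such a word every
position is at most `45 * 6 / 7`. -/
def allLanes : ℕ → List (List ℕ)
  | 0 => []
  | k + 1 => allLanes k ++ lanes (k + 1) 38 k

theorem mem_allLanes {k : ℕ} {S : List ℕ} :
    S ∈ allLanes k ↔ ∃ j < k, S ∈ lanes (j + 1) 38 j := by
  induction k with
  | zero => simp [allLanes]
  | succ k ih =>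
    rw [allLanes, List.mem_append, ih, Nat.exists_lt_succ_right]

theorem nodup_allLanes (k : ℕ) : (allLanes k).Nodup := by
  induction k with
  | zero => exact List.nodup_nil
  | succ k ih =>
    refine ih.append (nodup_lanes _ _ _) fun S hS hS' => ?_
    obtain ⟨j, hj, hmem⟩ := mem_allLanes.1 hS
    have := (isSupportList_of_mem_lanes hmem).length_eq
    rw [(isSupportList_of_mem_lanes hS').length_eq] at this
    omega

/-- The length of `lanes K n j`. -/
def laneCount (K : ℕ) : ℕ → ℕ → ℕ
  | 0, 0 => 1
  | 0, _ + 1 => 0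
  | n + 1, 0 => laneCount K n 0
  | n + 1, j + 1 =>
    bif balanced K (n + 1) (j + 1) then laneCount K n (j + 1) + laneCount K n j
    else laneCount K n (j + 1)

theorem length_lanes (K n j : ℕ) : (lanes K n j).length = laneCount K n j := by
  fun_induction lanes K n j <;> simp_all [laneCount]

/-- The length of the block `lanes (k + 1) 38 k` of `allLanes`. -/
def width (k : ℕ) : ℕ := laneCount (k + 1) 38 k

/-- The length of `allLanes k`. -/
def offset : ℕ → ℕ
  | 0 => 0
  | k + 1 => offset k + width k

theorem length_allLanes (k : ℕ) : (allLanes k).length = offset k := by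
  induction k with
  | zero => rfl
  | succ k ih => rw [allLanes, List.length_append, ih, length_lanes, offset, width]

/-- The bit mask of a Boolean function on `allLanes k`, assembled from its masks on the blocks. -/
def concat (f : ℕ → ℕ) : ℕ → ℕ
  | 0 => 0
  | k + 1 => concat f k ||| f k <<< offset k

theorem encodes_concat {m : ℕ → ℕ} {f : List ℕ → Bool}
    (h : ∀ k, Encodes (m k) (lanes (k + 1) 38 k) f) (k : ℕ) :
    Encodes (concat m k) (allLanes k) f := by
  induction k with
  | zero => exact (encodes_zero []).congr (by simp)
  | succ k ih =>
    rw [concat, ← length_allLanes]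
    exact ih.append (h k)

/-- The bit mask of the entries of `lanes K n j` that contain `i`. -/
def column (K i : ℕ) : ℕ → ℕ → ℕ
  | 0, 0 => bif i.beq 0 then 1 else 0
  | 0, _ + 1 => 0
  | n + 1, 0 => column K i n 0
  | n + 1, j + 1 =>
    bif balanced K (n + 1) (j + 1) then
      column K i n (j + 1) |||
        (bif i.beq (n + 1) then ones (laneCount K n j) else column K i n j) <<<
          laneCount K n (j + 1)
    else column K i n (j + 1)

theorem encodes_column (K i n j : ℕ) :
    Encodes (column K i n j) (lanes K n j) fun S => decide (i ∈ S) := by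
  fun_induction lanes K n j with
  | case1 =>
    rw [column]
    cases hi : i.beq 0
    · exact (encodes_zero _).congr (by simp [Nat.ne_of_beq_eq_false hi])
    · exact (encodes_ones [[0]]).congr (by simp [Nat.eq_of_beq_eq_true hi])
  | case2 => exact (encodes_zero []).congr (by simp)
  | case3 _ ih => exact ih
  | case4 n j h ih₁ ih₂ =>
    rw [column, h, cond_true, ← length_lanes K n (j + 1)]
    refine ih₁.append (.map ?_)
    cases hi : i.beq (n + 1)
    · refine ih₂.congr fun S _ => ?_
      simp [Nat.ne_of_beq_eq_false hi]
    · rw [cond_true, ← length_lanes]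
      refine (encodes_ones _).congr fun S _ => ?_
      simp [Nat.eq_of_beq_eq_true hi]
  | case5 n j h ih => rwa [column, h, cond_false]

/-- The bit mask of the supports containing `i`. -/
def mem (i : ℕ) : ℕ := concat (fun k => column (k + 1) i 38 k) 7

theorem encodes_mem (i : ℕ) : Encodes (mem i) (allLanes 7) fun S => decide (i ∈ S) :=
  encodes_concat (fun k => encodes_column (k + 1) i 38 k) 7

/-- The bit mask of the supports whose size has a binary digit 1 at place `b`. -/
def size (b : ℕ) : ℕ := concat (fun k => bif (k + 1).testBit b then ones (width k) else 0) 7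

theorem encodes_size (b : ℕ) :
    Encodes (size b) (allLanes 7) fun S => S.length.testBit b := by
  refine encodes_concat (fun k => ?_) 7
  rw [width, ← length_lanes]
  cases h : (k + 1).testBit b
  · exact (encodes_zero _).congr fun S hS => by rw [(isSupportList_of_mem_lanes hS).length_eq, h]
  · exact (encodes_ones _).congr fun S hS => by rw [(isSupportList_of_mem_lanes hS).length_eq, h]

/-- Recovers the entries of `lanes K n j` selected by the bit mask `h`. -/
def decode (K : ℕ) : ℕ → ℕ → ℕ → List (List ℕ)
  | 0, 0, h => bif h.testBit 0 then [[0]] else []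
  | 0, _ + 1, _ => []
  | n + 1, 0, h => decode K n 0 h
  | n + 1, j + 1, h =>
    bif h.beq 0 then []
    else bif balanced K (n + 1) (j + 1) then
      decode K n (j + 1) (h % 2 ^ laneCount K n (j + 1)) ++
        (decode K n j (h >>> laneCount K n (j + 1))).map ((n + 1) :: ·)
    else decode K n (j + 1) h

theorem decode_eq_filter {K n j h : ℕ} {f : List ℕ → Bool} (hf : Encodes h (lanes K n j) f) :
    decode K n j h = (lanes K n j).filter f := by
  fun_induction lanes K n j generalizing h f with
  | case1 =>
    rw [decode, hf 0]
    cases hS : f [0] <;> simp [hS]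
  | case2 => rfl
  | case3 n ih => exact ih hf
  | case4 n j hb ih₁ ih₂ =>
    rw [decode]
    cases h₀ : h.beq 0
    · rw [cond_false, hb, cond_true, ← length_lanes K n (j + 1), List.filter_append,
        List.filter_map, ih₁ hf.low, ih₂ hf.high.of_map]
    · rw [Nat.eq_of_beq_eq_true h₀] at hf
      exact hf.filter_eq_nil.symm
  | case5 n j hb ih =>
    rw [decode]
    cases h₀ : h.beq 0
    · rw [cond_false, hb, cond_false, ih hf]
    · rw [Nat.eq_of_beq_eq_true h₀] at hf
      exact hf.filter_eq_nil.symm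

/-- Recovers the entries of `allLanes k` selected by the bit mask `h`. -/
def decodeAll (h : ℕ) : ℕ → List (List ℕ)
  | 0 => []
  | k + 1 => decodeAll (h % 2 ^ offset k) k ++ decode (k + 1) 38 k (h >>> offset k)

theorem decodeAll_eq_filter {h k : ℕ} {f : List ℕ → Bool} (hf : Encodes h (allLanes k) f) :
    decodeAll h k = (allLanes k).filter f := by
  induction k generalizing h with
  | zero => rfl
  | succ k ih =>
    rw [allLanes] at hf
    rw [decodeAll, allLanes, List.filter_append, ← length_allLanes, ih hf.low,
      decode_eq_filter hf.high]

end LaneEnumeration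

section Masks

variable {n : ℕ}

/-- The sequence on `ℤ/n` whose entries are the binary digits of `r`. -/
def vec (r : ℕ) (i : Fin n) : ZMod 2 := if r.testBit i then 1 else 0

/-- The indicator sequence of a list of positions. -/
def indicator (S : List ℕ) (i : Fin n) : ZMod 2 := if (i : ℕ) ∈ S then 1 else 0

theorem vec_ne_zero_iff {r : ℕ} {i : Fin n} : vec r i ≠ 0 ↔ r.testBit i := by
  simp [vec]

theorem indicator_ne_zero_iff {S : List ℕ} {i : Fin n} : indicator S i ≠ 0 ↔ (i : ℕ) ∈ S := by
  simp [indicator]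

theorem hammingNorm_indicator {S : List ℕ} (hS : S.Nodup) (hlt : ∀ x ∈ S, x < n) :
    hammingNorm (indicator S : Fin n → ZMod 2) = S.length := by
  rw [← List.toFinset_card_of_nodup hS, hammingNorm, ← Finset.card_map Fin.valEmbedding]
  congr 1
  ext x
  simp only [indicator_ne_zero_iff, Finset.mem_map, Finset.mem_filter_univ, List.mem_toFinset,
    Fin.valEmbedding_apply]
  exact ⟨by rintro ⟨i, hi, rfl⟩; exact hi, fun hx => ⟨⟨x, hlt x hx⟩, hx, rfl⟩⟩

/-- The digits of `r`, written twice. -/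
def periodize (n r : ℕ) : ℕ := r % 2 ^ n ||| r <<< n

theorem testBit_periodize [NeZero n] (r : ℕ) (i j : Fin n) :
    (periodize n r).testBit (i + j) = r.testBit (i + j : Fin n) := by
  rw [periodize, Nat.testBit_or, Nat.testBit_mod_two_pow, Nat.testBit_shiftLeft, Fin.val_add]
  obtain h | h := lt_or_ge (i + j : ℕ) n
  · simp [h, Nat.mod_eq_of_lt h, h.not_ge]
  · rw [Nat.mod_eq_sub_mod h, Nat.mod_eq_of_lt (by omega)]
    simp [h, h.not_gt]

theorem indicator_correlation_vec_apply [NeZero n] {m : ℕ} (hm : m ≤ n) {S : List ℕ}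
    (hS : ∀ x ∈ S, x < m) (r : ℕ) (j : Fin n) : (indicator S ⋆ vec r) j =
      ∑ i ∈ Finset.range m, if (periodize n r >>> (j : ℕ)).testBit i ∧ i ∈ S then 1 else 0 := by
  have hrange : (indicator S ⋆ vec r) j =
      ∑ i ∈ Finset.range n, if (periodize n r >>> (j : ℕ)).testBit i ∧ i ∈ S then 1 else 0 := by
    rw [correlation, Finset.sum_range]
    refine Finset.sum_congr rfl fun i _ => ?_
    rw [Nat.testBit_shiftRight, add_comm (j : ℕ), testBit_periodize, indicator, vec,
      ite_zero_mul_ite_zero, mul_one]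
    simp only [and_comm]
  rw [hrange]
  refine (Finset.sum_subset (Finset.range_mono hm) fun i _ hi => if_neg fun h => ?_).symm
  exact hi (Finset.mem_range.2 (hS i h.2))

end Masks

section Hits

/-- Equal to `f w`, but the match makes the evaluator reduce `w` to a literal first. -/
def force {α : Type} (w : ℕ) (f : ℕ → α) : α :=
  match w with
  | 0 => f 0
  | n + 1 => f (n + 1)

theorem force_eq {α : Type} (w : ℕ) (f : ℕ → α) : force w f = f w := by
  cases w <;> rfl

/-- The exclusive or of the masks `mem (i + k)` over the digits 1 of `w` at places `k < m`. -/
def xorMem : ℕ → ℕ → ℕ → ℕ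
  | 0, _, _ => 0
  | m + 1, i, w =>
    let rest := force (w / 2) fun w' => force (i + 1) fun i' => xorMem m i' w'
    bif w.testBit 0 then mem i ^^^ rest else rest

theorem xorMem_succ (m i w : ℕ) : xorMem (m + 1) i w =
    (bif w.testBit 0 then mem i else 0) ^^^ xorMem m (i + 1) (w >>> 1) := by
  rw [xorMem, force_eq, force_eq, Nat.shiftRight_one]
  cases w.testBit 0 <;> simp

theorem xorMem_mod (m i w : ℕ) : xorMem m i (w % 2 ^ m) = xorMem m i w := by
  induction m generalizing i w with
  | zero => rfl
  | succ m ih =>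
    rw [xorMem_succ, xorMem_succ, ← ih _ (w >>> 1), Nat.testBit_mod_two_pow,
      Nat.shiftRight_one, Nat.shiftRight_one, pow_succ', Nat.mod_mul_right_div_self]
    simp

theorem xorMem_add (l m i w : ℕ) :
    xorMem (l + m) i w = xorMem l i w ^^^ xorMem m (i + l) (w >>> l) := by
  induction l generalizing i w with
  | zero => simp [xorMem]
  | succ l ih =>
    rw [Nat.succ_add, xorMem_succ, xorMem_succ, ih, Nat.xor_assoc, ← Nat.shiftRight_add,
      add_assoc i, add_comm 1 l]

theorem encodes_xorMem (m i w : ℕ) : Encodes (xorMem m i w) (allLanes 7) fun S =>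
    (∑ k ∈ Finset.range m, if w.testBit k ∧ i + k ∈ S then 1 else 0 : ZMod 2) ≠ 0 := by
  induction m generalizing i w with
  | zero => exact (encodes_zero _).congr (by simp)
  | succ m ih =>
    have hfirst : Encodes (bif w.testBit 0 then mem i else 0) (allLanes 7) fun S =>
        (if w.testBit 0 ∧ i ∈ S then 1 else 0 : ZMod 2) ≠ 0 := by
      cases h : w.testBit 0
      · exact (encodes_zero _).congr (by simp)
      · exact (encodes_mem i).congr (by simp)
    have hxor : ∀ a b : ZMod 2, (decide (a ≠ 0) ^^ decide (b ≠ 0)) = decide (b + a ≠ 0) := by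
      decide
    rw [xorMem_succ]
    refine (hfirst.xor (ih (i + 1) (w >>> 1))).congr fun S _ => ?_
    rw [hxor, Finset.sum_range_succ']
    simp only [Nat.testBit_shiftRight, add_assoc, add_comm 1, add_zero]

/-- The mask of the supports meeting the set of digits 1 of `w` in an odd number of positions.
Processing `w` in bytes lets the evaluator share the partial results between different `w`. -/
def slice (w : ℕ) : ℕ :=
  force (w % 256) (xorMem 8 0) ^^^ force ((w >>> 8) % 256) (xorMem 8 8) ^^^
    force ((w >>> 16) % 256) (xorMem 8 16) ^^^ force ((w >>> 24) % 256) (xorMem 8 24) ^^^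
      force ((w >>> 32) % 128) (xorMem 7 32)

theorem slice_eq_xorMem (w : ℕ) : slice w = xorMem 39 0 w := by
  simp only [slice, force_eq]
  rw [show 256 = 2 ^ 8 from rfl, show 128 = 2 ^ 7 from rfl]
  simp only [xorMem_mod]
  rw [xorMem_add 32 7, xorMem_add 24 8, xorMem_add 16 8, xorMem_add 8 8]

theorem countP_map_range {n p : ℕ} {f : ℕ → ℕ} {q : Fin n → Prop} [DecidablePred q]
    (h : ∀ j : Fin n, (f j).testBit p = decide (q j)) :
    ((List.range n).map f).countP (·.testBit p) = #{j | q j} := by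
  rw [← List.map_coe_finRange_eq_range, List.map_map, List.countP_map]
  simp only [Function.comp_def, h]
  exact List.countP_eq_length_filter

theorem lt_of_mem_allLanes {S : List ℕ} (hS : S ∈ allLanes 7) : ∀ x ∈ S, x < 39 := by
  obtain ⟨k, -, hk⟩ := mem_allLanes.1 hS
  exact fun x hx => Nat.lt_succ_of_le ((isSupportList_of_mem_lanes hk).le x hx)

theorem encodes_slice (r : ℕ) (j : Fin 45) :
    Encodes (slice (periodize 45 r >>> (j : ℕ))) (allLanes 7) fun S =>
      (indicator S ⋆ vec r) j ≠ 0 := by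
  rw [slice_eq_xorMem]
  refine (encodes_xorMem _ _ _).congr fun S hS => ?_
  simp only [zero_add]
  rw [← indicator_correlation_vec_apply (by norm_num) (lt_of_mem_allLanes hS)]

theorem countP_slices (r : ℕ) {S : List ℕ} {p : ℕ} (hp : (allLanes 7)[p]? = some S) :
    ((List.range 45).map fun j => force (periodize 45 r >>> j) slice).countP (·.testBit p) =
      hammingNorm (indicator S ⋆ vec r : Fin 45 → ZMod 2) := by
  refine countP_map_range fun j => ?_
  rw [force_eq, encodes_slice, hp, Option.any_some]

/-- The mask of the supports `S` of size at most 7 for which the word of `hankelCode (vec r)`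
starting with `indicator S` has weight less than 16. The weight is accumulated modulo 16; it is at
least 16 if and only if there is a carry out of the fourth binary digit. -/
def hits (r : ℕ) : ℕ :=
  ones (offset 7) ^^^
    (carries 0 (carries 0 (size 2 :: carries 0 (size 1 :: carries 0 (size 0 ::
      (List.range 45).map fun j => force (periodize 45 r >>> j) slice))))).foldr (· ||| ·) 0

theorem wordWeight_vec_indicator {S : List ℕ} (hS : S ∈ allLanes 7) (r : ℕ) :
    wordWeight (vec r) (indicator S : Fin 45 → ZMod 2) =
      S.length + hammingNorm (indicator S ⋆ vec r : Fin 45 → ZMod 2) := by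
  obtain ⟨k, -, hk⟩ := mem_allLanes.1 hS
  rw [wordWeight, hammingNorm_indicator ((isSupportList_of_mem_lanes hk).pairwise.imp ne_of_gt)]
  exact fun x hx => (lt_of_mem_allLanes hS x hx).trans (by norm_num)

theorem length_le_of_mem_allLanes {k : ℕ} {S : List ℕ} (hS : S ∈ allLanes k) : S.length ≤ k := by
  obtain ⟨j, hj, hmem⟩ := mem_allLanes.1 hS
  exact (isSupportList_of_mem_lanes hmem).length_eq.trans_le hj

theorem encodes_hits (r : ℕ) : Encodes (hits r) (allLanes 7) fun S =>
    wordWeight (vec r) (indicator S : Fin 45 → ZMod 2) < 16 := fun p => by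
  rw [hits, Nat.testBit_xor, ← length_allLanes, encodes_ones, testBit_foldr_lor]
  simp only [countP_carries, List.countP_cons, encodes_size _ p, Nat.zero_testBit]
  cases hp : (allLanes 7)[p]? with
  | none =>
    have hslices : ((List.range 45).map fun j => force (periodize 45 r >>> j) slice).countP
        (·.testBit p) = 0 := by
      rw [countP_map_range (n := 45) (q := fun _ => False) fun j => by
        rw [force_eq, encodes_slice, hp]; rfl]
      simp
    simp [hslices]
  | some S =>
    have hS := List.mem_of_getElem? hp
    have hdigits : ∀ k ≤ 7, k = (if k.testBit 0 then 1 else 0) +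
        2 * (if k.testBit 1 then 1 else 0) + 4 * if k.testBit 2 then 1 else 0 := by decide
    have hlen := hdigits _ (length_le_of_mem_allLanes hS)
    rw [countP_slices r hp]
    simp only [Option.any_some, wordWeight_vec_indicator hS, Bool.true_xor, Bool.toNat_false]
    rw [← decide_not, decide_eq_decide]
    omega

/-- The supports `S` of size at most 7 for which the word of `hankelCode (vec r)` starting with
`indicator S` has weight less than 16. -/
def lightLanes (r : ℕ) : List (List ℕ) := decodeAll (hits r) 7

theorem lightLanes_eq_filter (r : ℕ) : lightLanes r = (allLanes 7).filter fun S =>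
    wordWeight (vec r) (indicator S : Fin 45 → ZMod 2) < 16 :=
  decodeAll_eq_filter (encodes_hits r)

end Hits

section StrictlyBalanced

/-- Tests the strict balance condition for the word of length `n` and weight `K` with support a
decreasing list. -/
def strictlyBalanced (n K : ℕ) : List ℕ → Bool
  | [] => true
  | x :: S => (x.beq 0 || (K * x).blt (n * S.length)) && strictlyBalanced n K S

theorem count_mem_eq_length {x : ℕ} {S : List ℕ} (hS : S.Nodup) (hlt : ∀ y ∈ S, y < x) :
    Nat.count (· ∈ S) x = S.length := by
  rw [Nat.count_eq_card_filter_range, ← List.toFinset_card_of_nodup hS]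
  congr 1
  ext y
  simpa using hlt y

theorem lt_count_of_strictlyBalanced {n K : ℕ} {S : List ℕ} (hS : S.Pairwise (· > ·))
    (h : strictlyBalanced n K S = true) {x : ℕ} (hx : x ∈ S) (hpos : 0 < x) :
    K * x < n * Nat.count (· ∈ S) x := by
  induction S with
  | nil => simp at hx
  | cons y S ih =>
    rw [List.pairwise_cons] at hS
    rw [strictlyBalanced, Bool.and_eq_true] at h
    have hxy : x ≤ y := (List.mem_cons.1 hx).elim le_of_eq fun h => (hS.1 x h).le
    have hcount : Nat.count (· ∈ y :: S) x = Nat.count (· ∈ S) x := by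
      rw [Nat.count_eq_card_filter_range, Nat.count_eq_card_filter_range]
      congr 1
      refine Finset.filter_congr fun i hi => List.mem_cons.trans (or_iff_right ?_)
      exact ((Finset.mem_range.1 hi).trans_le hxy).ne
    rw [hcount]
    obtain rfl | hx := List.mem_cons.1 hx
    · rw [count_mem_eq_length (hS.2.imp ne_of_gt) hS.1]
      simpa [hpos.ne'] using h.1
    · exact ih hS.2 h.2 hx

variable {n : ℕ} [NeZero n] {u w : Fin n → ZMod 2}

/-- The strict form of the condition of the cycle lemma. A word has at most one strictly balanced
translate. -/
structure IsStrictlyBalanced (u : Fin n → ZMod 2) : Prop where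
  zero_ne : u 0 ≠ 0
  lt_count : ∀ k < n, 0 < k → supportPattern u k →
    hammingNorm u * k < n * Nat.count (supportPattern u) k

theorem IsStrictlyBalanced.eq_of_translate_eq (hu : IsStrictlyBalanced u)
    (hw : IsStrictlyBalanced w) {a : Fin n} (h : translate a u = w) : u = w := by
  subst h
  have hlt := hw.lt_count
  simp only [supportPattern_translate, hammingNorm_translate, ← count_supportPattern u] at hlt
  have ha : a = 0 := Fin.val_eq_zero_iff.1 <|
    eq_zero_of_strictly_balanced (periodic_supportPattern u) a.isLt
      ((supportPattern_val u 0).2 hu.zero_ne)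
      ((supportPattern_val u a).2 (by simpa [translate] using hw.zero_ne))
      (by simpa only [count_supportPattern] using hu.lt_count) hlt
  rw [ha, translate_zero]

theorem supportPattern_indicator {S : List ℕ} {k : ℕ} (hk : k < n) :
    supportPattern (indicator S : Fin n → ZMod 2) k ↔ k ∈ S := by
  rw [show k = (⟨k, hk⟩ : Fin n) from rfl, supportPattern_val, indicator_ne_zero_iff]

theorem count_supportPattern_indicator {S : List ℕ} {k : ℕ} (hk : k ≤ n) :
    Nat.count (supportPattern (indicator S : Fin n → ZMod 2)) k = Nat.count (· ∈ S) k := by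
  rw [Nat.count_eq_card_filter_range, Nat.count_eq_card_filter_range]
  congr 1
  refine Finset.filter_congr fun i hi => supportPattern_indicator ?_
  exact (Finset.mem_range.1 hi).trans_le hk

theorem isStrictlyBalanced_indicator {m k : ℕ} {S : List ℕ} (hS : IsSupportList m k S)
    (hm : m < n) (h : strictlyBalanced n S.length S = true) :
    IsStrictlyBalanced (indicator S : Fin n → ZMod 2) where
  zero_ne := indicator_ne_zero_iff.2 hS.zero_mem
  lt_count x hx hpos hmem := by
    rw [supportPattern_indicator hx] at hmem
    rw [count_supportPattern_indicator hx.le,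
      hammingNorm_indicator (hS.pairwise.imp ne_of_gt) fun x hx => (hS.le x hx).trans_lt hm]
    exact lt_count_of_strictlyBalanced hS.pairwise h hmem hpos

end StrictlyBalanced

section LowTransversal

theorem eq_of_ne_zero_iff {ι : Type*} {u w : ι → ZMod 2} (h : ∀ i, u i ≠ 0 ↔ w i ≠ 0) : u = w := by
  have heq : ∀ a b : ZMod 2, (a ≠ 0 ↔ b ≠ 0) → a = b := by decide
  exact funext fun i => heq _ _ (h i)

theorem exists_eq_indicator_of_balanced {w : Fin 45 → ZMod 2} (h₀ : w 0 ≠ 0)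
    (hle : hammingNorm w ≤ 7)
    (hbal : ∀ k, hammingNorm w * k ≤ 45 * Nat.count (supportPattern w) k) :
    ∃ S ∈ allLanes 7, w = indicator S := by
  have hw := count_supportPattern w
  have hlast : ∀ x < 45, supportPattern w x → x < 39 := fun x hx hxw => by
    have hmono := Nat.count_monotone (supportPattern w) hx
    rw [hw, Nat.count_succ, if_pos hxw] at hmono
    have := hbal x
    interval_cases hammingNorm w <;> omega
  have hcount : Nat.count (supportPattern w) 39 = hammingNorm w := by
    rw [← hw, Nat.count_eq_card_filter_range, Nat.count_eq_card_filter_range]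
    congr 1
    ext x
    simp only [Finset.mem_filter, Finset.mem_range]
    exact ⟨fun h => ⟨by omega, h.2⟩, fun h => ⟨hlast x h.1 h.2, h.2⟩⟩
  have hmem := filter_range_reverse_mem_lanes (hammingNorm w) 38
    ((supportPattern_val w 0).2 h₀) fun x _ _ => hbal x
  have hpos : 0 < hammingNorm w := hammingNorm_pos_iff.2 fun h => h₀ (congrFun h 0)
  rw [hcount] at hmem
  refine ⟨((List.range 39).filter (supportPattern w)).reverse,
    mem_allLanes.2 ⟨hammingNorm w - 1, by omega, ?_⟩, eq_of_ne_zero_iff fun i => ?_⟩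
  · rwa [Nat.sub_add_cancel hpos]
  · rw [indicator_ne_zero_iff, ← supportPattern_val]
    simpa using hlast i i.isLt

theorem exists_translate_eq_indicator {u : Fin 45 → ZMod 2} (hu : u ≠ 0)
    (hle : hammingNorm u ≤ 7) : ∃ a, ∃ S ∈ allLanes 7, translate a u = indicator S := by
  have hpos : 0 < Nat.count (supportPattern u) 45 := by
    rwa [count_supportPattern, hammingNorm_pos_iff]
  obtain ⟨a, ha, hpa, hbal⟩ := exists_balanced_shift (periodic_supportPattern u) hpos
  lift a to Fin 45 using ha
  simp only [← supportPattern_translate, count_supportPattern] at hbal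
  rw [supportPattern_val] at hpa
  refine ⟨a, exists_eq_indicator_of_balanced ?_ ?_ ?_⟩
  · rwa [translate, zero_add]
  · rwa [hammingNorm_translate]
  · rwa [hammingNorm_translate]

/-- The words of length 45 with supports `lightLanes r`. -/
def lightWords (r : ℕ) : Finset (Fin 45 → ZMod 2) := ((lightLanes r).map indicator).toFinset

theorem mem_lightWords {r : ℕ} {u : Fin 45 → ZMod 2} :
    u ∈ lightWords r ↔ ∃ S ∈ lightLanes r, indicator S = u := by
  rw [lightWords, List.mem_toFinset, List.mem_map]

theorem exists_isSupportList_of_mem_lightLanes {r : ℕ} {S : List ℕ} (hS : S ∈ lightLanes r) :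
    ∃ k < 7, IsSupportList 38 (k + 1) S := by
  rw [lightLanes_eq_filter, List.mem_filter] at hS
  obtain ⟨k, hk, hmem⟩ := mem_allLanes.1 hS.1
  exact ⟨k, hk, isSupportList_of_mem_lanes hmem⟩

theorem sum_lightWords (r : ℕ) (g : (Fin 45 → ZMod 2) → ℕ) :
    ∑ u ∈ lightWords r, g u = ((lightLanes r).map fun S => g (indicator S)).sum := by
  rw [lightWords, List.sum_toFinset g, List.map_map]
  · rfl
  · rw [lightLanes_eq_filter]
    refine (nodup_allLanes 7).filter _ |>.map_on fun S hS T hT h => ?_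
    rw [← lightLanes_eq_filter] at hS hT
    obtain ⟨k, -, hlistS⟩ := exists_isSupportList_of_mem_lightLanes hS
    obtain ⟨l, -, hlistT⟩ := exists_isSupportList_of_mem_lightLanes hT
    refine hlistS.eq_of_mem_iff hlistT fun x => ?_
    have hlt : x ≤ 38 → x < 45 := fun hx => hx.trans_lt (by norm_num)
    constructor <;> intro hx
    · exact indicator_ne_zero_iff (i := ⟨x, hlt (hlistS.le x hx)⟩) |>.1
        (h ▸ indicator_ne_zero_iff.2 hx)
    · exact indicator_ne_zero_iff (i := ⟨x, hlt (hlistT.le x hx)⟩) |>.1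
        (h ▸ indicator_ne_zero_iff.2 hx)

theorem isLowTransversal_lightWords {r : ℕ}
    (hweight : ∀ S ∈ lightLanes r, wordWeight (vec r) (indicator S : Fin 45 → ZMod 2) = 14)
    (hstrict : ∀ S ∈ lightLanes r, strictlyBalanced 45 S.length S = true) :
    IsLowTransversal (vec r) 7 (lightWords r) := by
  have hbalanced {u : Fin 45 → ZMod 2} (hu : u ∈ lightWords r) : IsStrictlyBalanced u := by
    obtain ⟨S, hS, rfl⟩ := mem_lightWords.1 hu
    obtain ⟨k, -, hlist⟩ := exists_isSupportList_of_mem_lightLanes hS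
    exact isStrictlyBalanced_indicator hlist (by norm_num) (hstrict S hS)
  refine ⟨fun u hu => ?_, fun u hu => ?_, fun u hu hle hwt => ?_, fun u hu w hw a h => ?_⟩
  · obtain ⟨S, hS, rfl⟩ := mem_lightWords.1 hu
    exact hweight S hS
  · obtain ⟨S, hS, rfl⟩ := mem_lightWords.1 hu
    obtain ⟨k, hk, hlist⟩ := exists_isSupportList_of_mem_lightLanes hS
    rw [hammingNorm_indicator (hlist.pairwise.imp ne_of_gt) fun x hx =>
      (hlist.le x hx).trans_lt (by norm_num), hlist.length_eq]
    exact hk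
  · obtain ⟨a, S, hS, ha⟩ := exists_translate_eq_indicator hu hle
    refine ⟨a, mem_lightWords.2 ⟨S, ?_, ha.symm⟩⟩
    rw [lightLanes_eq_filter, List.mem_filter, decide_eq_true_iff, ← ha, wordWeight_translate]
    exact ⟨hS, by omega⟩
  · exact (hbalanced hu).eq_of_translate_eq (hbalanced hw) h

end LowTransversal

section KroneckerSubstitution

/-- The number with base `b` digits `c 0, …, c (n - 1)`, i.e. the value at `b` of the polynomial
with coefficients `c`. -/
def packed (b : ℕ) {n : ℕ} (c : Fin n → ℕ) : ℕ := ∑ j, c j * b ^ (j : ℕ)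

theorem packed_succ (b : ℕ) {n : ℕ} (c : Fin (n + 1) → ℕ) :
    packed b c = b * packed b (Fin.tail c) + c 0 := by
  rw [packed, Fin.sum_univ_succ, packed, Finset.mul_sum, add_comm]
  simp [Fin.tail, pow_succ', mul_left_comm]

theorem packed_add (b : ℕ) {n : ℕ} (c d : Fin n → ℕ) :
    packed b (c + d) = packed b c + packed b d := by
  simp only [packed, Pi.add_apply, add_mul, Finset.sum_add_distrib]

theorem packed_lt {b n : ℕ} {c : Fin n → ℕ} (hc : ∀ j, c j < b) : packed b c < b ^ n := by
  induction n with
  | zero => simp [packed]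
  | succ n ih =>
    have hmul := Nat.mul_le_mul_left b (ih (c := Fin.tail c) fun j => hc j.succ)
    rw [packed_succ, pow_succ']
    exact (Nat.add_lt_add_left (hc 0) _).trans_le hmul

theorem packed_div_mod {b n : ℕ} {c : Fin n → ℕ} (hc : ∀ j, c j < b) (j : Fin n) :
    packed b c / b ^ (j : ℕ) % b = c j := by
  induction n with
  | zero => exact j.elim0
  | succ n ih =>
    rw [packed_succ]
    cases j using Fin.cases with
    | zero => simp [Nat.mod_eq_of_lt (hc 0)]
    | succ j =>
      rw [Fin.val_succ, pow_succ', ← Nat.div_div_eq_div_mul, Nat.mul_add_div ((hc 0).pos),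
        Nat.div_eq_of_lt (hc 0), add_zero]
      exact ih (c := Fin.tail c) (fun j => hc j.succ) j

theorem packed_mod {b n : ℕ} [NeZero n] {c : Fin n → ℕ} (hc : ∀ j, c j + 1 < b) :
    packed b c % (b ^ n - 1) = packed b c := by
  have hlt := packed_lt (c := fun j => c j + 1) hc
  have hsum : packed b (fun j => c j + 1) = packed b c + packed b (1 : Fin n → ℕ) :=
    packed_add b c 1
  have hone : 1 ≤ packed b (1 : Fin n → ℕ) := by
    simpa [packed] using Finset.single_le_sum (f := fun j : Fin n => b ^ (j : ℕ))
      (fun _ _ => Nat.zero_le _) (Finset.mem_univ 0)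
  exact Nat.mod_eq_of_lt (by omega)

theorem packed_and_packed_one (k : ℕ) (hk : k ≠ 0) {n : ℕ} {c : Fin n → ℕ}
    (hc : ∀ j, c j < 2 ^ k) :
    packed (2 ^ k) c &&& packed (2 ^ k) (1 : Fin n → ℕ) = packed (2 ^ k) fun j => c j % 2 := by
  induction n with
  | zero => simp [packed]
  | succ n ih =>
    have hone : 1 < 2 ^ k := Nat.one_lt_two_pow hk
    have hand : ∀ a d x, x < 2 ^ k → (2 ^ k * a + x) &&& (2 ^ k * d + 1) =
        2 ^ k * (a &&& d) + x % 2 := fun a d x hx => Nat.eq_of_testBit_eq fun i => by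
      rw [Nat.testBit_and, Nat.testBit_two_pow_mul_add _ hx, Nat.testBit_two_pow_mul_add _ hone,
        Nat.testBit_two_pow_mul_add _ ((Nat.mod_le _ _).trans_lt hx), ← Nat.and_one_is_mod]
      split_ifs <;> rw [Nat.testBit_and]
    rw [packed_succ, packed_succ, packed_succ, Pi.one_apply, hand _ _ _ (hc 0)]
    congr 2
    exact ih (c := Fin.tail c) fun j => hc j.succ

theorem packed_modEq_sum {b : ℕ} (hb : 0 < b) {n : ℕ} (c : Fin n → ℕ) :
    packed b c ≡ ∑ j, c j [MOD b - 1] := by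
  have hb : b ≡ 1 [MOD b - 1] := (Nat.modEq_iff_dvd' hb).2 dvd_rfl |>.symm
  exact .sum fun j _ => by simpa using (hb.pow j).mul_left (c j)

theorem natCast_packed {R : Type*} [CommSemiring R] (b : ℕ) {n : ℕ} (c : Fin n → ℕ) :
    (packed b c : R) = ∑ j, (c j : R) * (b : R) ^ (j : ℕ) := by
  simp [packed]

theorem packed_mul_packed_modEq {b : ℕ} (hb : 0 < b) {n : ℕ} [NeZero n] (x y : Fin n → ℕ) :
    packed b x * packed b y ≡ packed b fun j => ∑ i, x i * y (j - i) [MOD b ^ n - 1] := by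
  have hpow : (b : ZMod (b ^ n - 1)) ^ n = 1 := by
    have := (ZMod.natCast_eq_natCast_iff _ _ _).2
      ((Nat.modEq_iff_dvd' (Nat.pow_pos hb (n := n))).2 dvd_rfl)
    simpa using this.symm
  have hadd (i j : Fin n) : (b : ZMod (b ^ n - 1)) ^ ((i + j : Fin n) : ℕ) =
      (b : ZMod (b ^ n - 1)) ^ (i : ℕ) * (b : ZMod (b ^ n - 1)) ^ (j : ℕ) := by
    rw [Fin.val_add, ← pow_eq_pow_mod _ hpow, pow_add]
  rw [← ZMod.natCast_eq_natCast_iff]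
  push_cast [natCast_packed]
  simp only [Finset.sum_mul]
  rw [Finset.sum_comm]
  refine Finset.sum_congr rfl fun i _ => ?_
  rw [Finset.mul_sum]
  refine Fintype.sum_equiv (Equiv.addLeft i) _ _ fun j => ?_
  rw [Equiv.coe_addLeft, hadd, add_sub_cancel_left]
  ring

/-- The number with `n` base `2 ^ k` digits, all equal to 1. -/
def repunit (n k : ℕ) : ℕ := (1 <<< (k * n) - 1) / (1 <<< k - 1)

theorem packed_one_eq_repunit {n k : ℕ} (hk : k ≠ 0) :
    packed (2 ^ k) (1 : Fin n → ℕ) = repunit n k := by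
  rw [repunit, Nat.one_shiftLeft, Nat.one_shiftLeft, pow_mul,
    ← Nat.geomSum_eq (Nat.one_lt_two_pow hk), Finset.sum_range]
  simp [packed]

end KroneckerSubstitution

section SumCount

variable {G : Type*} [AddCommGroup G] [Fintype G]

theorem sumCount_eq_sum (x y : G → ZMod 2) (j : G) :
    sumCount x y j = ∑ i, (x i).val * (y (j - i)).val := by
  have hmul : ∀ a b : ZMod 2, (if a ≠ 0 ∧ b ≠ 0 then 1 else 0) = a.val * b.val := by decide
  rw [sumCount, Finset.card_filter]
  exact Finset.sum_congr rfl fun i _ => hmul _ _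

theorem val_correlation_apply (u v : G → ZMod 2) (j : G) :
    ((u ⋆ v) j).val = sumCount (reflect u) v j % 2 := by
  rw [← ZMod.val_natCast, sumCount_eq_sum, correlation, ← Equiv.sum_comp (Equiv.neg G)]
  simp [reflect, neg_add_eq_sub]

theorem sumCount_le_card (x y : G → ZMod 2) (j : G) : sumCount x y j ≤ Fintype.card G :=
  Finset.card_le_univ _

end SumCount

section PackedWords

variable {n : ℕ} {k : ℕ}

/-- The number with base `b` digits `u 0, …, u (n - 1)`. -/
def packWord (b : ℕ) (u : Fin n → ZMod 2) : ℕ := packed b fun j => (u j).val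

theorem packWord_injective {b : ℕ} (hb : 2 ≤ b) :
    Function.Injective (packWord b : (Fin n → ZMod 2) → ℕ) := fun u w h => by
  have hdigit (x : Fin n → ZMod 2) (j : Fin n) : packWord b x / b ^ (j : ℕ) % b = (x j).val :=
    packed_div_mod (fun i => (ZMod.val_lt _).trans_le hb) j
  exact funext fun j => ZMod.val_injective 2 (by rw [← hdigit u, h, hdigit w])

theorem packWord_mod {b : ℕ} (hb : n + 1 < b) (u : Fin n → ZMod 2) :
    packWord b u % (b - 1) = hammingNorm u := by
  have hval : ∀ a : ZMod 2, a.val = if a ≠ 0 then 1 else 0 := by decide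
  rw [hammingNorm, Finset.card_filter]
  simp only [← hval]
  refine Nat.mod_eq_of_modEq (packed_modEq_sum (by omega) _) ?_
  simp only [hval]
  rw [← Finset.card_filter]
  have := Finset.card_le_univ (Finset.univ.filter fun i => u i ≠ 0)
  rw [Fintype.card_fin] at this
  omega

variable [NeZero n]

theorem packWord_mul_packWord_modEq {b : ℕ} (hb : 0 < b) (x y : Fin n → ZMod 2) :
    packWord b x * packWord b y ≡ packed b (sumCount x y) [MOD b ^ n - 1] := by
  rw [funext (sumCount_eq_sum x y)]
  exact packed_mul_packed_modEq hb _ _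

theorem packWord_single_zero (b : ℕ) : packWord b (Pi.single 0 1 : Fin n → ZMod 2) = 1 := by
  rw [packWord, packed, Finset.sum_eq_single 0] <;> simp +contextual [ZMod.val_one]

theorem packWord_correlation (hk : k ≠ 0) (hn : n + 1 < 2 ^ k) (u v : Fin n → ZMod 2) :
    packWord (2 ^ k) (u ⋆ v) = (packWord (2 ^ k) (reflect u) * packWord (2 ^ k) v %
      ((2 ^ k) ^ n - 1)) &&& packed (2 ^ k) (1 : Fin n → ℕ) := by
  have hle (j : Fin n) : sumCount (reflect u) v j + 1 < 2 ^ k :=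
    (Nat.succ_le_succ (sumCount_le_card _ v j)).trans_lt (by simpa using hn)
  have hmul := packWord_mul_packWord_modEq (b := 2 ^ k) (Nat.two_pow_pos k) (reflect u) v
  rw [hmul, packed_mod hle, packed_and_packed_one k hk fun j => (Nat.le_succ _).trans_lt (hle j)]
  exact congrArg _ (funext (val_correlation_apply u v))

end PackedWords

section PackedLists

/-- The value at `2 ^ k` of the polynomial `∑ i ∈ S, X ^ i`. -/
def packList (k : ℕ) (S : List ℕ) : ℕ := (S.map fun i => 1 <<< (k * i)).sum

/-- The representatives in `[0, n)` of the negatives modulo `n` of numbers at most `n`. -/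
def negList (n : ℕ) (S : List ℕ) : List ℕ := S.map fun i => (n - i) % n

variable {n : ℕ} {S : List ℕ}

theorem sum_val_indicator (hS : S.Nodup) (hlt : ∀ x ∈ S, x < n) (f : ℕ → ℕ) :
    ∑ j : Fin n, (indicator S j).val * f j = (S.map f).sum := by
  have hval (j : ℕ) : (if j ∈ S then (1 : ZMod 2) else 0).val * f j = if j ∈ S then f j else 0 := by
    split_ifs <;> simp [ZMod.val_one]
  simp only [indicator, hval]
  rw [Fin.sum_univ_eq_sum_range (fun j => if j ∈ S then f j else 0), ← Finset.sum_filter,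
    ← List.sum_toFinset f hS]
  congr 1
  ext x
  simpa using hlt x

theorem packWord_indicator (hS : S.Nodup) (hlt : ∀ x ∈ S, x < n) (k : ℕ) :
    packWord (2 ^ k) (indicator S : Fin n → ZMod 2) = packList k S := by
  simp only [packWord, packed, packList, Nat.one_shiftLeft, pow_mul]
  exact sum_val_indicator hS hlt _

theorem nodup_negList (hS : S.Nodup) (hlt : ∀ x ∈ S, x < n) : (negList n S).Nodup := by
  refine hS.map_on fun x hx y hy h => ?_
  lift x to Fin n using hlt x hx
  lift y to Fin n using hlt y hy
  rw [← Fin.val_neg', ← Fin.val_neg', ← Fin.ext_iff, neg_inj] at h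
  rw [h]

theorem indicator_eq_vec (r : ℕ) :
    (indicator ((List.range n).filter r.testBit) : Fin n → ZMod 2) = vec r := by
  refine eq_of_ne_zero_iff fun i => ?_
  rw [indicator_ne_zero_iff, vec_ne_zero_iff, List.mem_filter, List.mem_range]
  exact and_iff_right i.isLt

variable [NeZero n]

theorem lt_of_mem_negList : ∀ x ∈ negList n S, x < n := by
  simp only [negList, List.mem_map]
  rintro _ ⟨i, -, rfl⟩
  exact Nat.mod_lt _ (NeZero.pos n)

theorem reflect_indicator (hlt : ∀ x ∈ S, x < n) :
    reflect (indicator S) = (indicator (negList n S) : Fin n → ZMod 2) := by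
  refine eq_of_ne_zero_iff fun i => ?_
  rw [reflect, indicator_ne_zero_iff, indicator_ne_zero_iff, negList, List.mem_map]
  constructor
  · exact fun h => ⟨_, h, by rw [← Fin.val_neg', neg_neg]⟩
  · rintro ⟨x, hx, hxi⟩
    lift x to Fin n using hlt x hx
    rw [← Fin.val_neg', ← Fin.ext_iff] at hxi
    rwa [← hxi, neg_neg]

theorem packWord_reflect_indicator (hS : S.Nodup) (hlt : ∀ x ∈ S, x < n) (k : ℕ) :
    packWord (2 ^ k) (reflect (indicator S : Fin n → ZMod 2)) = packList k (negList n S) := by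
  rw [reflect_indicator hlt, packWord_indicator (nodup_negList hS hlt) lt_of_mem_negList]

end PackedLists

section PackedCorrelation

/-- `x` reduced modulo `X ^ n - 1`, where `X = 2 ^ k`. -/
def cyclicMod (n k x : ℕ) : ℕ := x % (1 <<< (k * n) - 1)

/-- The correlation product in terms of packed words: the product modulo `X ^ n - 1`, where
`X = 2 ^ k`, with all base `X` digits reduced modulo 2. -/
def packedCorrelation (n k x y : ℕ) : ℕ :=
  cyclicMod n k (x * y) &&& repunit n k

/-- The sum of `F` over the `n` last base `2 ^ k` digits of `x`. -/
def digitSum (n k : ℕ) (F : ℕ → ℕ) (x : ℕ) : ℕ :=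
  ((List.range n).map fun j => force (x >>> (k * j) % 1 <<< k) F).sum

variable {n k : ℕ} [NeZero n]

theorem packedCorrelation_packWord (hk : k ≠ 0) (hn : n + 1 < 2 ^ k) (u v : Fin n → ZMod 2) :
    packedCorrelation n k (packWord (2 ^ k) (reflect u)) (packWord (2 ^ k) v) =
      packWord (2 ^ k) (u ⋆ v) := by
  rw [packWord_correlation hk hn, packed_one_eq_repunit hk, packedCorrelation, cyclicMod,
    Nat.one_shiftLeft, pow_mul]

theorem digitSum_cyclicMod (F : ℕ → ℕ) {x : ℕ} {c : Fin n → ℕ}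
    (hx : x ≡ packed (2 ^ k) c [MOD (2 ^ k) ^ n - 1]) (hc : ∀ j, c j + 1 < 2 ^ k) :
    digitSum n k F (cyclicMod n k x) = ∑ j, F (c j) := by
  have hdigit (j : Fin n) : cyclicMod n k x >>> (k * j) % 1 <<< k = c j := by
    rw [cyclicMod, Nat.one_shiftLeft, Nat.one_shiftLeft, pow_mul, hx, packed_mod hc,
      Nat.shiftRight_eq_div_pow, pow_mul]
    exact packed_div_mod (fun j => (Nat.le_succ _).trans_lt (hc j)) j
  simp only [digitSum, force_eq]
  rw [← List.map_coe_finRange_eq_range, List.map_map, Fin.sum_univ_def]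
  exact congrArg (fun f => ((List.finRange n).map f).sum) (funext fun j => congrArg F (hdigit j))

end PackedCorrelation

section Evaluation

/-- The packed word of `vec r`. -/
def packVec (n k r : ℕ) : ℕ := packList k ((List.range n).filter r.testBit)

/-- The packed word of `reflect (vec r)`. -/
def packReflectVec (n k r : ℕ) : ℕ := packList k (negList n ((List.range n).filter r.testBit))

/-- The packed word of `indicator S ⋆ vec r`. -/
def packPartner (n k r : ℕ) (S : List ℕ) : ℕ :=
  packedCorrelation n k (packList k (negList n S)) (packVec n k r)

/-- The packed word of `reflect (indicator S ⋆ vec r)`. -/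
def packReflectPartner (n k r : ℕ) (S : List ℕ) : ℕ :=
  packedCorrelation n k (packList k S) (packReflectVec n k r)

/-- The packed numbers `autoCount (vec r) t (indicator S) j`, up to multiples of `X ^ n - 1`. -/
def packAutoCount (n k t r : ℕ) (S : List ℕ) : ℕ :=
  packList k S * packList k (negList n S) +
    bif S.length.blt t then packPartner n k r S * packReflectPartner n k r S else 0

/-- The packed numbers `crossCount (vec r) t (indicator S) j`, up to multiples of `X ^ n - 1`. -/
def packCrossCount (n k t r : ℕ) (S : List ℕ) : ℕ :=
  (bif S.length.blt t then 2 else 1) * (packList k S * packPartner n k r S)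

variable {n k : ℕ}

theorem packWord_vec (r : ℕ) : packWord (2 ^ k) (vec r : Fin n → ZMod 2) = packVec n k r := by
  rw [packVec, ← packWord_indicator (n := n) (List.nodup_range.filter _) (by simp +contextual),
    indicator_eq_vec]

variable [NeZero n]

theorem packWord_reflect_vec (r : ℕ) :
    packWord (2 ^ k) (reflect (vec r : Fin n → ZMod 2)) = packReflectVec n k r := by
  rw [packReflectVec, ← packWord_reflect_indicator (List.nodup_range.filter _)
    (by simp +contextual), indicator_eq_vec]

theorem isOrthogonal_vec_iff (hk : k ≠ 0) (hn : n + 1 < 2 ^ k) {r : ℕ} :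
    IsOrthogonal (vec r : Fin n → ZMod 2) ↔
      packedCorrelation n k (packReflectVec n k r) (packVec n k r) = 1 := by
  rw [← packWord_vec, ← packWord_reflect_vec, packedCorrelation_packWord hk hn,
    ← packWord_single_zero (n := n) (2 ^ k),
    (packWord_injective (Nat.one_lt_two_pow hk)).eq_iff, IsOrthogonal]

variable {S : List ℕ}

theorem packWord_partner (hk : k ≠ 0) (hn : n + 1 < 2 ^ k) (hS : S.Nodup)
    (hlt : ∀ x ∈ S, x < n) (r : ℕ) :
    packWord (2 ^ k) (indicator S ⋆ vec r : Fin n → ZMod 2) = packPartner n k r S := by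
  rw [packPartner, ← packWord_vec, ← packWord_reflect_indicator hS hlt,
    packedCorrelation_packWord hk hn]

theorem packWord_reflect_partner (hk : k ≠ 0) (hn : n + 1 < 2 ^ k) (hS : S.Nodup)
    (hlt : ∀ x ∈ S, x < n) (r : ℕ) :
    packWord (2 ^ k) (reflect (indicator S ⋆ vec r : Fin n → ZMod 2)) =
      packReflectPartner n k r S := by
  rw [packReflectPartner, ← packWord_reflect_vec, ← packWord_indicator hS hlt,
    ← reflect_reflect (indicator S), packedCorrelation_packWord hk hn, reflect_reflect,
    reflect_correlation_reflect]

theorem packAutoCount_modEq (hk : k ≠ 0) (hn : n + 1 < 2 ^ k) (hS : S.Nodup)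
    (hlt : ∀ x ∈ S, x < n) (t r : ℕ) :
    packAutoCount n k t r S ≡
      packed (2 ^ k) (autoCount (vec r : Fin n → ZMod 2) t (indicator S))
      [MOD (2 ^ k) ^ n - 1] := by
  have hpos : 0 < 2 ^ k := Nat.two_pow_pos k
  rw [packAutoCount, ← packWord_partner hk hn hS hlt, ← packWord_reflect_partner hk hn hS hlt,
    ← packWord_indicator hS hlt, ← packWord_reflect_indicator hS hlt, cond_eq_ite]
  simp only [Nat.blt_eq, ← hammingNorm_indicator hS hlt]
  unfold autoCount
  split_ifs
  · rw [packed_add]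
    exact (packWord_mul_packWord_modEq hpos _ _).add (packWord_mul_packWord_modEq hpos _ _)
  · rw [add_zero, add_zero]
    exact packWord_mul_packWord_modEq hpos _ _

theorem packCrossCount_modEq (hk : k ≠ 0) (hn : n + 1 < 2 ^ k) (hS : S.Nodup)
    (hlt : ∀ x ∈ S, x < n) (t r : ℕ) :
    packCrossCount n k t r S ≡
      packed (2 ^ k) (crossCount (vec r : Fin n → ZMod 2) t (indicator S))
      [MOD (2 ^ k) ^ n - 1] := by
  have hpos : 0 < 2 ^ k := Nat.two_pow_pos k
  rw [packCrossCount, ← packWord_partner hk hn hS hlt, ← packWord_indicator hS hlt,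
    cond_eq_ite]
  simp only [Nat.blt_eq, ← hammingNorm_indicator hS hlt]
  unfold crossCount
  split_ifs
  · rw [packed_add, two_mul]
    refine (packWord_mul_packWord_modEq hpos _ _).add ?_
    rw [mul_comm]
    exact packWord_mul_packWord_modEq hpos _ _
  · rw [one_mul, add_zero]
    exact packWord_mul_packWord_modEq hpos _ _

end Evaluation

section CodeCheck

/-- The weight function of the pair invariant: it was chosen to separate the 716 codes. -/
def pairWeight (m : ℕ) : ℕ := m * m * (m + 1)

/-- The pair invariant of `hankelCode (vec r)` with weight function `pairWeight`. -/
def codeInvariant (r : ℕ) : ℕ :=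
  digitSum 45 20 pairWeight (cyclicMod 45 20 ((lightLanes r).map (packAutoCount 45 20 7 r)).sum) +
    digitSum 45 20 pairWeight (cyclicMod 45 20 ((lightLanes r).map (packCrossCount 45 20 7 r)).sum)

/-- Tests that `hankelCode (vec r)` is a self-dual code of minimum weight 14, that the balanced
rotations of its light words are unique, and that no digit overflows in `codeInvariant r`. -/
def checkCode (r : ℕ) : Bool :=
  (packedCorrelation 45 20 (packReflectVec 45 20 r) (packVec 45 20 r)).beq 1 &&
    (!(lightLanes r).isEmpty && ((lightLanes r).length.blt 10000 && (lightLanes r).all fun S =>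
      (S.length + packPartner 45 20 r S % (1 <<< 20 - 1)).beq 14 && strictlyBalanced 45 S.length S))

theorem sum_map_modEq_packed {α : Type*} {b n m : ℕ} {L : List α} {f : α → ℕ}
    {g : α → Fin n → ℕ} (h : ∀ a ∈ L, f a ≡ packed b (g a) [MOD m]) :
    (L.map f).sum ≡ packed b (fun j => (L.map fun a => g a j).sum) [MOD m] := by
  induction L with
  | nil => simp [packed, Nat.ModEq.refl]
  | cons a L ih =>
    simp only [List.map_cons, List.sum_cons]
    exact ((h a List.mem_cons_self).add (ih fun c hc => h c (List.mem_cons_of_mem a hc))).trans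
      (packed_add b (g a) _ ▸ .refl _)

theorem digitSum_cyclicMod_sum {α : Type*} {n k b : ℕ} [NeZero n] {L : List α} {f : α → ℕ}
    {g : α → Fin n → ℕ} (F : ℕ → ℕ) (h : ∀ a ∈ L, f a ≡ packed (2 ^ k) (g a) [MOD (2 ^ k) ^ n - 1])
    (hg : ∀ a ∈ L, ∀ j, g a j ≤ b) (hb : L.length * b + 1 < 2 ^ k) :
    digitSum n k F (cyclicMod n k (L.map f).sum) = ∑ j, F (L.map fun a => g a j).sum := by
  refine digitSum_cyclicMod F (sum_map_modEq_packed h) fun j => lt_of_le_of_lt ?_ hb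
  gcongr
  simpa using List.sum_le_card_nsmul (L.map fun a => g a j) b (by simpa using fun a ha => hg a ha j)

section Counts

variable {G : Type*} [AddCommGroup G] [Fintype G]

theorem autoCount_le (v : G → ZMod 2) (t : ℕ) (u : G → ZMod 2) (j : G) :
    autoCount v t u j ≤ 2 * Fintype.card G := by
  rw [autoCount, Pi.add_apply, two_mul]
  refine add_le_add (sumCount_le_card _ _ j) ?_
  split_ifs
  exacts [sumCount_le_card _ _ j, Nat.zero_le _]

theorem crossCount_le (v : G → ZMod 2) (t : ℕ) (u : G → ZMod 2) (j : G) :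
    crossCount v t u j ≤ 2 * Fintype.card G := by
  rw [crossCount, Pi.add_apply, two_mul]
  refine add_le_add (sumCount_le_card _ _ j) ?_
  split_ifs
  exacts [sumCount_le_card _ _ j, Nat.zero_le _]

end Counts

variable {r : ℕ} {S : List ℕ}

theorem lt_of_mem_lightLanes (hS : S ∈ lightLanes r) : ∀ x ∈ S, x < 45 := by
  obtain ⟨k, -, hlist⟩ := exists_isSupportList_of_mem_lightLanes hS
  exact fun x hx => (hlist.le x hx).trans_lt (by norm_num)

theorem nodup_of_mem_lightLanes (hS : S ∈ lightLanes r) : S.Nodup := by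
  obtain ⟨k, -, hlist⟩ := exists_isSupportList_of_mem_lightLanes hS
  exact hlist.pairwise.imp ne_of_gt

theorem wordWeight_of_mem_lightLanes (hS : S ∈ lightLanes r) :
    wordWeight (vec r) (indicator S : Fin 45 → ZMod 2) =
      S.length + packPartner 45 20 r S % (2 ^ 20 - 1) := by
  have hnodup := nodup_of_mem_lightLanes hS
  have hlt := lt_of_mem_lightLanes hS
  rw [wordWeight, hammingNorm_indicator hnodup hlt,
    ← packWord_partner (by norm_num) (by norm_num) hnodup hlt r, packWord_mod (by norm_num)]

theorem codeInvariant_eq (hlen : (lightLanes r).length < 10000) : codeInvariant r =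
    ∑ j : Fin 45, pairWeight (∑ u ∈ lightWords r, autoCount (vec r) 7 u j) +
      ∑ j, pairWeight (∑ u ∈ lightWords r, crossCount (vec r) 7 u j) := by
  have hbound : (lightLanes r).length * (2 * Fintype.card (Fin 45)) + 1 < 2 ^ 20 := by
    rw [Fintype.card_fin]
    omega
  rw [codeInvariant, digitSum_cyclicMod_sum pairWeight (fun S hS => packAutoCount_modEq
      (by norm_num) (by norm_num) (nodup_of_mem_lightLanes hS) (lt_of_mem_lightLanes hS) 7 r)
      (fun S _ j => autoCount_le _ _ _ j) hbound,
    digitSum_cyclicMod_sum pairWeight (fun S hS => packCrossCount_modEq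
      (by norm_num) (by norm_num) (nodup_of_mem_lightLanes hS) (lt_of_mem_lightLanes hS) 7 r)
      (fun S _ j => crossCount_le _ _ _ j) hbound]
  simp only [sum_lightWords]

theorem checkCode_iff : checkCode r = true ↔
    IsOrthogonal (vec r : Fin 45 → ZMod 2) ∧ lightLanes r ≠ [] ∧ (lightLanes r).length < 10000 ∧
      ∀ S ∈ lightLanes r, wordWeight (vec r) (indicator S : Fin 45 → ZMod 2) = 14 ∧
        strictlyBalanced 45 S.length S = true := by
  rw [checkCode, isOrthogonal_vec_iff (k := 20) (by norm_num) (by norm_num)]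
  simp only [Bool.and_eq_true, Nat.beq_eq, Bool.not_eq_true', List.isEmpty_eq_false_iff, Nat.blt_eq,
    List.all_eq_true, Nat.one_shiftLeft]
  refine and_congr_right' (and_congr_right' (and_congr_right' (forall₂_congr fun S hS => ?_)))
  rw [wordWeight_of_mem_lightLanes hS]

theorem checkCode_spec (h : checkCode r = true) :
    IsOrthogonal (vec r : Fin 45 → ZMod 2) ∧
      MinWeightIs (hankelCode (vec r : Fin 45 → ZMod 2)) 14 ∧
      pairInvariant pairWeight (hankelCode (vec r : Fin 45 → ZMod 2)) 14 (Sum.inl 0) =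
        codeInvariant r := by
  obtain ⟨horth, hne, hlen, hS⟩ := checkCode_iff.1 h
  have hL := isLowTransversal_lightWords (fun S h => (hS S h).1) fun S h => (hS S h).2
  obtain ⟨S, hmem⟩ := List.exists_mem_of_ne_nil _ hne
  refine ⟨horth, hL.minWeightIs horth ⟨_, mem_lightWords.2 ⟨S, hmem, rfl⟩⟩ (by norm_num), ?_⟩
  rw [codeInvariant_eq hlen]
  exact hL.pairInvariant_eq horth (by norm_num) (by decide) pairWeight

end CodeCheck

section Representatives

set_option maxRecDepth 4000

/-- The numbers `r` of the 716 representatives `hankelCode (vec r)`, by increasing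
`codeInvariant r`. -/
def representatives : List ℕ :=
  [26561217698081, 1621285699780, 33777159419964, 16560423923567, 7095635724928, 22313885247661,
   1427203077386, 9920930213953, 11944648112992, 26845515708825, 18017475999050, 21337380691663,
   22110994407476, 26933827047864, 12272156425553, 2101182537227, 13164304248134, 1084806562577,
   11039707715693, 4405070588610, 1546254013876, 7427985343146, 5837820849340, 2601844224659,
   542377895272, 19729234303572, 3296767252756, 1290148237224, 29091670879095, 6432524865225,
   20115440074132, 30950925077085, 9336778217591, 3683176835575, 22413213418339, 32575676953695,
   20363750625652, 13106359565566, 17013804476876, 2048892036069, 13358943856969, 9970616317297,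
   35042088105058, 16811504282652, 21169585040586, 30292179973635, 3281749510931, 13290561940280,
   13071513763513, 6643285631951, 858561204763, 1894537942452, 9492154544796, 28180225918797,
   30238156207440, 10106740216153, 12488428056499, 13672447945101, 7740616288205, 2678176770167,
   22518275237202, 8943489216669, 24982882623527, 4544857789013, 11241399925009, 241569498561,
   549004203446, 30801898480478, 1357001283965, 9984500985675, 28226541494064, 1547838410424,
   10560143678638, 4020503402031, 22670574315933, 5793424756290, 7226410752713, 19622101636758,
   4478472736216, 2886149181278, 24058297879767, 1461374514384, 7065174688801, 10909761855024,
   25717961833991, 4094515846159, 1959351540402, 8521491761039, 9355887016921, 16773401234564,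
   27828102225624, 634913539087, 16066921384946, 18163990733212, 18837274959191, 22358849276152,
   23815626927200, 3215773077139, 14676915419065, 2761048426030, 11861751754087, 31792748628333,
   8331296747166, 6052429762475, 31260836126797, 12084203876902, 17881343735949, 10942701597855,
   31339215971318, 33722982865190, 30079817749142, 1831479956540, 16761532179754, 19519199737657,
   5242935776819, 24092126537630, 29494456551620, 29860859974946, 9108714395034, 30128646272714,
   18052483732869, 13359504024522, 14346258202870, 19312480402566, 5553826218109, 9871856203960,
   31303921461325, 28850681326120, 20368720386291, 13679845804576, 14749927634805, 11727528700489,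
   15537538656402, 15638408700116, 15668346585828, 24538030180884, 4064648490714, 31684182246144,
   6289538340477, 20151852129189, 13232186401239, 7620696125184, 21051035958481, 4323765384762,
   21044763612448, 35103981186019, 24904849065736, 27135377896259, 1457128297817, 19506552685652,
   25477938007428, 27336732710837, 15447235779067, 21216042131070, 22844983978456, 28732555533377,
   28963418745731, 34649829576266, 27369126142733, 3435854661982, 18492254363348, 13230723538514,
   25262728030822, 20595501729840, 26733337325637, 29258131042880, 20124839803149, 33697121362598,
   5190069359961, 6787307553121, 31522174208105, 23506924024909, 27394181036952, 10300811961850,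
   25782930708181, 32741579550508, 3733753059804, 3728454538527, 6161555166857, 14939373819345,
   9629860363930, 6964651568623, 23399235035622, 667126776877, 31808005981966, 4923419464523,
   32418884892461, 21673149160177, 2825055982487, 20438609788643, 3151658414054, 12102533676051,
   12452546465477, 4892133278168, 21868859411756, 32030351830025, 12042541460300, 27194668892029,
   23412119544298, 4542120751886, 20134785731485, 4732276286862, 6342090083395, 12483982455032,
   1206221932225, 17743680189515, 9627156669337, 21893010291256, 18037304184938, 4101902397221,
   26760889384137, 14708495043959, 24241228982388, 33750479317400, 13173831577358, 7086961949248,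
   8351845730029, 9140588621940, 6650016940222, 13435686986196, 11989147925161, 6492181909265,
   27258158799881, 2784250713073, 4705417675342, 6666166704866, 6812511078908, 21318840900007,
   26253493174800, 28737194059880, 3690543705829, 31148010097332, 34246180980006, 4949261798030,
   24434114041976, 30992975389172, 1024123107897, 30823502588077, 20173784128818, 33911372069251,
   17350623867706, 14215118680874, 18275698727500, 33286426847276, 7231779625676, 5118198449066,
   26819687559557, 27752322495938, 22788087359523, 27637519459351, 31233056663567, 12470757799278,
   19090004724055, 16672457630871, 13100696466681, 6348107510928, 2349531509608, 33573728721323,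
   10277445588263, 18376100066844, 10032533822975, 26640106053641, 7139689175899, 33418344244410,
   21087189180390, 22088921796792, 11116259533673, 18885302130982, 540915817573, 7143276499685,
   10937040600216, 9184153493994, 34426720960483, 17746386557279, 26683203052464, 13480213192958,
   30694493041915, 15721446391985, 20546397673261, 26235397672956, 33335249967244, 29832199093778,
   13615036915843, 24640434541245, 16887682564018, 10908152411461, 21162312715870, 26255542750162,
   22415199167794, 7727610906698, 24967422359900, 17367513296315, 2912110639897, 9436915807072,
   8417304661643, 11464253484624, 19276131179442, 8643376486992, 7914295073259, 19396725694112,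
   31706372884668, 21117172716637, 14341351793720, 31524268812798, 33157346667766, 1553721660499,
   25148226216377, 7037682621240, 20569658869878, 26367704785781, 13210022234826, 12064875934260,
   26831754181647, 18981960913240, 10497816515318, 7883309205755, 25096392968220, 24221651114691,
   124194421431, 289972839046, 15706413547683, 11970894871224, 6482329859101, 12339804290320,
   1720209366930, 30660471093178, 12898495896465, 5966815658396, 26602320958465, 13936035406726,
   26153571921761, 12361155805096, 11449933001781, 745278397286, 8059796866525, 25711669939929,
   25613527524526, 5422841200976, 33711548375541, 29878474160099, 21357394042278, 17554398405365,
   492483443470, 13482948850641, 28470146921403, 27120955208622, 32300795602054, 10128168513678,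
   29692208625747, 18052002648889, 1259392539963, 5346619151667, 21644286745687, 3231140407816,
   14753937614910, 24643042424943, 6489408538287, 27399812584426, 28465250248019, 23305823012349,
   2031810920740, 18914189055578, 28116755486664, 5656739548324, 22184629316209, 22523371479499,
   13255798018993, 30955867021449, 27497338832321, 19947903619102, 9060076020264, 20653425442789,
   9471052281378, 3125887823822, 23234774930459, 9809624653364, 11387427080933, 19502438977002,
   3078543932082, 1134742985138, 6094559606757, 10838307301361, 1107048720271, 14535944696957,
   13540606068930, 26500467663092, 18049991939580, 13390513732527, 5164270764124, 214789910857,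
   8066722911809, 905163735084, 31175411737599, 11466485707479, 20351711100620, 30832582968662,
   623573484248, 7152513041034, 11493867208185, 3513536101619, 2416027695435, 27894060741710,
   12827296202430, 2340269318867, 31161569555328, 4866261086333, 14326974867279, 2518131535288,
   8429422234687, 3077587364603, 4748266627271, 14009930901926, 26901893017834, 2777882040895,
   34620237781926, 3741269023189, 14635001839140, 14657264536786, 29792371382436, 3669334448400,
   28685876539787, 41929335727, 27429144574104, 16931190662216, 14930802984912, 7939928055359,
   29823028477034, 19386786920131, 26525090323131, 3774711393704, 24854236487498, 25870417997724,
   6000650628097, 28889319831597, 30111558430056, 33641872210110, 11469145827642, 21050765303201,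
   9397824734201, 8512753118761, 13915552346627, 12913192926958, 2394578131090, 31965741727571,
   10745247987459, 26183298122768, 17824223986181, 28554121123749, 24750233913240, 2724860883757,
   28653784486873, 20320291478981, 29252478832815, 2843805588332, 225318403881, 28703718648048,
   33488509467510, 28767679056238, 3142153148804, 9392017072822, 30110296547854, 26613125692288,
   34063682774725, 2702018534020, 23081476646501, 31853149909315, 4784278234529, 16634331278775,
   27124638122277, 27552629890808, 18085356976203, 9903776568123, 14644486653186, 15024634317932,
   19722832614294, 7881260155193, 31920359640480, 8489139685170, 14407013675336, 26700172960190,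
   26285760570436, 3629383792336, 1705300943525, 31778886989957, 10045896984445, 3539663390665,
   29367757437730, 14705438785762, 6393869242093, 32826740812861, 18974444949841, 15235277682097,
   5403514437954, 8011398474916, 13751715288014, 27699208455437, 28965160112827, 7488070817883,
   19267935958563, 12068312050532, 23754448695230, 24913564363417, 6119574553875, 22865591243250,
   1353129508616, 16643728723144, 7329431104145, 28156087934122, 189077231744, 9252171115185,
   15647374088986, 34594841291822, 19023007946016, 3155037657488, 7949591502390, 11064237668788,
   20080007609781, 32199523994788, 19429581406539, 7066334863953, 26958215640038, 6736916019978,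
   6297186620469, 29461164751577, 30832484133370, 13037793481866, 32027024319927, 22782439018563,
   21466538127840, 1823492395755, 1787188567567, 28802794437528, 14024454165196, 13447166586233,
   31582965400420, 2307075386258, 29337430977113, 14313960144651, 16903069493559, 24920955750203,
   21545931551910, 3362482977021, 4588685060725, 30763803774995, 23013416714578, 18057024208169,
   1721974576032, 9144280674640, 5114258629194, 270146368573, 34929025713810, 17390670405261,
   25259851710644, 28469946749743, 4989625623138, 18677814409013, 8702004612344, 7849690998107,
   28747581585825, 9540174671905, 28958906037448, 2165376539825, 13490874999535, 7069136350577,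
   28995223966367, 9537626568420, 8693215432276, 26724799945725, 25006115896552, 8811447993222,
   12898693190622, 27685116933443, 25979000904736, 28693588609451, 17639900010883, 2596569901243,
   8610565615314, 2010073396945, 18671415099696, 31580411031617, 13610547161826, 22533321741147,
   368075995350, 21859988549199, 19976089279033, 31301362282812, 15454215709529, 25613039044813,
   30515898170981, 13199284619968, 12232406520755, 21079965276129, 9533293908714, 20447918119831,
   5892160253867, 28029293831973, 4929552315774, 19196776045689, 19394019263571, 32825930599410,
   4765544858118, 2684801779169, 12546766126927, 17402761611986, 31844331299148, 11285424654982,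
   29555886700052, 30591784451774, 3890868244155, 2023535531608, 24683006913906, 11538719355338,
   33178186578449, 2524883454861, 732725797561, 32031124500438, 7746660425459, 12293837584623,
   9413492302498, 9476092548088, 33293838658442, 32648662105567, 23890191638997, 17678596817718,
   5821295456233, 4264193298272, 2821104426506, 26259111197711, 24908649552510, 6592628680438,
   31065495775443, 7370404362584, 9153485497233, 1121115675684, 9510407598733, 223483618369,
   66984501293, 1572419775372, 24654762959445, 15568284301825, 28163341145064, 5147251355034,
   24314245392432, 22383345107963, 28383479171090, 32633527673691, 28681400043047, 6003246875008,
   8366073400570, 11631030638281, 33721733169481, 32503860699462, 29755913742169, 34133222952224,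
   7619784149330, 486153509974, 31440768512188, 2678178979223, 33075920863888, 29063461876458,
   25828543941634, 33184376226429, 2375533242068, 25677950067946, 20942314134788, 31885324882924,
   18361788266792, 35023683204330, 13871517130979, 15743718443207, 1212910736733, 24157066145062,
   19907504282682, 27730486992226, 34033108795435, 24802878235579, 15196253639238, 3521937249504,
   8695651850722, 4218842210125, 6771102394521, 7300902018255, 5217086212949, 8917730284016,
   17851125013408, 22505949448271, 31674395756104, 25036162837141, 24750348755438, 14090912805792,
   28857913678008, 23971692779433, 2537767963545, 32532373409754, 34474827583550, 29680731562211,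
   12109565661179, 4482563892360, 34424549910125, 22915848776090, 22868943656467, 21379894099014,
   32938312115074, 2159021630508, 13120023229675, 30204446872674, 21018102003602, 21533547640483,
   31657657872886, 13026725882148, 25711781859171, 18818543042226, 32025655353556, 44180877330,
   27658641478875, 33700792381305]

/-- Tests that the numbers in the list pass `checkCode` and that their invariants increase, from
above `lo` to at most `hi`. -/
def ascending : ℕ → List ℕ → ℕ → Bool
  | lo, [], hi => lo.ble hi
  | lo, r :: L, hi => force r fun r => checkCode r && force (codeInvariant r) fun i =>
      lo.blt i && ascending i L hi

theorem ascending_cons {lo r hi : ℕ} {L : List ℕ} : ascending lo (r :: L) hi = true ↔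
    checkCode r = true ∧ lo < codeInvariant r ∧ ascending (codeInvariant r) L hi = true := by
  rw [ascending, force_eq, force_eq, Bool.and_eq_true, Bool.and_eq_true, Nat.blt_eq]

theorem ascending_append {lo mid hi : ℕ} {L M : List ℕ} (hL : ascending lo L mid = true)
    (hM : ascending mid M hi = true) : ascending lo (L ++ M) hi = true := by
  induction L generalizing lo with
  | nil =>
    have hle : lo ≤ mid := Nat.le_of_ble_eq_true hL
    cases M with
    | nil => exact Nat.ble_eq_true_of_le (hle.trans (Nat.le_of_ble_eq_true hM))
    | cons r M =>
      rw [ascending_cons] at hM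
      exact ascending_cons.2 ⟨hM.1, hle.trans_lt hM.2.1, hM.2.2⟩
  | cons r L ih =>
    rw [ascending_cons] at hL
    exact ascending_cons.2 ⟨hL.1, hL.2.1, ih hL.2.2⟩

theorem checkCode_of_ascending {lo hi : ℕ} {L : List ℕ} (h : ascending lo L hi = true) :
    ∀ r ∈ L, checkCode r = true ∧ lo < codeInvariant r := by
  induction L generalizing lo with
  | nil => simp
  | cons r L ih =>
    rw [ascending_cons] at h
    refine List.forall_mem_cons.2 ⟨⟨h.1, h.2.1⟩, fun s hs => ?_⟩
    exact ⟨(ih h.2.2 s hs).1, h.2.1.trans (ih h.2.2 s hs).2⟩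

theorem pairwise_of_ascending {lo hi : ℕ} {L : List ℕ} (h : ascending lo L hi = true) :
    L.Pairwise fun r s => codeInvariant r < codeInvariant s := by
  induction L generalizing lo with
  | nil => exact .nil
  | cons r L ih =>
    rw [ascending_cons] at h
    exact .cons (fun s hs => (checkCode_of_ascending h.2.2 s hs).2) (ih h.2.2)

theorem ascending_take {L : List ℕ} {k m : ℕ} {bound : ℕ → ℕ}
    (h : ∀ i < m, ascending (bound i) ((L.drop (k * i)).take k) (bound (i + 1)) = true) :
    ascending (bound 0) (L.take (k * m)) (bound m) = true := by
  induction m with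
  | zero => simp [ascending]
  | succ m ih =>
    rw [mul_add_one, List.take_add]
    exact ascending_append (ih fun i hi => h i (hi.trans m.lt_succ_self)) (h m m.lt_succ_self)

/-- Bounds separating the invariants of the consecutive blocks of 30 representatives. -/
def invariantBounds : List ℕ :=
  [0, 258842, 471600, 499208, 640588, 815440, 828316, 1030244, 1042030, 1059196, 1292924, 1312568,
   1582336, 1655778, 1914334, 2270072, 2299946, 2691726, 2733996, 3195146, 3710122, 4281356,
   5054730, 6417612, 16440208]

set_option maxHeartbeats 0 in -- heartbeats also count the allocations of the kernel computations
theorem ascending_block (i : ℕ) (hi : i < 24) :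
    ascending (invariantBounds.getD i 0) ((representatives.drop (30 * i)).take 30)
      (invariantBounds.getD (i + 1) 0) = true := by
  interval_cases i <;> decide +kernel

theorem representatives_length : representatives.length = 716 := by decide +kernel

theorem ascending_representatives : ascending 0 representatives 16440208 = true := by
  have htake : representatives.take (30 * 24) = representatives :=
    List.take_of_length_le (by simp [representatives_length])
  exact htake ▸ ascending_take (bound := fun i => invariantBounds.getD i 0) ascending_block

end Representatives

section Components

variable {G : Type*} [AddCommGroup G]

/-- Multiplication by an integer prime to the order of the group, as an automorphism. -/
noncomputable def dilation {m : ℕ} (h : (Nat.card G).Coprime m) : G ≃+ G :=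
  AddEquiv.ofBijective (nsmulAddMonoidHom m) h.nsmul_right_bijective

theorem dilation_apply {m : ℕ} (h : (Nat.card G).Coprime m) (x : G) : dilation h x = m • x := rfl

variable [Fintype G]

theorem correlation_correlation_right (u v w : G → ZMod 2) :
    u ⋆ (v ⋆ w) = (reflect u ⋆ v) ⋆ w := by
  rw [← reflect_correlation_reflect_comm u (v ⋆ w), ← reflect_correlation_reflect,
    reflect_correlation_reflect_comm, correlation_left_comm]

theorem correlation_eq_sum (u v : G → ZMod 2) :
    u ⋆ v = ∑ i, u i • translate i v := by
  ext j
  simp only [correlation, Finset.sum_apply, Pi.smul_apply, smul_eq_mul, translate, add_comm]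

theorem IsOrthogonal.correlation_correlation_correlation [DecidableEq G] {v : G → ZMod 2}
    (hv : IsOrthogonal v) (a b : G → ZMod 2) : (a ⋆ v) ⋆ (b ⋆ v) = b ⋆ a := by
  rw [correlation_left_comm, hv.correlation_correlation]

theorem eq_of_correlation_eq {a b e g : G → ZMod 2} (ha : a ⋆ g = e) (hb : b ⋆ g = e)
    (hea : e ⋆ a = a) (heb : e ⋆ b = b) : a = b := by
  calc a = (b ⋆ g) ⋆ a := by rw [hb, hea]
    _ = (a ⋆ g) ⋆ b := correlation_left_comm b g a
    _ = b := by rw [ha, heb]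

theorem IsOrthogonal.correlation_eq_of_correlation_eq [DecidableEq G] {d e g h v : G → ZMod 2}
    (hv : IsOrthogonal v) (hde : reflect d = e) (hed : e ⋆ d = d) (hdh : d ⋆ h = h)
    (hhg : h ⋆ g = d) (hev : e ⋆ v = g) : d ⋆ v = h := by
  refine eq_of_correlation_eq (e := d) (g := g) ?_ hhg ?_ hdh
  · rw [← hev, hv.correlation_correlation_correlation, hed]
  · rw [correlation_correlation_right, hde, hed]

theorem exists_codeEquiv_of_correlation_eq [DecidableEq G] {a b v x : G → ZMod 2}
    (hv : IsOrthogonal v) (φ : G ≃+ G) (hab : b ∘ φ = a) {t : G}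
    (h : a ⋆ v = translate t (x ∘ φ)) :
    ∃ w, IsOrthogonal w ∧ CodeEquiv (hankelCode w) (hankelCode v) ∧ b ⋆ w = x := by
  obtain ⟨w, hw⟩ : ∃ w, w ∘ φ = translate (-t) v :=
    ⟨translate (-t) v ∘ φ.symm, by ext; simp⟩
  have hwv : CodeEquiv (hankelCode w) (hankelCode v) :=
    (codeEquiv_hankelCode_comp w φ).trans <| hw ▸ (codeEquiv_hankelCode_translate v (-t)).symm
  refine ⟨w, φ.surjective.injective_comp_right ?_, hwv, φ.surjective.injective_comp_right ?_⟩
  · change (w ⋆ w) ∘ φ = Pi.single 0 1 ∘ φ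
    rw [← comp_correlation_comp, hw, hv.translate]
    ext j
    simp [Pi.single_apply]
  · change (b ⋆ w) ∘ φ = x ∘ φ
    rw [← comp_correlation_comp, hab, hw, correlation_translate, h, ← translate_add,
      neg_add_cancel, translate_zero]

end Components

section Numbers

variable {n : ℕ}

theorem vec_zero : (vec 0 : Fin n → ZMod 2) = 0 := by
  ext i
  simp [vec]

theorem vec_xor (r s : ℕ) : (vec (r ^^^ s) : Fin n → ZMod 2) = vec r + vec s := by
  ext i
  rw [Pi.add_apply, vec, vec, vec, Nat.testBit_xor]
  cases r.testBit i <;> cases s.testBit i <;> decide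

theorem vec_eq_iff {r s : ℕ} :
    (vec r : Fin n → ZMod 2) = vec s ↔ r % 2 ^ n = s % 2 ^ n := by
  refine ⟨fun h => Nat.eq_of_testBit_eq fun i => ?_, fun h => funext fun i => ?_⟩
  · rw [Nat.testBit_mod_two_pow, Nat.testBit_mod_two_pow]
    by_cases hi : i < n
    · rw [Bool.eq_iff_iff.2 ((vec_ne_zero_iff (i := ⟨i, hi⟩)).symm.trans
        (h ▸ vec_ne_zero_iff (r := s)))]
    · simp [hi]
  · rw [vec, vec]
    have hbit := congrArg (Nat.testBit · i) h
    simp only [Nat.testBit_mod_two_pow, i.isLt, decide_true, Bool.true_and] at hbit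
    rw [hbit]

theorem vec_packWord_two (u : Fin n → ZMod 2) : vec (packWord 2 u) = u := by
  ext i
  have hdigit : packWord 2 u / 2 ^ (i : ℕ) % 2 = (u i).val :=
    packed_div_mod (fun j => ZMod.val_lt (u j)) i
  rw [vec, Nat.testBit_eq_decide_div_mod_eq, hdigit]
  generalize u i = c
  revert c
  decide

/-- The `n`-bit number whose word is `translate t (vec r)`. -/
def rotate (n t r : ℕ) : ℕ := (periodize n r >>> t) % 2 ^ n

/-- The `n`-bit number whose word is `vec r` composed with multiplication by `m`. -/
def scale (n m r : ℕ) : ℕ := packList 1 ((List.range n).filter fun i => r.testBit (i * m % n))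

variable [NeZero n]

theorem vec_rotate (t : Fin n) (r : ℕ) :
    (vec (rotate n t r) : Fin n → ZMod 2) = translate t (vec r) := by
  ext i
  rw [vec, translate, vec, rotate, Nat.testBit_mod_two_pow, Nat.testBit_shiftRight, add_comm i t,
    testBit_periodize, decide_eq_true i.isLt, Bool.true_and]

theorem val_nsmul_fin (m : ℕ) (i : Fin n) : ((m • i : Fin n) : ℕ) = i * m % n := by
  induction m with
  | zero => simp
  | succ m ih => rw [succ_nsmul, Fin.val_add, ih, Nat.mod_add_mod, mul_add_one]

theorem vec_scale {m : ℕ} (h : (Nat.card (Fin n)).Coprime m) (r : ℕ) :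
    (vec (scale n m r) : Fin n → ZMod 2) = vec r ∘ dilation h := by
  have hpack := packWord_indicator (n := n)
    (List.nodup_range.filter fun i => r.testBit (i * m % n))
    (fun i hi => List.mem_range.1 (List.mem_of_mem_filter hi)) 1
  rw [scale, ← hpack]
  refine (vec_packWord_two _).trans (funext fun i => ?_)
  rw [indicator, Function.comp_apply, dilation_apply, vec, val_nsmul_fin]
  simp

/-- Tests that `vec a ⋆ vec b = vec c`; valid if `n + 1 < 2 ^ k`. -/
def isCorrelation (n k a b c : ℕ) : Bool :=
  (packedCorrelation n k (packReflectVec n k a) (packVec n k b)).beq (packVec n k c)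

theorem isCorrelation_iff {k : ℕ} (hk : k ≠ 0) (hn : n + 1 < 2 ^ k) {a b c : ℕ} :
    isCorrelation n k a b c = true ↔ (vec a ⋆ vec b : Fin n → ZMod 2) = vec c := by
  rw [isCorrelation, Nat.beq_eq, ← packWord_reflect_vec, ← packWord_vec,
    packedCorrelation_packWord hk hn, ← packWord_vec,
    (packWord_injective (Nat.le_self_pow hk 2)).eq_iff]

end Numbers

section XorSums

/-- The numbers `a₁ ^^^ … ^^^ aₖ` with `aᵢ` in the `i`-th list. -/
def xorSums : List (List ℕ) → List ℕ
  | [] => [0]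
  | A :: L => A.flatMap fun a => (xorSums L).map (a ^^^ ·)

theorem mem_xorSums_cons {A : List ℕ} {L : List (List ℕ)} {z : ℕ} :
    z ∈ xorSums (A :: L) ↔ ∃ a ∈ A, ∃ b ∈ xorSums L, a ^^^ b = z := by
  simp only [xorSums, List.mem_flatMap, List.mem_map]

theorem xor_mem_xorSums {L : List (List ℕ)} (hL : ∀ A ∈ L, ∀ a ∈ A, ∀ b ∈ A, a ^^^ b ∈ A)
    {x y : ℕ} (hx : x ∈ xorSums L) (hy : y ∈ xorSums L) : x ^^^ y ∈ xorSums L := by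
  induction L generalizing x y with
  | nil =>
    rw [xorSums, List.mem_singleton] at *
    rw [hx, hy, Nat.xor_self]
  | cons A L ih =>
    obtain ⟨a, ha, b, hb, rfl⟩ := mem_xorSums_cons.1 hx
    obtain ⟨c, hc, d, hd, rfl⟩ := mem_xorSums_cons.1 hy
    refine mem_xorSums_cons.2 ⟨a ^^^ c, hL A List.mem_cons_self a ha c hc, b ^^^ d,
      ih (fun B hB => hL B (List.mem_cons_of_mem A hB)) hb hd, ?_⟩
    ac_rfl

/-- The sums of subfamilies of the first `d` rotations of `e`. -/
def cyclicSpan (n d e : ℕ) : List ℕ := xorSums ((List.range d).map fun i => [0, rotate n i e])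

variable {n d e : ℕ}

theorem xor_mem_cyclicSpan {x y : ℕ} (hx : x ∈ cyclicSpan n d e) (hy : y ∈ cyclicSpan n d e) :
    x ^^^ y ∈ cyclicSpan n d e := by
  refine xor_mem_xorSums (fun A hA a ha b hb => ?_) hx hy
  obtain ⟨i, -, rfl⟩ := List.mem_map.1 hA
  simp only [List.mem_cons, List.not_mem_nil, or_false] at ha hb ⊢
  rcases ha with rfl | rfl <;> rcases hb with rfl | rfl <;> simp

theorem zero_mem_cyclicSpan : 0 ∈ cyclicSpan n d e := by
  rw [cyclicSpan]
  induction List.range d with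
  | nil => exact List.mem_singleton_self 0
  | cons i L ih => exact mem_xorSums_cons.2 ⟨0, List.mem_cons_self, 0, ih, rfl⟩

variable [NeZero n]

theorem exists_mem_cyclicSpan (h : ∀ i < n, rotate n i e ∈ cyclicSpan n d e)
    (u : Fin n → ZMod 2) : ∃ z ∈ cyclicSpan n d e, u ⋆ vec e = vec z := by
  rw [correlation_eq_sum]
  refine Finset.sum_induction _ (fun w => ∃ z ∈ cyclicSpan n d e, w = vec z) ?_
    ⟨0, zero_mem_cyclicSpan, vec_zero.symm⟩ fun i _ => ?_
  · rintro _ _ ⟨x, hx, rfl⟩ ⟨y, hy, rfl⟩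
    exact ⟨x ^^^ y, xor_mem_cyclicSpan hx hy, (vec_xor x y).symm⟩
  · obtain hi | hi : u i = 0 ∨ u i = 1 := by
      generalize u i = c
      revert c
      decide
    · exact ⟨0, zero_mem_cyclicSpan, by rw [hi, zero_smul, vec_zero]⟩
    · exact ⟨_, h i i.isLt, by rw [hi, one_smul, vec_rotate]⟩

theorem exists_mem_xorSums {ι : Type*} {L : List ι} {A : ι → List ℕ} {e : ι → Fin n → ZMod 2}
    {v : Fin n → ZMod 2} (h : ∀ i ∈ L, ∃ a ∈ A i, e i ⋆ v = vec a) :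
    ∃ r ∈ xorSums (L.map A), (L.map e).sum ⋆ v = vec r := by
  induction L with
  | nil => exact ⟨0, List.mem_singleton_self 0, by rw [List.map_nil, List.sum_nil,
      zero_correlation, vec_zero]⟩
  | cons i L ih =>
    obtain ⟨a, ha, hav⟩ := h i List.mem_cons_self
    obtain ⟨r, hr, hrv⟩ := ih fun j hj => h j (List.mem_cons_of_mem i hj)
    refine ⟨a ^^^ r, mem_xorSums_cons.2 ⟨a, ha, r, hr, rfl⟩, ?_⟩
    rw [List.map_cons, List.sum_cons, correlation_add_left, hav, hrv, vec_xor]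

end XorSums

section Candidates

/-- The idempotents of `𝔽₂[ℤ/45]` that generate the minimal ideals `I` stable under reflection, as
pairs `(dim I, e)`; two minimal ideals of dimension 4 exchanged by reflection are taken together. -/
def idempotents : List (ℕ × ℕ) :=
  [(1, 35184372088831), (2, 30158033218998), (4, 34049392344030), (8, 29024127248790),
   (6, 4957484912712)]

/-- With its image `splitIdempotent'` under reflection, one of the two primitive idempotents that
generate ideals of dimension 12. -/
def splitIdempotent : ℕ := 5025248313856

/-- The reflection of `splitIdempotent`. -/
def splitIdempotent' : ℕ := 68870738504

/-- The components in the two ideals of dimension 12 of orthogonal words, one from each orbit under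
rotations and dilations. -/
def splitComponents : List (ℕ × ℕ) :=
  [(68870738504, 5025248313856), (232338075651, 8660533641102), (869354590221, 31533844063645),
   (1024246640655, 7145035871064), (1506371104791, 9672046364393), (2470620033063, 30596366459988)]

/-- The possible components, in the ideal of dimension `d` generated by `e`, of an orthogonal
word. -/
def unitaries (d e : ℕ) : List ℕ := (cyclicSpan 45 d e).filter fun z => isCorrelation 45 6 z z e

/-- Numbers of orthogonal words that meet every orbit under rotations and dilations. -/
def candidates : List ℕ :=
  xorSums ((splitComponents.map fun p => p.1 ^^^ p.2) ::
    idempotents.map fun p => unitaries p.1 p.2)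

theorem isCorrelation_iff_fin {a b c : ℕ} :
    isCorrelation 45 6 a b c = true ↔ (vec a ⋆ vec b : Fin 45 → ZMod 2) = vec c :=
  isCorrelation_iff (by norm_num) (by norm_num)

theorem isCorrelation_idempotents : ∀ p ∈ idempotents, isCorrelation 45 6 p.2 p.2 p.2 = true := by
  decide +kernel

theorem reflect_vec_idempotents :
    ∀ p ∈ idempotents, reflect (vec p.2 : Fin 45 → ZMod 2) = vec p.2 := by
  decide +kernel

theorem rotate_mem_cyclicSpan_idempotents :
    ∀ p ∈ idempotents, ∀ i < 45, rotate 45 i p.2 ∈ cyclicSpan 45 p.1 p.2 := by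
  decide +kernel

theorem exists_mem_unitaries {d e : ℕ} (he : (d, e) ∈ idempotents) {v : Fin 45 → ZMod 2}
    (hv : IsOrthogonal v) : ∃ z ∈ unitaries d e, vec e ⋆ v = vec z := by
  obtain ⟨z, hz, hvz⟩ :=
    exists_mem_cyclicSpan (rotate_mem_cyclicSpan_idempotents (d, e) he) (reflect v)
  rw [← reflect_vec_idempotents (d, e) he, reflect_correlation_reflect_comm] at hvz
  refine ⟨z, List.mem_filter.2 ⟨hz, isCorrelation_iff_fin.2 ?_⟩, hvz⟩
  rw [← hvz, hv.correlation_correlation_correlation]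
  exact isCorrelation_iff_fin.1 (isCorrelation_idempotents (d, e) he)

theorem reflect_vec_splitIdempotent :
    reflect (vec splitIdempotent : Fin 45 → ZMod 2) = vec splitIdempotent' := by
  decide +kernel

theorem rotate_mem_cyclicSpan_splitIdempotent' :
    ∀ i < 45, rotate 45 i splitIdempotent' ∈ cyclicSpan 45 12 splitIdempotent' := by
  decide +kernel

theorem exists_mem_cyclicSpan_splitIdempotent' (v : Fin 45 → ZMod 2) :
    ∃ z ∈ cyclicSpan 45 12 splitIdempotent', vec splitIdempotent ⋆ v = vec z := by
  obtain ⟨z, hz, hvz⟩ := exists_mem_cyclicSpan rotate_mem_cyclicSpan_splitIdempotent' (reflect v)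
  rw [← reflect_vec_splitIdempotent, reflect_correlation_reflect_comm] at hvz
  exact ⟨z, hz, hvz⟩

/-- The component of an orthogonal word in the ideal of `splitIdempotent'`, by the pair of
components `p` of its preimage under the dilation by `m`: this dilation either fixes the two ideals
or exchanges them. -/
def dilatedComponent (m : ℕ) (p : ℕ × ℕ) : ℕ :=
  scale 45 m (bif (scale 45 m splitIdempotent).beq splitIdempotent then p.1 else p.2)

/-- The images of `splitComponents` under dilations. -/
def dilatedComponents : List ℕ :=
  splitComponents.flatMap fun p =>
    ((List.range 45).filter fun m => (Nat.gcd 45 m).beq 1).map fun m => dilatedComponent m p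

theorem mem_dilatedComponents {y : ℕ} : y ∈ dilatedComponents ↔
    ∃ p ∈ splitComponents, ∃ m < 45, Nat.Coprime 45 m ∧ dilatedComponent m p = y := by
  simp only [dilatedComponents, List.mem_flatMap, List.mem_map, List.mem_filter, List.mem_range,
    Nat.beq_eq, Nat.coprime_iff_gcd_eq_one, and_assoc]

/-- The set of the residues modulo `4096` of the numbers in the list, as a bit mask. -/
def residueMask (L : List ℕ) : ℕ := (L.map fun z => 1 <<< (z % 4096)).foldr (· ||| ·) 0

theorem exists_mem_of_testBit_foldr {α : Type*} {L : List α} {f : α → ℕ} {j : ℕ}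
    (h : ((L.map f).foldr (· ||| ·) 0).testBit j = true) : ∃ x ∈ L, (f x).testBit j = true := by
  rw [testBit_foldr_lor, decide_eq_true_iff, List.countP_pos_iff] at h
  simpa only [List.mem_map, exists_exists_and_eq_and] using h

theorem exists_mem_of_testBit_residueMask {L : List ℕ} {j : ℕ}
    (h : (residueMask L).testBit j = true) : ∃ y ∈ L, y % 4096 = j := by
  obtain ⟨y, hy, hyj⟩ := exists_mem_of_testBit_foldr h
  rw [Nat.one_shiftLeft, Nat.testBit_two_pow, decide_eq_true_iff] at hyj
  exact ⟨y, hy, hyj⟩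

theorem dilatedComponents_cover :
    force ((dilatedComponents.map fun y =>
      residueMask ((List.range 45).map (rotate 45 · y))).foldr (· ||| ·) 0) (fun M =>
    (cyclicSpan 45 12 splitIdempotent').all fun z => z.beq 0 || M.testBit (z % 4096)) = true := by
  decide +kernel

theorem cyclicSpan_all_mod : ((cyclicSpan 45 12 splitIdempotent').all fun z =>
    z.beq 0 || !(z % 4096).beq 0) = true := by
  decide +kernel

theorem eq_of_mem_cyclicSpan_of_mod_eq {y z : ℕ} (hy : y ∈ cyclicSpan 45 12 splitIdempotent')
    (hz : z ∈ cyclicSpan 45 12 splitIdempotent') (h : y % 4096 = z % 4096) : y = z := by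
  have hxor : (y ^^^ z) % 4096 = 0 := by
    rw [show 4096 = 2 ^ 12 from rfl, Nat.xor_mod_two_pow, h, Nat.xor_self]
  simpa [hxor] using List.all_eq_true.1 cyclicSpan_all_mod _ (xor_mem_cyclicSpan hy hz)

theorem isCorrelation_dilatedComponents :
    (dilatedComponents.all fun y => isCorrelation 45 6 splitIdempotent y y) = true := by
  decide +kernel

theorem exists_rotate_of_mem_cyclicSpan {z : ℕ} (hz : z ∈ cyclicSpan 45 12 splitIdempotent')
    (hz₀ : z ≠ 0) : ∃ y ∈ dilatedComponents, ∃ t : Fin 45,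
      (vec z : Fin 45 → ZMod 2) = translate t (vec y) := by
  have hcover := dilatedComponents_cover
  rw [force_eq, List.all_eq_true] at hcover
  obtain ⟨y, hy, hyz⟩ := exists_mem_of_testBit_foldr (by simpa [hz₀] using hcover z hz)
  obtain ⟨x, hx, hxz⟩ := exists_mem_of_testBit_residueMask hyz
  obtain ⟨t, ht, rfl⟩ := List.mem_map.1 hx
  have hrotate := vec_rotate ⟨t, List.mem_range.1 ht⟩ y
  obtain ⟨z', hz', hyz'⟩ := exists_mem_cyclicSpan_splitIdempotent' (vec (rotate 45 t y))
  have hfix := isCorrelation_iff_fin.1 (List.all_eq_true.1 isCorrelation_dilatedComponents y hy)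
  rw [hrotate, correlation_translate, hfix, ← hrotate, vec_eq_iff] at hyz'
  have hmod : z' % 4096 = z % 4096 := by
    rw [← hxz, ← Nat.mod_mod_of_dvd z' (show 4096 ∣ 2 ^ 45 by norm_num), ← hyz',
      Nat.mod_mod_of_dvd _ (by norm_num)]
  refine ⟨y, hy, ⟨t, List.mem_range.1 ht⟩, ?_⟩
  rw [← eq_of_mem_cyclicSpan_of_mod_eq hz' hz hmod, ← hrotate, vec_eq_iff, hyz']

theorem isCorrelation_splitIdempotents :
    isCorrelation 45 6 splitIdempotent splitIdempotent' splitIdempotent' = true ∧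
      isCorrelation 45 6 splitIdempotent' splitIdempotent splitIdempotent = true := by
  decide +kernel

theorem isCorrelation_splitComponents : ∀ p ∈ splitComponents,
    (isCorrelation 45 6 splitIdempotent p.1 p.1 = true ∧
      isCorrelation 45 6 p.1 p.2 splitIdempotent = true) ∧
    isCorrelation 45 6 splitIdempotent' p.2 p.2 = true ∧
      isCorrelation 45 6 p.2 p.1 splitIdempotent' = true := by
  decide +kernel

theorem scale_splitIdempotent : ∀ m < 45, Nat.Coprime 45 m →
    scale 45 m splitIdempotent = splitIdempotent ∨
      scale 45 m splitIdempotent' = splitIdempotent := by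
  decide +kernel

theorem correlation_splitIdempotent'_eq_iff {v : Fin 45 → ZMod 2} (hv : IsOrthogonal v)
    {p : ℕ × ℕ} (hp : p ∈ splitComponents) :
    vec splitIdempotent ⋆ v = vec p.1 ↔ vec splitIdempotent' ⋆ v = vec p.2 := by
  obtain ⟨hleft, hright⟩ := isCorrelation_splitIdempotents
  obtain ⟨⟨hfst, hfst_snd⟩, hsnd, hsnd_fst⟩ := isCorrelation_splitComponents p hp
  simp only [isCorrelation_iff_fin] at *
  refine ⟨hv.correlation_eq_of_correlation_eq ?_ hleft hsnd hsnd_fst,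
    hv.correlation_eq_of_correlation_eq reflect_vec_splitIdempotent hright hfst hfst_snd⟩
  rw [← reflect_vec_splitIdempotent, reflect_reflect]

theorem exists_codeEquiv_of_splitComponent {v : Fin 45 → ZMod 2} (hv : IsOrthogonal v) :
    ∃ p ∈ splitComponents, ∃ w : Fin 45 → ZMod 2, IsOrthogonal w ∧
      CodeEquiv (hankelCode w) (hankelCode v) ∧ vec splitIdempotent ⋆ w = vec p.1 := by
  obtain ⟨z, hz, hvz⟩ := exists_mem_cyclicSpan_splitIdempotent' v
  have hz₀ : z ≠ 0 := by
    rintro rfl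
    have hzero := hv.correlation_correlation_correlation (vec splitIdempotent)
      (vec splitIdempotent')
    rw [hvz, vec_zero, zero_correlation,
      isCorrelation_iff_fin.1 isCorrelation_splitIdempotents.2, ← vec_zero, vec_eq_iff] at hzero
    exact absurd hzero (by decide +kernel)
  obtain ⟨y, hy, t, hzy⟩ := exists_rotate_of_mem_cyclicSpan hz hz₀
  obtain ⟨p, hp, m, hm, hcop, rfl⟩ := mem_dilatedComponents.1 hy
  have hcard : (Nat.card (Fin 45)).Coprime m := by rwa [Nat.card_fin]
  refine ⟨p, hp, ?_⟩
  rw [hzy, dilatedComponent, vec_scale hcard] at hvz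
  cases hbeq : (scale 45 m splitIdempotent).beq splitIdempotent
  · have hscale := (scale_splitIdempotent m hm hcop).resolve_left fun h => by simp [h] at hbeq
    rw [hbeq, cond_false] at hvz
    obtain ⟨w, hw, hwv, hsnd⟩ := exists_codeEquiv_of_correlation_eq hv (dilation hcard)
      (by rw [← vec_scale, hscale]) hvz
    exact ⟨w, hw, hwv, (correlation_splitIdempotent'_eq_iff hw hp).2 hsnd⟩
  · rw [hbeq, cond_true] at hvz
    exact exists_codeEquiv_of_correlation_eq hv (dilation hcard)
      (by rw [← vec_scale, Nat.eq_of_beq_eq_true hbeq]) hvz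

theorem sum_vec_idempotents : (vec splitIdempotent + vec splitIdempotent' +
    (idempotents.map fun p => vec p.2).sum : Fin 45 → ZMod 2) = Pi.single 0 1 := by
  decide +kernel

theorem exists_mem_candidates {v : Fin 45 → ZMod 2} (hv : IsOrthogonal v) :
    ∃ r ∈ candidates, CodeEquiv (hankelCode (vec r : Fin 45 → ZMod 2)) (hankelCode v) := by
  obtain ⟨p, hp, w, hw, hwv, hfst⟩ := exists_codeEquiv_of_splitComponent hv
  have hsnd := (correlation_splitIdempotent'_eq_iff hw hp).1 hfst
  obtain ⟨r, hr, hrw⟩ := exists_mem_xorSums fun (q : ℕ × ℕ) hq => exists_mem_unitaries hq hw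
  refine ⟨p.1 ^^^ p.2 ^^^ r,
    mem_xorSums_cons.2 ⟨_, List.mem_map_of_mem hp, r, hr, rfl⟩, ?_⟩
  have hsum : w = vec (p.1 ^^^ p.2 ^^^ r) := by
    calc w = Pi.single 0 1 ⋆ w := by rw [single_correlation, translate_zero]
      _ = vec (p.1 ^^^ p.2 ^^^ r) := by
        rw [← sum_vec_idempotents, correlation_add_left, correlation_add_left, hfst, hsnd, hrw,
          vec_xor, vec_xor]
  rwa [← hsum]

end Candidates

section Strides

variable {n k : ℕ}

/-- The number of `l * n` bits made of `l` copies of the `n` bits of `r`. -/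
def repeatBits (l n r : ℕ) : ℕ := r % 1 <<< n * repunit l n

theorem packed_digits (b w : ℕ) : packed b (fun j : Fin n => w / b ^ (j : ℕ) % b) = w % b ^ n := by
  induction n generalizing w with
  | zero => simp [packed, Nat.mod_one]
  | succ n ih =>
    rw [packed_succ, pow_succ', Nat.mod_mul, ← ih (w / b), add_comm]
    simp [Fin.tail_def, pow_succ', Nat.div_div_eq_div_mul]

theorem and_repunit_mod (hk : k ≠ 0) (hn : n + 1 < 2 ^ k) (w : ℕ) :
    (w &&& repunit n k) % (2 ^ k - 1) = Fintype.card {j : Fin n // w.testBit (k * j)} := by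
  have hlt : packed (2 ^ k) (1 : Fin n → ℕ) < 2 ^ (k * n) := by
    rw [pow_mul]
    exact packed_lt fun _ => Nat.one_lt_two_pow hk
  have hbit (j : Fin n) :
      w / (2 ^ k) ^ (j : ℕ) % 2 ^ k % 2 = if w.testBit (k * j) then 1 else 0 := by
    rw [Nat.mod_mod_of_dvd _ (dvd_pow_self 2 hk), Nat.testBit_eq_decide_div_mod_eq, pow_mul]
    obtain h | h := Nat.mod_two_eq_zero_or_one (w / (2 ^ k) ^ (j : ℕ)) <;> simp [h]
  have hcard : Fintype.card {j : Fin n // w.testBit (k * j)} < 2 ^ k - 1 := by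
    have := Fintype.card_subtype_le fun j : Fin n => w.testBit (k * j) = true
    rw [Fintype.card_fin] at this
    omega
  rw [← packed_one_eq_repunit hk, ← Nat.mod_eq_of_lt (Nat.and_lt_two_pow w hlt),
    Nat.and_mod_two_pow, Nat.mod_eq_of_lt hlt, pow_mul, ← packed_digits,
    packed_and_packed_one k hk fun _ => Nat.mod_lt _ (by positivity)]
  simp only [hbit]
  rw [packed_modEq_sum (by positivity), Finset.sum_boole, Nat.cast_id, ← Fintype.card_subtype,
    Nat.mod_eq_of_lt hcard]

theorem testBit_repeatBits [NeZero n] (l r : ℕ) {i : ℕ} (hi : i < n * l) :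
    (repeatBits l n r).testBit i = r.testBit (i % n) := by
  have hdigit := packed_div_mod (b := 2 ^ n) (c := fun _ : Fin l => r % 2 ^ n)
    (fun _ => Nat.mod_lt _ (by positivity)) ⟨i / n, Nat.div_lt_of_lt_mul hi⟩
  have hpacked : packed (2 ^ n) (fun _ : Fin l => r % 2 ^ n) = repeatBits l n r := by
    rw [repeatBits, Nat.one_shiftLeft, ← packed_one_eq_repunit (NeZero.ne n)]
    simp [packed, Finset.mul_sum]
  rw [hpacked, ← pow_mul] at hdigit
  have hbit := congrArg (Nat.testBit · (i % n)) hdigit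
  simpa [Nat.testBit_div_two_pow, Nat.mod_lt _ (NeZero.pos n), Nat.mod_add_div] using hbit

/-- The sum of the shifts of `R` by the elements of `S`. -/
def shiftSum (R : ℕ) (S : List ℕ) : ℕ := S.foldr (fun i w => R >>> i ^^^ w) 0

theorem indicator_cons {i : ℕ} {S : List ℕ} (hi : i < n) (hiS : i ∉ S) :
    (indicator (i :: S) : Fin n → ZMod 2) = Pi.single ⟨i, hi⟩ 1 + indicator S := by
  ext j
  by_cases hj : j = ⟨i, hi⟩
  · simp [indicator, hj, hiS]
  · simp [indicator, hj, mt (Fin.ext (b := ⟨i, hi⟩)) hj]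

theorem testBit_shiftSum [NeZero n] {l j : ℕ} {S : List ℕ} (hS : S.Nodup) (hlt : ∀ i ∈ S, i < n)
    (r : ℕ) (hj : n + j ≤ n * l) : (shiftSum (repeatBits l n r) S).testBit j ↔
      (indicator S ⋆ vec r : Fin n → ZMod 2) (Fin.ofNat n j) ≠ 0 := by
  induction S with
  | nil =>
    have hzero : (indicator [] : Fin n → ZMod 2) = 0 := by
      ext
      simp [indicator]
    simp [shiftSum, hzero, zero_correlation]
  | cons i S ih =>
    have hi := hlt i List.mem_cons_self
    obtain ⟨hiS, hS⟩ := List.nodup_cons.1 hS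
    have hbit : (repeatBits l n r).testBit (i + j) ↔
        translate (⟨i, hi⟩ : Fin n) (vec r) (Fin.ofNat n j) ≠ 0 := by
      rw [testBit_repeatBits l r (by omega), translate, vec_ne_zero_iff, Fin.val_add]
      simp [add_comm]
    have hne (b c : Bool) (x y : ZMod 2) (hx : b ↔ x ≠ 0) (hy : c ↔ y ≠ 0) :
        (b ^^ c) ↔ x + y ≠ 0 := by
      revert b c x y
      decide
    rw [indicator_cons hi hiS, correlation_add_left, single_correlation]
    simp only [shiftSum, List.foldr_cons, Nat.testBit_xor, Nat.testBit_shiftRight, Pi.add_apply]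
    exact hne _ _ _ _ hbit (ih hS fun i hi => hlt i (List.mem_cons_of_mem _ hi))

theorem hammingNorm_indicator_correlation_vec [NeZero n] {l : ℕ} {S : List ℕ}
    (hkn : n.Coprime k) (hk : k ≠ 0) (hn : n + 1 < 2 ^ k) (hl : k < l)
    (hS : S.Nodup) (hlt : ∀ i ∈ S, i < n) (r : ℕ) :
    hammingNorm (indicator S ⋆ vec r : Fin n → ZMod 2) =
      (shiftSum (repeatBits l n r) S &&& repunit n k) % (2 ^ k - 1) := by
  have hcard : (Nat.card (Fin n)).Coprime k := by rwa [Nat.card_fin]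
  rw [and_repunit_mod hk hn, hammingNorm, ← Fintype.card_subtype]
  refine Fintype.card_congr ((dilation hcard).toEquiv.subtypeEquiv fun j => ?_).symm
  have hj : n + k * j ≤ n * l := by nlinarith [j.isLt]
  rw [testBit_shiftSum hS hlt r hj]
  suffices h : Fin.ofNat n (k * j) = k • j from by rw [h]; rfl
  ext
  rw [val_nsmul_fin, mul_comm, Fin.val_ofNat]

end Strides

section Coverage

/-- Sets that support a word `u` with `wordWeight v u < 14` for most of the `candidates` `v`. -/
def commonSupports : List (List ℕ) :=
  [[0, 5, 15, 20, 30, 35], [0, 9, 18, 27, 36], [0, 3, 15, 18, 30, 33], [0, 3, 6, 15, 18, 21], [0,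
   8, 11, 15, 23, 26], [0, 4, 14, 15, 19, 29], [0, 2, 8, 17, 23, 30], [0, 4, 10, 19, 25, 30], [0,
   5, 14, 20, 29, 30], [0, 1, 4, 15, 19, 31], [0, 1, 5, 15, 20, 31], [0, 5, 15, 17, 20, 32], [0,
   8, 17, 23, 30, 32], [0, 2, 6, 11, 15, 27]]

set_option maxRecDepth 100000 in
/-- One entry for each of the `candidates` not covered by `commonSupports`, in their order: the
support of a word `u` with `wordWeight v u < 14`, or `[]` if the code is equivalent to one of
the `representatives`. -/
def certificates : List (List ℕ) :=
  [[], [], [], [0, 3, 8, 10, 16, 19], [], [0, 2, 16, 17, 22, 29], [], [0, 7, 11, 12, 19], [0, 7,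
   8, 12, 14, 28], [], [0, 2, 14, 26, 28, 30], [0, 6, 9, 10, 12, 23], [], [], [], [0, 5, 9, 12,
   19, 22], [], [], [], [0, 1, 3, 5, 8, 16], [0, 2, 8, 9, 12], [0, 11, 12, 24, 26, 29], [0, 11,
   19, 20, 21, 24], [], [], [], [0, 2, 3, 12, 23, 30], [0, 3, 6, 11, 16], [0, 2, 14, 20, 26, 29],
   [0, 1, 21, 24], [0, 6, 8, 16, 20, 25], [0, 5, 10, 18, 22, 23], [0, 3, 9, 17, 28, 29], [], [0,
   14, 21, 27], [], [0, 3, 5, 10, 14, 22], [0, 2, 6, 18, 23, 25], [], [], [0, 2, 8, 12, 25, 28],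
   [0, 2, 3, 14, 21, 22], [0, 13, 16, 17, 19], [0, 1, 9, 12, 22], [0, 14, 15, 16, 20, 23], [],
   [0, 6, 10, 15, 24, 34], [], [0, 10, 15, 17, 19, 28], [], [0, 5, 6, 7, 8, 21], [0, 4, 10, 11,
   12, 23], [0, 4, 5, 16, 17, 19], [], [0, 12, 13, 14, 18, 19], [0, 2, 12, 15, 18, 31], [0, 3, 7,
   17, 18], [], [0, 7, 13, 21, 24, 26], [], [], [0, 9, 10, 16, 20, 29], [], [], [0, 8, 15, 16,
   27, 28], [], [0, 1, 7, 19, 25, 27], [0, 1, 7, 19, 25, 27], [0, 3, 10, 11, 19, 26], [0, 2, 18,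
   24, 26], [0, 1, 3, 9, 15, 17], [0, 1, 7, 19, 25, 27], [], [0, 15, 18, 22, 27, 28], [0, 5, 15,
   24, 29, 31], [], [0, 12, 13, 24, 26], [0, 6, 8, 17, 21, 31], [0, 1, 4, 15, 21, 25], [0, 1, 4,
   15, 21, 25], [0, 3, 6, 7, 8, 23], [0, 1, 4, 15, 21, 25], [0, 1, 4, 15, 21, 25], [0, 1, 4, 15,
   21, 25], [0, 5, 11, 17], [0, 8, 19, 21, 28, 29], [], [], [0, 2, 3, 12, 25, 30], [0, 1, 2, 10,
   14, 24], [], [], [0, 5, 16, 20, 28], [0, 7, 10, 11, 15, 20], [0, 5, 12, 18, 20, 28], [0, 1, 5,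
   18, 20, 21], [], [], [0, 5, 10, 11, 13, 21], [0, 1, 4, 8, 13, 15], [0, 11, 19, 20, 22, 27],
   [0, 6, 10, 21, 29], [], [0, 2, 4, 15, 23, 33], [0, 4, 16, 20, 22], [], [0, 3, 10, 15, 20, 31],
   [], [], [], [0, 8, 10, 23, 26], [0, 5, 9, 12, 19, 22], [0, 13, 22, 23], [0, 2, 3, 14, 18, 28],
   [0, 11, 17, 19, 29], [0, 11, 17, 28], [0, 9, 19, 20, 21, 26], [0, 16, 19, 23, 28], [0, 4, 16,
   28], [], [0, 4, 12, 20, 27], [0, 3, 4, 6, 8, 12], [0, 6, 7, 12, 19, 22], [0, 6, 23, 25], [0,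
   12, 13, 24, 26], [0, 6, 7, 12, 19, 22], [0, 2, 3, 4, 6, 17], [0, 4, 13, 20, 21, 26], [0, 6, 7,
   10, 20, 32], [0, 2, 5, 8, 16, 20], [0, 1, 5, 18, 20, 25], [0, 13, 21, 31], [0, 13, 16, 17,
   19], [0, 1, 12, 14, 21, 26], [0, 5, 19, 27, 28, 29], [], [0, 8, 10, 17, 19, 24], [], [0, 3,
   11, 15, 17, 23], [0, 11, 12, 13, 15, 20], [0, 3, 11, 15, 17, 23], [0, 3, 11, 15, 17, 23], [0,
   3, 11, 15, 17, 23], [0, 7, 18, 19, 24], [], [], [0, 6, 21, 22, 26, 29], [], [0, 4, 5, 17, 21,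
   26], [0, 5, 10, 17, 24, 28], [0, 6, 23, 26, 27], [0, 1, 2, 3, 12, 13], [0, 3, 5, 6, 7, 16],
   [0, 10, 12, 18, 20, 24], [0, 9, 18, 19, 21, 24], [0, 10, 11, 12, 16, 19], [0, 2, 4, 14, 21,
   24], [0, 11, 21, 22, 23, 26], [], [0, 5, 9, 12, 19, 22], [0, 3, 11, 18, 19, 25], [], [0, 10,
   13, 14, 18, 21], [0, 1, 3, 5, 8, 16], [0, 6], [], [0, 11, 19, 20, 21, 24], [], [0, 5, 10, 14,
   27, 28], [0, 7, 19, 20, 21, 24], [0, 5, 10, 14, 27, 28], [0, 8, 10, 22], [0, 3, 4, 6, 15, 24],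
   [0, 9, 14, 27, 31], [], [0, 1, 4, 6, 14, 29], [], [], [0, 7, 11, 22], [0, 2, 9, 13, 17, 25],
   [0, 13, 16, 17, 19], [0, 5, 6, 7, 12, 23], [0, 6, 16, 17, 20], [0, 7, 11, 12, 19, 21], [], [0,
   4, 6, 16, 21, 23], [0, 6, 8, 10, 13, 23], [], [0, 8, 19, 25, 27, 30], [0, 6, 7, 8, 16, 26],
   [], [], [0, 6, 7, 19, 24, 29], [], [0, 3, 4, 10, 14, 16], [0, 11, 12, 18, 22, 25], [], [], [0,
   15, 16, 17, 20, 25], [0, 2, 8, 12, 14, 16], [], [], [], [0, 4, 11, 22, 28, 31], [], [0, 4, 10,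
   11, 23, 28], [0, 3, 4, 13, 24, 26], [0, 1, 5, 11, 19, 30], [0, 2, 3, 6, 20, 24], [0, 8, 10,
   13, 21, 22], [0, 3, 7, 26], [0, 1, 10, 20, 27, 29], [0, 5, 10, 12, 22, 26], [0, 8, 15, 16,
   18], [0, 1, 10, 20, 27, 29], [0, 9, 10, 22], [], [0, 1, 13, 15], [0, 9, 19, 20, 21, 26], [],
   [0, 11, 19, 20, 21, 24], [], [0, 7, 11, 12, 20], [0, 8, 13, 19, 24, 26], [0, 2, 3, 10, 13,
   20], [0, 2, 18, 24, 26], [0, 11, 14, 21, 23, 29], [0, 1, 7, 14, 15, 17], [], [0, 2, 5, 12, 27,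
   28], [0, 6, 7, 10, 13, 28], [0, 5, 8, 11, 14, 18], [0, 1, 10, 13, 23], [], [], [], [0, 6, 11,
   13, 16, 19], [0, 17], [0, 1, 2, 18, 22, 29], [], [0, 1, 5, 10, 21, 32], [0, 7, 10, 13, 14],
   [], [0, 2, 4, 19, 20, 27], [0, 9, 14, 19, 24, 26], [], [0, 7, 8, 12, 14, 28], [], [], [], [0,
   1, 13, 14, 17, 25], [], [], [], [0, 4, 8, 16, 17, 23], [0, 2, 6, 14, 25], [], [], [], [], [0,
   1, 16, 19, 28], [0, 8, 19, 25, 31], [0, 2, 12, 18, 21, 29], [0, 2, 4, 15, 24], [0, 2, 12, 18,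
   21, 29], [0, 7, 9, 17, 18, 29], [0, 1, 13, 19, 23, 29], [0, 3, 6, 11, 16], [], [0, 7, 18, 21,
   33], [0, 13, 16, 17, 19], [0, 4, 16, 19], [0, 8, 13, 19, 21, 33], [0, 5, 13, 22, 31, 33], [0,
   2, 4, 11, 20, 21], [0, 10, 11, 16, 18, 27], [0, 3, 7, 17, 18], [], [0, 4, 6, 12, 26, 29], [],
   [0, 7, 13, 17, 20], [], [0, 6, 7, 14, 24, 28], [0, 12], [0, 3, 8, 10, 14, 17], [0, 14, 16, 17,
   20, 23], [], [0, 1, 9, 13, 20, 27], [0, 4, 14, 24, 27, 29], [0, 1, 4, 10, 16, 18], [0, 1, 7,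
   19, 25, 27], [0, 3, 10, 11, 19, 26], [0, 3, 6, 9, 13, 18], [0, 1, 7, 19, 25, 27], [0, 14, 17,
   22, 26], [0, 13, 16, 17, 19], [0, 2, 12, 19, 20, 24], [], [0, 13, 21, 23, 26, 27], [0, 8, 14,
   17, 19, 29], [], [0, 5, 11, 13, 14, 19], [0, 1, 11, 15, 23, 28], [], [], [0, 11, 12, 16, 17],
   [0, 1, 13, 15, 20], [0, 1, 2, 4, 7, 16], [0, 1, 8, 17, 21], [], [], [], [0, 10, 11, 12, 13,
   21], [0, 2, 4, 19, 20, 27], [0, 1, 4, 20, 26], [], [0, 5, 10, 11, 13, 21], [0, 9, 14, 27], [],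
   [0, 7, 13, 14, 22, 26], [], [], [], [0, 2, 7, 13, 17, 27], [0, 2, 3, 13, 24, 32], [], [0, 8,
   10, 23, 26], [0, 1, 2, 21], [0, 4, 16, 18, 19, 24], [0, 8, 14, 18, 20, 22], [0, 13, 16, 17,
   19], [0, 2, 12, 19, 20, 24], [], [], [], [], [], [0, 1, 11, 15, 23, 28], [], [0, 1, 4, 6, 20,
   27], [0, 5, 11, 12, 21, 22], [0, 1, 7, 11, 16, 24], [], [0, 1, 3, 9, 15, 19], [0, 1, 14, 29],
   [], [], [0, 10, 12, 20, 23, 28], [0, 3, 20, 21, 25], [0, 3, 5, 19, 24, 28], [], [], [0, 5, 14,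
   16, 21, 25], [0, 7, 8, 18, 20, 23], [0, 6, 13, 15, 17, 29], [], [], [0, 2, 7, 11, 13, 26], [0,
   9, 10, 12, 25, 31], [0, 5, 6, 10, 13, 14], [0, 3, 6, 17, 21], [], [0, 9, 15, 23, 25, 27], [0,
   5, 6, 14, 17, 21], [], [0, 7, 10, 14, 15], [0, 5, 10, 14, 27, 28], [0, 10, 12, 18, 26], [0, 5,
   10, 14, 27, 28], [0, 9, 12, 15, 16], [0, 20, 21, 24], [0, 2, 12, 19, 20, 24], [0, 3, 6, 14,
   16, 23], [0, 4, 15, 17, 25, 28], [0, 3, 14, 19, 25, 29], [0, 6, 7, 11, 21, 28], [0, 2, 6, 9,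
   16], [0, 1, 11, 15, 23, 28], [0, 2, 13, 20, 24], [], [0, 5, 11, 12, 21, 22], [0, 5, 18, 27],
   [0, 6, 7, 8, 16, 26], [0, 1, 7, 13, 24, 29], [0, 3, 8, 10, 23, 31], [0, 1, 14, 15, 21], [],
   [], [0, 2, 4, 19, 20, 27], [0, 3, 5, 19, 24, 28], [0, 15, 16, 17, 20, 25], [], [], [], [0, 5,
   7, 8, 11, 12], [0, 1, 10, 20, 27, 29], [0, 5, 10, 12, 22, 26], [0, 8, 15, 16, 18], [0, 1, 10,
   20, 27, 29], [0, 1, 9, 18, 20], [0, 15, 17, 22, 23, 28], [0, 9, 21, 24, 29], [0, 1, 2, 16, 22,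
   23], [], [], [0, 1, 4, 17, 21, 26], [0, 2, 3, 10, 13, 20], [0, 3, 5, 6, 8, 21], [0, 4, 5, 6,
   8, 26], [], [0, 4, 6, 10, 11, 20], [], [0, 1, 5, 6, 10, 23], [0, 13, 15, 20, 25, 29], [0, 3,
   11, 20, 23, 33], [0, 5, 11, 12, 21, 22], [], [], [0, 5, 15, 19, 21, 24], [0, 2, 3, 7, 19, 26],
   [0, 1, 3, 7, 17, 28], [0, 2, 4, 19, 20, 27], [], [0, 10, 11, 13, 18, 24], [0, 4, 11, 21, 29,
   34], [], [0, 3, 7, 11, 17, 28], [0, 3, 15, 19, 20, 29], [0, 4, 5, 10, 17, 20], [], [], [], [0,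
   8, 13, 19, 23, 33], [0, 11, 19, 25, 33], [], [0, 1, 2, 6, 10, 12], [0, 10, 19, 21, 22, 24],
   [0, 3, 6, 20, 21, 29], [0, 6, 7, 15, 18, 28], [0, 3, 11, 19, 22, 28], [0, 2, 12, 18, 21, 29],
   [0, 2, 4, 15, 24], [0, 5, 8, 11, 12, 13], [0, 8, 13, 21, 25, 26], [0, 2, 15, 21, 25, 26], [0,
   5, 10, 18, 22, 23], [0, 2, 3, 6, 14, 24], [0, 4, 8, 19, 21, 22], [0, 5, 6, 18, 25], [], [0, 3,
   14, 19, 20, 25], [0, 10, 15, 21, 28, 34], [0, 6, 13, 15, 20, 23], [0, 2, 8, 12, 25, 28], [],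
   [0, 8, 19, 20, 27, 30], [], [0, 3, 17, 21, 23, 28], [], [0, 3, 4, 11, 25, 28], [0, 4, 7, 10,
   21, 32], [0, 12], [0, 2, 14, 21, 29, 31], [], [], [0, 15, 19, 20, 22, 25], [0, 4, 6, 14, 16,
   17], [0, 5, 10, 20, 21, 22], [0, 2, 12, 17, 25, 31], [], [0, 6, 10, 20, 22, 23], [0, 5, 8, 15,
   25, 26], [0, 1, 4, 10, 16, 18], [0, 12, 24, 25, 32], [0, 4, 10, 13, 22, 26], [0, 15, 18, 22,
   27, 28], [0, 8, 11, 12, 21, 24], [0, 2, 5, 22, 24, 25], [0, 12, 13, 24, 26], [], [0, 6, 9, 13,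
   24, 31], [0, 11, 18, 22, 25, 28], [0, 1, 7, 18], [0, 2, 8, 12, 25, 28], [0, 6, 9, 13, 24, 31],
   [0, 11, 15, 18, 22, 23], [], [0, 10, 11, 15, 19, 28], [], [], [0, 1, 9, 17, 19, 32], [0, 7,
   11, 16, 19, 22], [0, 2, 10, 11, 18, 22], [0, 3, 6, 10, 17, 23], [0, 3, 5, 11, 16, 27], [0, 14,
   15, 22, 24], [0, 2, 7, 13, 17, 27], [0, 8, 15, 22, 25, 34], [], [], [0, 5, 11, 19, 21, 33],
   [], [0, 14, 16, 30], [], [], [0, 1, 2, 6, 10, 12], [], [], [0, 3, 7, 8, 25, 26], [0, 2, 4, 8,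
   16, 23], [0, 7, 9, 13, 16, 19], [0, 6, 11, 17, 24, 33], [0, 2, 5, 8, 23, 27], [0, 12, 13, 24,
   26], [0, 11, 20, 29], [0, 6, 9, 10, 11, 22], [0, 3, 16, 20, 22, 29], [0, 6, 7, 16, 19, 21],
   [0, 1, 5, 18, 20, 25], [0, 13, 21, 31], [], [0, 8, 24, 25], [], [], [0, 2, 4, 17, 18, 27], [],
   [0, 1, 4, 8], [], [], [], [], [], [0, 2, 6, 15, 16], [], [0, 9, 10, 16, 17], [0, 3, 8, 17, 19,
   23], [0, 5, 12, 15, 19, 32], [], [0, 2, 3, 4, 15, 22], [], [0, 11, 17, 25, 29, 30], [0, 2, 3,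
   11, 17, 20], [0, 12, 21, 28, 31], [], [], [0, 1, 2, 6, 10, 12], [], [], [], [], [0, 7, 12, 23,
   25, 26], [], [], [0, 1, 6, 13, 19, 22], [0, 3, 8, 10, 21], [0, 1, 4, 6, 14, 29], [], [0, 8,
   13, 24, 33], [0, 6, 16, 23, 33], [0, 10, 23, 25, 27], [0, 1, 12, 19, 25, 26], [], [0, 3, 7,
   24], [0, 1, 5, 9, 11, 27], [], [], [0, 2, 4, 19, 20, 27], [0, 4, 16, 20, 26, 31], [], [], [],
   [0, 14, 16, 17, 19, 26], [], [], [0, 4, 11, 15, 20], [], [], [], [0, 2, 3, 6, 20, 24], [], [0,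
   2, 8, 11], [0, 11, 14, 18, 19], [0, 10, 11, 20, 25, 32], [], [], [0, 9, 10, 11, 13, 20], [],
   [], [0, 3, 6, 9, 11, 18], [], [0, 15, 18, 22, 27, 28], [], [0, 2, 5, 8, 23, 27], [0, 8, 10,
   19], [], [], [0, 13, 15, 20, 25, 29], [], [0, 4, 19, 26], [0, 1, 4, 6, 11, 26], [0, 15, 17,
   28], [], [], [], [0, 3, 9, 16, 17], [0, 1, 8, 10, 22, 29], [], [], [0, 7, 14, 17, 25, 34], [],
   [0, 8, 13, 16, 24, 27], [0, 5, 9, 17, 19], [], [], [], [], [0, 13, 21, 26, 28, 29], [], [0, 9,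
   10, 14, 23, 34], [0, 2, 11, 19, 23], [], [], [], [0, 3, 5, 15, 23, 29], [0, 15, 19, 20, 23,
   26], [], [], [], [], [], [0, 6, 11, 15, 24, 29], [0, 8, 10, 11, 13, 17], [0, 2, 13, 21, 26],
   [0, 3, 4, 16, 18, 24], [0, 2, 9, 17, 25, 34], [0, 6, 8, 14, 19], [], [0, 5, 18, 22, 24, 29],
   [0, 3, 9, 10, 15, 28], [], [], [0, 2, 3, 4, 13], [0, 6, 20, 24], [0, 8, 11, 15, 25, 27], [0,
   3, 9, 16, 17], [], [0, 8, 11, 17, 22], [0, 12, 17, 21, 25, 32], [0, 4, 16, 26, 31, 32], [0, 1,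
   5, 8, 18, 28], [0, 3, 7, 23], [0, 4, 16, 19, 20], [0, 1, 16, 18, 22], [0, 6, 8, 16], [0, 1,
   16, 18, 22], [0, 6, 19, 21, 26, 29], [], [0, 2, 3, 6, 13, 22], [], [0, 2, 8, 13, 14, 22], [0,
   7, 8, 13, 17, 21], [], [0, 5, 19, 25, 26, 27], [0, 3, 14, 25, 29, 31], [0, 4, 9, 19, 25, 32],
   [0, 9, 12, 13, 16, 28], [0, 5, 6, 14, 21, 31], [], [0, 8, 15, 30], [0, 2, 9, 17, 25, 34], [0,
   8, 12, 17, 27, 33], [0, 5, 7, 16, 19, 26], [0, 9, 12, 22, 28, 34], [0, 6, 15, 23], [], [], [],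
   [0, 10, 12, 25, 26, 28], [0, 10, 16, 18, 26], [0, 7, 10, 18, 20, 29], [], [], [0, 12, 19, 20,
   23, 30], [0, 7, 17, 18, 28], [0, 2, 12, 13, 22, 29], [0, 4, 6, 14, 23, 28], [], [0, 1, 2, 6,
   19, 26], [0, 4, 8, 15, 16, 29], [0, 2, 8, 13, 22, 23], [0, 5, 6, 7, 17, 30], [], [0, 7, 19,
   20, 29, 31], [], [0, 9, 13, 17, 21, 28], [], [0, 2, 3, 10, 27], [0, 6, 20, 24], [0, 15, 17,
   18, 25, 29], [0, 2, 11, 19, 23], [0, 11, 13, 25], [0, 11, 14, 25, 26], [0, 6, 14, 21, 32], [0,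
   7, 17, 28], [0, 6, 14, 21, 32], [0, 12, 14, 15, 23, 26], [0, 15, 17, 21, 25, 26], [], [0, 2,
   15, 30], [0, 2, 9, 17, 25, 34], [0, 3, 6, 11, 20, 21], [0, 9, 10, 11, 12, 16], [0, 1, 9, 12,
   22, 25], [0, 9, 17, 30], [], [], [0, 8, 13, 17, 29], [0, 2, 16, 22, 25, 30], [0, 8, 11, 21,
   22, 26], [0, 2, 10, 20, 28, 33], [], [0, 2, 7, 8, 19, 30], [], [0, 4, 9, 13, 23, 29], [0, 3,
   9, 16, 17], [], [], [], [], [], [], [], [], [0, 13, 18, 24, 25, 28], [0, 5, 17, 29, 30, 31],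
   [0, 8, 16, 23], [], [], [], [0, 2, 11, 19, 23], [0, 4, 5, 17, 21, 27], [0, 9, 10, 14, 17], [],
   [], [], [0, 2, 8, 12, 23, 26], [0, 8, 10, 17, 22, 29], [0, 16, 17, 22, 23], [0, 4, 7, 18, 24,
   30], [0, 2, 9, 17, 25, 34], [0, 4, 5, 21, 28], [], [0, 5, 6, 11, 13, 27], [0, 1, 9, 19, 21,
   24], [], [0, 10, 11, 13, 17, 19], [], [], [0, 2, 4, 12, 20, 29], [], [0, 7, 13, 25], [], [0,
   4, 6, 9, 17, 21], [0, 2, 6, 9, 13, 23], [0, 3, 9, 16, 17], [0, 13, 14, 23, 25, 30], [0, 13,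
   15, 24, 25, 26], [0, 2, 12, 17, 18, 28], [0, 7, 14, 17, 25, 34], [0, 1, 4, 15, 20, 21], [],
   [], [], [], [0, 9, 14, 25, 28, 29], [0, 1, 8, 16, 28, 32], [0, 2, 5, 8, 20, 28], [], [0, 4,
   14, 15, 20, 22], [], [0, 3, 21, 23], [], [0, 7, 12, 15, 21, 29], [0, 2, 10, 14, 16, 23], [0,
   2, 11, 19, 23], [0, 2, 6, 17, 20, 28], [0, 1, 8, 13, 25, 28], [], [0, 2, 7, 18, 28, 32], [],
   [], [], [], [], [0, 11, 12, 16, 20, 31], [0, 3, 8, 10, 19, 23], [0, 1, 7, 16, 23, 26], [0, 10,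
   11, 18, 21, 26], [0, 2, 4, 12, 20, 29], [0, 4, 5, 16, 24, 30], [0, 7, 20, 22, 23, 24], [0, 3,
   10, 14, 15, 28], [0, 3, 11, 19, 23, 28], [0, 12, 13, 23, 26, 31], [], [], [0, 4, 18, 20, 23,
   26], [0, 4, 7, 18, 20, 28], [0, 3, 7, 17, 28, 33], [], [0, 4, 15, 30], [0, 1, 2, 16, 20, 27],
   [], [0, 13, 15, 18, 22, 27], [0, 1, 11, 18, 23, 26], [0, 1, 2, 11, 20, 22], [0, 4, 5, 13, 14,
   24], [0, 11, 13, 25, 26, 31], [], [0, 2, 4, 5, 23], [0, 7, 10, 26], [0, 3, 7, 15, 16], [0, 3,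
   7, 15, 16], [0, 4, 11, 24], [0, 3, 7, 15, 16], [0, 7, 10, 17, 26], [0, 10, 20, 27, 29, 31],
   [0, 8, 15, 24, 25, 31], [], [], [0, 1, 11, 17, 24, 26], [0, 3, 14, 21, 22], [0, 3, 12, 25],
   [], [0, 1, 11, 17, 20], [0, 15, 18, 19], [], [0, 14, 17, 18, 20, 24], [0, 3, 9, 10, 15, 28],
   [0, 4, 6, 21, 22, 23], [], [], [], [0, 4, 5, 6, 7, 13], [0, 5, 13, 23, 24], [0, 17, 22, 23,
   25, 27], [0, 1, 2, 16, 20, 27], [0, 3, 7, 8, 11], [0, 13, 15, 18, 22, 27], [0, 6, 10, 11, 17,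
   29], [], [], [], [], [], [0, 6, 7, 16, 25, 32], [], [], [0, 8, 10, 11, 24, 27], [], [0, 5, 18,
   22, 25, 32], [0, 3, 14, 21, 22], [], [], [0, 11, 15, 16, 17, 19], [0, 14, 16, 20, 26, 30], [],
   [0, 4, 7, 9, 12, 23], [0, 1, 8, 12, 13], [], [], [0, 2, 6, 18, 19], [], [0, 7, 11, 26], [],
   [0, 1, 10, 13, 15, 21], [0, 5, 6, 12, 20, 28], [], [], [], [], [], [], [], [], [0, 6, 16, 21,
   25, 28], [0, 4, 17, 25, 28, 30], [], [], [], [0, 8, 13, 18, 25, 32], [0, 1, 2, 16, 20, 27],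
   [0, 2, 14, 19, 31], [0, 7, 10, 13, 21, 22], [0, 8, 10, 11, 24, 29], [0, 1, 2, 11, 20, 22], [],
   [], [0, 6, 10, 17, 18, 29], [], [], [0, 3, 14, 21, 22], [], [0, 14, 15, 16], [], [0, 3, 6, 11,
   20, 21], [], [0, 1, 5, 12, 14, 17], [0, 3, 17, 19, 22], [], [0, 5, 13, 23, 25, 27], [0, 2, 6,
   18, 19], [], [], [0, 5, 16, 17, 24, 31], [], [], [], [0, 2, 5, 14, 24, 28], [0, 10, 23, 28,
   29], [0, 1, 2, 12], [0, 9, 11, 23, 26], [0, 9, 11, 23, 26], [0, 2, 16, 22], [0, 2, 8, 23, 25],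
   [0, 1, 15, 30], [0, 1, 2, 16, 20, 27], [], [0, 11, 12, 19, 21, 22], [0, 8, 10, 13, 25, 26],
   [0, 1, 2, 10, 12], [0, 4, 10, 11, 18, 20], [0, 4, 6, 15, 17, 25], [], [], [0, 11, 13, 19, 26,
   33], [0, 4, 8, 18, 20, 23], [0, 3, 8, 16, 17, 28], [0, 10, 22, 23, 26, 27], [], [0, 9, 14, 22,
   24, 26], [0, 9, 19, 23, 28, 29], [0, 3, 7, 22, 23, 27], [], [0, 1, 7, 14, 19], [0, 1, 15, 27],
   [], [0, 4, 10, 12, 24, 31], [0, 1, 9, 19, 21, 24], [0, 8, 11, 16, 18, 24], [0, 1, 7, 9, 20,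
   30], [0, 2, 6, 18, 19], [0, 3, 12, 25], [], [0, 11, 18, 22, 28], [], [0, 7, 11, 12, 24, 25],
   [0, 7, 11, 17, 23, 25], [0, 5, 6, 8, 16, 20], [], [], [0, 2, 15, 20, 22, 28], [], [], [], [0,
   13, 14, 23, 25, 30], [], [], [0, 1, 2, 4, 17, 26], [0, 1, 9, 15, 20, 21], [0, 1, 2, 11, 20,
   22], [0, 5, 7, 8, 20, 28], [0, 1, 2, 7, 10, 17], [0, 4, 14, 15, 20, 22], [0, 12, 14, 20, 28,
   30], [], [0, 1, 8, 21, 23, 28], [], [], [], [0, 6, 7, 16, 25, 32], [0, 6, 8, 13, 25, 28], [0,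
   5, 7, 15, 17, 26], [0, 2, 7, 18, 28, 32], [0, 10, 17, 21, 25, 28], [0, 12, 22, 23, 25, 26],
   [0, 3, 14, 21, 22], [0, 5, 6, 18, 19, 21], [0, 11, 14, 20], [], [0, 3, 10, 14, 26, 32], [0, 2,
   6, 18, 19], [0, 3, 15, 21, 22, 26], [0, 9, 21, 25], [], [0, 3, 8, 10, 19, 23], [], [], [0, 7,
   13, 14, 22, 33], [0, 3, 9, 24, 28, 29], [0, 3, 5, 15, 23, 34], [0, 6, 7, 10, 13, 23], [], [0,
   1, 11, 12, 20], [0, 1, 3, 9, 13, 15], [], [0, 3, 6, 7, 16, 28], [0, 3, 9, 16, 17], [0, 1, 2,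
   16, 20, 27], [0, 4, 6, 8, 21, 22], [], [0, 3, 13, 25, 28, 29], [], [0, 13, 21, 26, 28, 29],
   [], [0, 2, 11, 19, 23], [], [0, 7, 10, 16, 22, 33], [0, 8, 15, 21, 28], [0, 11, 21, 24, 27,
   28], [0, 1, 14, 18, 26], [0, 7, 16, 23, 28, 30], [], [], [0, 3, 14, 21, 22], [0, 1, 13, 21],
   [0, 1, 11, 17, 20], [], [], [], [0, 2, 9, 22, 23, 27], [0, 2, 9, 17, 25, 34], [], [0, 7, 17,
   19, 25], [0, 1, 4, 21], [0, 3, 9, 16, 17], [0, 1, 2, 16, 20, 27], [0, 3, 14, 23, 28, 32], [],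
   [], [0, 2, 4, 9, 17, 25], [0, 4, 16, 19, 20], [0, 7, 15, 21, 31, 33], [], [], [], [0, 1, 3,
   11, 14, 27], [0, 1, 9, 22, 26], [0, 7, 17, 24, 25], [], [0, 2, 6, 12, 16, 28], [0, 1, 8, 10,
   15, 21], [0, 3, 14, 21, 22], [], [0, 11, 15, 16, 17, 19], [], [0, 2, 4, 10, 24, 30], [], [0,
   3, 4, 15, 17, 26], [0, 2, 9, 17, 25, 34], [0, 2, 6, 18, 19], [0, 2, 6, 12, 26, 29], [], [0, 5,
   12, 15, 16, 17], [], [], [0, 6, 7, 11, 18, 22], [0, 8, 9, 22, 28], [0, 1, 2, 16, 20, 27], [0,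
   11, 20, 25, 29, 33], [], [], [0, 2, 8, 10, 27], [], [0, 10, 13, 14, 21, 24], [0, 6, 16, 21,
   23, 25], [], [0, 11, 12, 13, 17], [0, 12, 20, 26], [0, 2, 11, 19, 23], [0, 3, 10, 11, 12, 24],
   [0, 11, 14, 25, 26], [0, 3, 4, 6, 10, 21], [], [0, 3, 14, 21, 22], [0, 6, 7, 10, 18, 31], [],
   [0, 11, 14, 16, 19, 26], [0, 1, 8, 15, 21, 25], [], [0, 13, 14, 22, 26, 29], [0, 2, 9, 17, 25,
   34], [0, 2, 6, 18, 19], [], [0, 5, 16, 17, 24, 31], [], [], [0, 8, 9, 11, 21, 24], [0, 2, 8,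
   23, 25], [0, 1, 2, 5, 16, 27], [], [0, 2, 7, 8, 19, 30], [], [0, 3, 9, 16, 17], [0, 1, 2, 16,
   20, 27], [0, 8, 15, 16, 19, 25], [], [0, 8, 19, 20, 30, 33], [0, 8, 22, 25, 26], [0, 2, 4, 7,
   13, 15], [], [], [0, 5, 11, 21, 26, 28], [], [0, 10, 13, 19, 21, 33], [0, 2, 11, 19, 23], [0,
   13, 18, 25, 28, 29], [0, 1, 8, 10, 12, 25], [], [0, 3, 19, 20, 29], [], [], [0, 4, 6, 13, 26,
   31], [0, 2, 9, 17, 25, 34], [0, 2, 6, 18, 19], [0, 3, 20, 26], [0, 2, 3, 8, 16], [], [0, 2,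
   15, 20, 22, 28], [], [], [0, 11, 13, 20, 22, 24], [], [], [0, 8, 13, 16, 28, 29], [0, 3, 9,
   16, 17], [0, 7, 8, 9, 16, 20], [], [], [0, 9, 14, 25, 28, 29], [], [], [0, 11, 16, 17, 20,
   31], [0, 2, 11, 19, 23], [0, 1, 8, 21, 23, 28], [], [], [0, 6, 13, 20, 22, 29], [0, 1, 7, 11,
   20, 27], [], [], [0, 11, 12, 16, 20, 31], [0, 3, 14, 21, 22], [0, 6, 7, 14, 21, 26], [], [],
   [0, 2, 6, 18, 19], [0, 15, 17, 19, 20, 21], [], [], [], [], [], [], [0, 4, 7, 20, 24, 26], [],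
   [0, 5, 7, 12, 19, 32], [0, 3, 16, 20, 23, 31], [0, 14], [0, 10, 19, 22, 23], [0, 9, 15, 20,
   27], [0, 8, 11, 18], [0, 2, 9, 23, 26], [0, 2, 9, 23, 26], [0, 2, 9, 23, 26], [0, 2, 9, 23,
   26], [], [0, 1, 13, 16, 24, 33], [0, 12, 14, 15, 23, 28], [], [0, 11, 19, 20, 21, 23], [0, 8,
   22, 26], [0, 2, 3, 7], [0, 3, 4, 14, 22], [], [0, 9, 21], [], [0, 3, 7, 14, 26, 27], [0, 3,
   13, 14, 24, 31], [0, 4, 8, 10, 11, 20], [], [], [0, 3, 5, 7, 16, 19], [], [0, 1, 5, 6, 14,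
   25], [0, 4, 8, 11, 14, 24], [], [0, 12, 19, 20, 24, 26], [0, 1, 5, 14, 17, 21], [0, 9, 12, 20,
   25], [0, 3, 6, 9], [], [], [0, 3, 8, 16, 27, 33], [0, 13, 15, 17, 21, 31], [], [0, 4, 19, 21,
   23, 24], [], [0, 2, 8, 10, 19, 24], [0, 11, 13, 15, 18], [], [], [], [0, 2, 16, 19, 28], [0,
   5, 16, 18, 27, 28], [0, 8, 10, 17, 21, 31], [], [0, 8, 12, 13, 17, 19], [], [0, 2, 4, 7, 12,
   20], [0, 1, 6, 13, 25, 28], [], [0, 3, 6, 13, 16, 20], [0, 12, 22, 23, 25, 27], [], [0, 2, 12,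
   19, 24, 32], [], [0, 3, 10, 15, 16, 19], [0, 9, 11, 13, 22, 29], [0, 2, 5, 6, 22], [0, 3, 10,
   14, 26], [0, 9, 11, 13, 22, 29], [0, 3, 12, 20, 21, 29], [0, 10, 18, 25, 28, 34], [0, 1, 4,
   24], [0, 2, 12, 18, 27], [0, 2, 9, 23, 26], [0, 2, 9, 23, 26], [0, 2, 9, 23, 26], [0, 2, 9,
   23, 26], [0, 4, 13, 17, 22, 29], [], [], [], [], [0, 2, 16, 19, 28], [0, 14, 17, 18, 22, 24],
   [0, 1, 6, 7, 14, 21], [], [], [], [0, 4, 18, 19, 25, 31], [0, 1, 7, 14, 21, 26], [], [0, 3, 6,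
   13, 16, 20], [0, 1, 3, 9, 17, 22], [0, 10, 17, 21, 22, 32], [0, 8, 18, 28], [], [0, 4, 12, 17,
   22, 26], [], [], [], [0, 4, 7, 9, 26, 27], [], [0, 1, 11, 17, 23, 27], [], [0, 5, 9, 11, 26,
   29], [0, 2, 9, 23, 26], [0, 2, 9, 23, 26], [0, 2, 9, 23, 26], [0, 2, 6, 10, 24], [], [0, 6,
   13, 14, 16, 26], [0, 2, 4, 5, 8, 26], [0, 13, 18, 21, 24, 25], [0, 6, 15, 18, 23, 32], [0, 2,
   16, 19, 28], [0, 4, 10, 11, 24, 29], [0, 6, 15, 18, 23, 32], [], [], [0, 4, 11, 17, 19, 27],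
   [0, 7, 17, 19, 22, 27], [0, 3, 5, 15, 16, 26], [], [0, 3, 6, 13, 16, 20], [], [0, 6, 7, 21,
   24, 25], [], [0, 6, 14, 15, 17, 27], [0, 5, 7, 13, 18, 19], [0, 5, 10, 22, 23, 24], [0, 7, 14,
   20, 24, 25], [], [0, 2, 5, 16, 17], [0, 7, 11, 24, 25, 30], [], [], [], [0, 4, 5, 20, 22, 24],
   [], [], [0, 5, 9, 11, 26, 29], [0, 2, 9, 23, 26], [0, 2, 9, 23, 26], [0, 2, 9, 23, 26], [0, 2,
   9, 23, 26], [], [0, 3, 7, 24], [], [0, 2, 8, 10, 22, 27], [0, 12, 16, 21, 28, 31], [], [], [0,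
   3, 4, 6, 20, 27], [0, 6, 10, 12, 13, 16], [0, 15, 19, 20], [0, 3, 6, 10], [0, 6, 10, 12, 13,
   16], [0, 3, 4, 16, 22], [], [0, 7, 17, 19, 32], [0, 9, 14, 17, 27, 30], [0, 4, 6, 19, 27, 29],
   [0, 3, 5, 6, 8, 14], [0, 5, 6, 12, 17, 20], [0, 5, 6, 12, 17, 20], [0, 5, 6, 12, 17, 20], [0,
   5, 6, 12, 17, 20], [0, 11, 12, 19, 21, 32], [0, 7, 17, 20, 21, 22], [0, 2, 10, 14, 15, 23],
   [0, 2, 6, 18, 19, 22], [0, 5, 15, 22, 23], [0, 1, 3, 16, 22, 24], [0, 1, 3, 16, 22, 24], [0,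
   10, 19, 22, 23], [0, 11, 20, 25, 32], [0, 1, 3, 16, 22, 24], [], [0, 5, 15, 17, 23, 31], [0,
   3, 7, 20, 29, 31], [0, 5, 10, 11, 17, 25], [0, 3, 10, 14, 19, 23], [0, 12, 13, 16, 18, 28],
   [0, 4, 10, 16, 18, 23], [], [], [0, 8, 21, 26, 28], [0, 1, 7, 12, 20, 21], [], [0, 5, 8, 11,
   17, 21], [0, 9, 17, 18, 21, 24], [0, 4, 5, 12, 15, 29], [0, 1, 10, 15, 17, 19], [0, 4, 8, 11,
   21, 24], [], [0, 2, 10, 17, 23, 27], [0, 1, 3, 18], [], [0, 1, 7, 10, 11, 26], [], [0, 4, 9,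
   14, 19, 21], [0, 5, 11, 13, 15, 21], [], [], [0, 11, 14, 16, 23, 26], [0, 1, 2, 12, 21, 25],
   [], [0, 11, 22, 24, 27, 32], [], [], [0, 3, 15, 16, 26, 29], [0, 3, 10, 14, 19, 23], [], [0,
   6, 12, 20, 23, 31], [], [], [0, 1, 3, 7, 17, 19], [0, 1, 7, 12, 20, 21], [], [0, 8, 13, 21,
   24, 25], [0, 3, 4, 17, 23, 28], [], [], [], [0, 8, 12, 13, 17, 19], [], [0, 3, 9, 22, 26], [0,
   3, 12, 17, 25], [], [0, 18, 19, 24], [0, 1, 12, 18, 24], [], [], [0, 2, 13, 23, 27], [0, 3, 4,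
   6, 21, 26], [], [0, 2, 7, 18, 24], [0, 3, 4, 16, 22], [], [], [0, 7, 17, 21, 27], [0, 8, 20,
   23, 26, 27], [], [0, 3, 10, 13, 24, 26], [], [0, 1, 18, 23, 25, 26], [0, 13, 18, 20, 26, 27],
   [0, 4, 8, 11, 14, 28], [0, 4, 11, 21, 23], [0, 2, 4, 14, 21, 26], [0, 2, 3, 6, 15, 24], [0, 6,
   9, 18, 22, 32], [0, 7, 13, 21, 24, 28], [0, 14, 16, 21], [0, 7, 13, 21, 24, 28], [0, 7, 13,
   21, 24, 28], [0, 3, 5, 7], [0, 1, 7, 12, 20, 21], [], [], [0, 1, 15, 19, 21, 23], [0, 6, 9,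
   18, 22, 32], [0, 3], [0, 3, 13, 15, 19, 25], [0, 3, 13, 15, 19, 25], [0, 12, 15, 17, 18, 20],
   [0, 9, 25], [0, 3, 5, 12, 14, 18], [0, 1, 3, 11, 12], [0, 9, 18, 30, 32], [0, 1, 12, 18, 24],
   [0, 14, 25, 30], [0, 2, 6, 17, 23, 26], [0, 1, 17, 23], [], [0, 11], [0, 5, 11, 12, 15, 23],
   [0, 3, 4, 16, 22], [0, 13], [0, 11, 17, 22], [0, 9, 14, 17, 27, 30], [0, 3, 5, 6, 8, 19], [],
   [], [], [0, 1, 2, 12, 21, 25], [0, 4, 7, 19, 27, 33], [], [0, 4, 11, 13, 14, 26], [0, 12, 16,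
   18, 20, 28], [0, 5, 6, 15, 18, 26], [], [0, 11, 13, 16, 28, 29], [0, 2, 5, 6, 15, 22], [0, 2,
   4, 15, 18, 21], [0, 10, 12, 13, 15], [0, 3, 10, 14, 19, 23], [], [0, 1, 8, 13, 22, 32], [0, 6,
   13, 14, 16, 26], [0, 1, 10, 16, 21, 22], [], [0, 5, 8, 15, 17, 22], [], [], [0, 3, 7, 19, 22,
   32], [0, 3, 9, 22, 26], [0, 11, 21, 23, 24, 31], [0, 2, 6, 12, 27], [0, 10, 11, 13, 18, 26],
   [0, 1, 12, 18, 24], [0, 3, 7, 14, 15, 20], [0, 3, 17, 19, 23, 28], [0, 1, 6, 13, 25, 28], [],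
   [], [], [0, 3, 4, 16, 22], [], [0, 5, 15, 18, 22, 28], [0, 6, 20, 29], [], [], [0, 1, 8, 20,
   24], [0, 7, 14, 20, 24, 25], [0, 1, 18, 23, 25, 26], [0, 6, 9, 14, 22, 29], [], [0, 1, 3, 20,
   21, 22], [], [0, 6, 7, 15, 27, 31], [0, 16, 17, 22, 24, 26], [], [0, 11, 19, 28, 29, 30], [0,
   11, 13, 22, 27, 32], [], [0, 1, 13, 17, 20, 23], [0, 3], [0, 12, 15, 16, 20, 29], [0, 2, 4,
   10, 12, 17], [0, 14, 16, 18, 19, 24], [], [0, 13, 14, 25], [0, 3, 8, 10, 18, 22], [0, 5, 13,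
   15, 19, 23], [0, 11, 12, 14, 16, 19], [], [], [], [0, 5, 6, 7, 10, 19], [0, 1, 2, 7], [], [0,
   10, 13, 18, 19, 22], [0, 10, 13, 18, 19, 22], [0, 8, 12, 21, 28], [0, 10, 13, 18, 19, 22], [0,
   10, 13, 18, 19, 22], [0, 2, 16, 27, 30], [0, 3, 6, 14, 27], [], [0, 10, 14, 17, 22, 23], [0,
   9, 10, 16, 23], [], [0, 8, 13, 18, 22, 29], [], [], [], [], [], [0, 5, 6, 12, 23, 31], [], [0,
   6, 12, 28], [0, 8, 18, 19, 26, 28], [0, 4, 7, 22, 24, 25], [0, 8, 18, 19, 26, 28], [0, 8, 18,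
   19, 26, 28], [0, 8, 16, 18, 27], [], [0, 6, 10, 14, 16, 19], [0, 3, 10, 14, 19, 23], [], [0,
   1, 13, 20, 23, 26], [], [0, 2, 5, 13, 14, 19], [0, 10, 13, 17, 18, 20], [0, 1, 9, 20, 22, 29],
   [], [], [], [0, 12, 13, 17, 18, 20], [0, 3, 4, 13, 19, 22], [0, 12, 21, 26, 29], [0, 8, 19,
   25, 29, 33], [0, 8, 19, 22, 24, 30], [0, 4, 8, 10, 12, 13], [], [], [0, 7, 13, 14, 17, 27],
   [0, 1, 8, 9, 16, 24], [], [0, 1, 5, 6, 14, 25], [], [], [0, 4, 5, 10, 20, 28], [], [0, 9, 23,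
   24], [], [], [], [], [], [], [0, 6, 14, 19, 20, 23], [0, 6, 10, 14, 16, 19], [0, 5, 7, 11, 14,
   21], [0, 10, 11, 13, 14, 17], [0, 1, 13, 20, 23, 26], [], [], [0, 6, 12, 19, 23, 27], [0, 5,
   12, 21, 24, 30], [], [], [0, 3, 4, 17, 23, 28], [0, 12, 13, 17, 18, 20], [], [0, 5, 9, 19, 20,
   22], [0, 2, 11, 12, 23, 31], [0, 6, 8, 10, 19, 20], [], [0, 4, 11, 23, 31], [0, 8, 10, 17, 21,
   31], [0, 3, 12, 17, 25], [0, 15, 16, 21, 22, 27], [0, 1, 11, 13, 15, 24], [0, 1, 7, 10, 19,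
   31], [0, 4, 8, 13, 22, 28], [], [0, 3, 6, 14, 27], [0, 8, 20, 23, 26, 27], [], [], [], [], [0,
   1, 3, 5, 7, 21], [0, 11, 14, 24, 33], [0, 3, 9, 14, 17, 18], [0, 9, 16, 18, 29], [0, 13, 23,
   26, 27], [0, 9, 11, 13, 22, 29], [0, 9, 11, 13, 22, 29], [0, 9, 11, 13, 22, 29], [0, 9, 12,
   19, 21, 28], [0, 4, 7, 22, 24, 25], [0, 1, 2, 10, 12, 23], [0, 4, 6, 16, 24, 27], [0, 9, 12,
   19, 21, 28], [], [], [], [0, 5, 17, 19, 23, 24], [0, 12, 14, 23, 28], [], [], [0, 1, 8, 25,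
   26], [], [], [0, 8, 19, 25, 29, 33], [], [], [], [], [0, 8, 12, 26, 29], [0, 5, 8, 11, 12,
   15], [0, 5, 8, 11, 12, 15], [0, 5, 8, 11, 12, 15], [0, 5, 8, 11, 12, 15], [0, 3, 7, 11], [0,
   3, 6, 14, 27], [0, 5, 9, 11, 19, 22], [0, 2, 3, 13, 24], [0, 4, 11, 26, 28, 29], [0, 1, 7, 13,
   20, 23], [], [], [], [0, 4, 12, 17, 22, 26], [], [], [0, 10, 11, 19, 26, 33], [0, 3, 6, 7, 11,
   16], [], [], [0, 2, 4, 9, 17, 22], [0, 2, 5, 7, 17, 24], [0, 8, 11, 22, 23, 28], [0, 3, 14,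
   22, 32], [0, 10, 11, 12, 24, 25], [0, 4, 7, 22, 24, 25], [0, 1, 10, 22, 27, 31], [0, 1, 10,
   22, 27, 31], [0, 8, 16, 26], [], [0, 3, 10, 12, 16, 18], [0, 8, 12, 22, 31], [], [0, 2, 13,
   19], [0, 8, 18, 21, 26, 27], [0, 9, 13, 17], [0, 3, 15, 23, 26, 29], [0, 3, 15, 23, 26, 29],
   [0, 3, 15, 23, 26, 29], [0, 8, 12, 26, 29], [0, 15, 16, 21, 22, 27], [], [0, 11, 15, 18, 21,
   27], [0, 4, 16, 25, 26], [0, 10, 17, 18, 20, 22], [0, 6, 20, 29], [0, 7, 8, 14, 15, 17], [0,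
   11, 16, 25, 28, 32], [0, 3, 12, 16, 19, 24], [], [0, 1, 8, 9, 10, 20], [0, 8, 16, 28, 31], [0,
   6, 14, 15, 17, 27], [0, 1, 9, 20, 21, 23], [], [], [], [0, 4, 7, 8, 23], [], [0, 4, 17, 24,
   30], [0, 1, 2, 5, 6, 14], [0, 1, 10, 22, 27, 31], [0, 2, 6, 19, 28, 29], [0, 1, 10, 22, 27,
   31], [], [0, 6, 10, 14, 16, 19], [0, 3, 10, 14, 19, 23], [], [0, 1, 13, 20, 23, 26], [], [],
   [], [], [], [0, 1, 2, 14, 25, 33], [0, 11, 12, 14, 16, 19], [0, 12, 13, 17, 18, 20], [], [],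
   [0, 8, 12, 26, 29], [0, 5, 10, 16, 22], [], [0, 8, 9, 12, 18, 20], [], [], [], [], [], [0, 9,
   15, 19, 22, 27], [0, 3, 4, 7, 21], [], [], [0, 14, 18, 22, 25], [0, 2, 4, 5, 13, 21], [], [],
   [0, 17, 20, 21], [0, 10, 18, 27, 31], [0, 10, 12, 13, 18, 27], [0, 1, 4, 9, 22, 28], [0, 1, 4,
   9, 22, 28], [0, 1, 4, 9, 22, 28], [0, 2, 6, 14, 27, 31], [0, 8, 9, 14, 26, 32], [0, 8, 9, 14,
   26, 32], [0, 9, 17, 23, 27], [0, 5, 9, 17, 24, 27], [0, 1, 6, 19], [0, 12, 14, 18, 26], [],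
   [0, 3, 5, 17, 18, 27], [], [], [], [], [0, 5, 11, 12, 19, 28], [], [], [0, 2, 14, 27, 31], [],
   [0, 10, 12, 20, 28, 29], [0, 12, 17, 22, 24, 28], [0, 7, 11, 20, 24], [], [], [], [], [], [],
   [0, 5, 7, 10, 13, 21], [0, 8, 16, 20, 23], [0, 9, 10, 17, 20, 28], [], [0, 3, 19, 20, 27], [],
   [], [0, 9, 15, 19, 22, 27], [0, 3, 4, 7, 21], [], [], [], [], [0, 11, 14, 15, 17, 25], [0, 8,
   16, 23], [0, 4, 5, 7, 15, 28], [0, 2, 14, 19, 24, 26], [0, 6, 9, 10, 22, 25], [0, 12, 18, 22,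
   29], [], [], [0, 12, 14, 18, 26], [], [0, 3, 5, 17, 18, 27], [0, 2, 8, 19, 20], [], [], [0,
   11, 13, 28], [], [0, 4, 14, 21, 29, 33], [], [], [], [], [0, 4, 7, 12, 20, 29], [0, 5, 7, 8,
   16], [], [0, 11, 13, 20, 22, 24], [0, 6, 16, 19, 31], [0, 3, 4, 15, 25], [], [0, 7, 9, 16, 23,
   29], [0, 3, 4, 8, 11, 21], [0, 11, 16, 22, 26], [], [], [0, 14, 16, 24, 27], [], [0, 5, 6, 7,
   10, 13], [0, 1, 12, 15, 25, 34], [0, 10, 15, 17, 23, 29], [0, 4, 11, 19, 22, 25], [0, 8, 14,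
   18, 22], [0, 2, 7, 16, 19, 21], [0, 8, 17, 23], [0, 10, 12, 20, 23, 31], [], [0, 9, 11, 13,
   18, 30], [], [], [0, 10, 12, 15, 18, 29], [], [], [0, 1, 2, 18, 24], [0, 3, 6, 15, 22, 23],
   [0, 5, 7, 8, 9, 18], [0, 1, 2, 5, 8, 25], [], [0, 4, 8, 19, 21, 27], [0, 1, 7, 15, 28, 29],
   [0, 6, 8, 20, 25, 32], [], [0, 2, 4, 17, 18, 28], [0, 5, 9, 17, 24, 27], [0, 6, 13, 24, 32],
   [], [0, 9, 17, 30], [0, 12, 22, 28, 29, 32], [0, 10, 14, 27, 31], [0, 1, 3, 7, 8, 12], [0, 2,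
   6, 18, 30, 31], [0, 3, 10, 11, 23, 28], [0, 1, 5, 7, 9, 23], [], [], [], [], [], [], [], [0,
   5, 7, 14, 18, 31], [], [0, 2, 12, 20, 25, 28], [], [0, 12, 16, 17, 24, 27], [], [], [], [0, 9,
   15, 16, 18, 23], [0, 2, 4, 7, 13, 28], [], [0, 3, 4, 9, 23, 26], [], [0, 5, 9, 10, 14, 22],
   [0, 3, 4, 7, 21], [], [0, 8, 12, 14, 20, 25], [0, 10, 12, 22, 25, 28], [0, 2, 9, 20, 23, 29],
   [0, 4, 6, 14, 26], [], [0, 1, 2, 18, 24], [0, 6, 17, 18, 21, 23], [0, 12, 23, 24, 28], [0, 4,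
   7, 9, 10, 19], [0, 6, 8, 16, 17, 25], [], [], [0, 9, 10, 12, 19, 24], [0, 2, 6, 11, 17, 23],
   [0, 8, 14, 21, 26, 29], [0, 3, 6, 14, 19], [0, 6, 13, 24, 32], [0, 12, 14, 18, 26], [], [0, 3,
   8, 13, 17, 22], [], [0, 12, 13, 21, 25, 26], [0, 2, 7, 8, 14, 23], [], [0, 4, 7, 12, 20, 29],
   [0, 9, 19, 21, 31, 32], [0, 7, 13, 22, 29, 33], [0, 5, 19, 21, 25, 26], [0, 1, 12, 17, 18,
   31], [0, 8, 19, 23, 24, 27], [0, 3, 4, 15, 16, 25], [0, 4, 5, 6, 11, 25], [0, 11, 20, 28, 31,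
   33], [0, 3, 4, 10, 13, 26], [], [], [0, 13, 16, 22, 27, 31], [0, 1, 4, 14, 21], [0, 5, 8, 22,
   25, 29], [0, 3, 10, 13, 21, 33], [], [], [0, 1, 9, 11, 25, 31], [], [0, 8, 15, 27], [0, 9, 15,
   19, 22, 27], [0, 14, 16, 17], [], [0, 2, 12, 17, 29], [], [], [], [0, 7, 18, 19, 24, 27], [0,
   10, 14, 23, 27, 28], [0, 11, 15, 23, 25, 27], [0, 10, 14, 23, 27, 28], [0, 1, 2, 6, 12, 14],
   [0, 6, 12, 13, 23], [0, 10, 14, 23, 27, 28], [0, 1, 2, 18, 24], [0, 3, 10, 20, 22, 32], [0,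
   10, 12, 13, 18, 27], [0, 9, 15, 20, 27, 29], [0, 3, 6, 19, 23, 25], [], [], [0, 5, 11, 14, 23,
   27], [0, 3, 10, 15, 17, 23], [0, 3, 10, 11, 13, 23], [0, 4, 11, 12, 13, 17], [0, 6, 13, 24,
   32], [0, 8, 12, 19], [0, 1, 3, 18], [0, 3, 5, 17, 18, 27], [0, 4, 13, 20, 24, 30], [], [], [0,
   1, 16, 21, 22, 25], [], [], [0, 3, 8, 11, 18], [], [], [0, 8, 18, 22, 26, 31], [0, 3, 7, 10,
   24, 29], [0, 3, 16, 24, 26], [0, 13, 16, 20, 27, 30], [0, 8, 18, 22, 26, 31], [0, 8, 18, 22,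
   26, 31], [0, 7, 8, 10, 16, 21], [0, 4, 16, 21], [], [0, 6, 10, 20, 31, 32], [0, 6, 11, 14],
   [0, 4, 11, 14, 19, 23], [0, 4, 9, 10, 12, 23], [0, 7, 11, 17, 25, 27], [0, 5, 7, 11, 15, 17],
   [0, 5, 13, 16, 18, 27], [0, 5, 10, 25, 26, 27], [0, 9, 10, 11, 14, 17], [0, 2, 7, 21, 22, 24],
   [], [], [0, 1, 19], [0, 1, 3, 6, 22, 25], [0, 1, 3, 6, 22, 25], [0, 1, 3, 6, 22, 25], [0, 1,
   3, 6, 22, 25], [], [0, 10, 12, 15, 19, 24], [0, 1, 5, 8, 15, 25], [0, 6, 7, 10, 22, 28], [0,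
   5, 9, 12, 14, 15], [0, 4, 10, 16, 24, 31], [0, 1, 9, 15, 21, 22], [0, 3, 5, 17, 18, 27], [0,
   8, 10, 22, 25, 28], [0, 4, 5, 14, 16, 23], [], [], [0, 6, 11, 13, 18, 25], [0, 8, 18, 19, 24,
   25], [0, 10, 14, 17, 23, 33], [], [], [], [0, 11, 20, 28, 31, 33], [0, 4, 6, 8, 20, 21], [],
   [0, 2, 3, 7, 8, 25], [], [], [], [0, 2, 3, 13, 26, 27], [], [0, 9, 13, 20, 28, 32], [0, 1, 2,
   3, 11, 25], [], [], [], [], [], [], [0, 4, 10, 16, 24, 31], [0, 2, 4, 5, 15, 29], [0, 3, 5,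
   17, 18, 27], [0, 2, 8, 19, 20], [0, 8, 11, 12, 15, 25], [0, 13, 17, 19, 22, 30], [0, 1, 4, 16,
   21, 23], [0, 1, 14, 25], [0, 8, 18, 19, 24, 25], [0, 5, 16, 25, 27, 32], [], [], [0, 7, 9, 16,
   23, 29], [0, 2, 12, 19, 26, 29], [], [0, 9, 13, 17, 19, 25], [], [0, 12, 19, 20, 22, 30], [0,
   10, 14, 16, 22, 27], [], [0, 5, 7, 9, 15, 27], [0, 1, 6, 10, 14, 29], [0, 4, 8, 18], [], [],
   [0, 10, 17, 26, 34], [0, 6, 16, 17, 19, 29], [0, 9, 10, 20, 28, 29], [0, 3, 10, 11, 16], [0,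
   1, 14, 16, 27], [], [0, 2, 3, 7, 8, 25], [0, 1, 19, 20, 24], [0, 2, 14, 25, 27, 31], [], [],
   [0, 1, 5, 13, 27], [], [], [], [0, 1, 5, 21], [0, 14], [0, 9, 23, 25, 26], [], [0, 13, 17,
   24], [], [], [0, 6, 11, 13, 18, 25], [0, 6, 18, 23, 31], [], [], [0, 3, 4, 11, 19, 20], [0, 4,
   12, 17, 20, 23], [0, 5, 7, 14, 18, 31], [], [], [], [], [0, 5, 7, 19, 27, 29], [0, 8, 10, 22,
   28, 29], [0, 8, 12, 14, 17, 22], [0, 1, 8, 12, 21], [], [], [0, 2, 12, 15, 26, 28], [0, 8, 13,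
   14, 16, 28], [], [0, 3, 9, 10], [], [0, 14], [], [], [], [0, 14, 16, 19, 20, 24], [], [0, 1,
   5, 21], [0, 2, 7, 12, 13, 27], [0, 12, 23, 24, 28], [0, 4, 7, 9, 10, 19], [0, 3, 8, 19, 21,
   31], [0, 4, 9, 13, 14, 23], [0, 4, 9, 13, 14, 23], [0, 4, 9, 13, 14, 23], [0, 1, 9, 22, 27],
   [0, 4, 9, 13, 14, 23], [0, 4, 10, 16, 24, 31], [0, 4, 8, 15, 18], [0, 3, 8, 13, 17, 22], [0,
   10, 15, 21, 28, 31], [0, 3, 15, 23, 27, 32], [0, 6, 7, 10, 12, 23], [0, 5, 9, 12, 22], [0, 4,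
   5, 6, 11, 25], [0, 11, 20, 28, 31, 33], [0, 1, 12, 16, 22, 29], [0, 4, 13, 16, 23, 24], [],
   [0, 4, 11, 24, 28, 30], [0, 5, 7, 19, 27, 29], [], [], [0, 1, 13, 24, 26], [], [], [], [], [0,
   8, 15, 19, 26, 35], [], [0, 11, 14, 24, 26, 28], [0, 7, 13, 26, 30, 31], [0, 6, 14, 17, 30],
   [0, 4, 10, 11, 18], [], [0, 3, 10, 16, 20, 27], [0, 1, 9, 10, 12, 24], [0, 1, 5, 21], [0, 7,
   9, 11, 20, 24], [0, 10, 12, 13, 18, 27], [0, 9, 15, 20, 27, 29], [], [], [0, 1, 9, 12, 18,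
   28], [], [0, 4, 6, 14, 26, 31], [0, 3, 11, 12, 21, 29], [0, 7, 15, 27, 29], [0, 2, 8, 11, 22,
   29], [0, 3, 5, 17, 18, 27], [], [0, 6, 8, 19, 24], [], [0, 6, 8, 20, 26, 30], [0, 6, 11, 13,
   18, 25], [0, 8, 18, 19, 24, 25], [], [0, 3, 9, 13, 25, 27], [], [0, 8, 19, 24], [0, 10, 15,
   22, 33], [], [0, 1, 3, 6, 14, 23], [0, 5, 13, 18, 27], [0, 3, 16, 24, 26], [0, 2, 3, 8, 23,
   27], [0, 11, 16, 20, 28, 29], [0, 4, 16, 21], [0, 1, 4, 14, 20, 24], [0, 6, 11, 14], [], [0,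
   2, 6, 13, 17, 24], [0, 5, 9, 16, 18, 19], [0, 8, 12, 15, 25, 33], [0, 4, 6, 19, 25, 28], [0,
   9, 15, 19, 22, 27], [0, 4, 6, 10, 21, 24], [], [], [0, 2, 10, 14, 19, 26], [0, 7, 13, 15, 19,
   20], [0, 7, 15, 20, 25, 26], [0, 1, 6, 12, 13, 25], [0, 1, 6, 12, 13, 25], [0, 1, 9, 14, 19,
   20], [0, 1, 6, 12, 13, 25], [0, 18, 19], [0, 4, 7, 11, 16, 19], [0, 2, 4, 14, 15, 25], [0, 5,
   9, 12, 14, 15], [0, 2, 3, 6, 10, 18], [], [0, 5, 16, 23, 28, 32], [0, 9, 11, 16, 17, 23], [0,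
   7, 10, 19, 23, 24], [0, 4, 11, 21, 29, 31], [0, 1, 5, 14, 15, 17], [0, 2, 10, 13, 14, 23], [0,
   13, 17, 21, 23, 24], [], [0, 5, 10, 15, 16, 18], [], [0, 6, 14, 21, 25, 28], [0, 4, 7, 12, 20,
   29], [], [], [], [0, 10, 13, 14, 17, 18], [0, 3, 19, 20, 27], [0, 4, 10, 15, 22, 29], [0, 9,
   15, 19, 22, 27], [0, 4, 6, 10, 21, 24], [], [0, 3, 4, 17, 19, 23], [], [0, 8, 9, 22, 23, 25],
   [0, 11, 13, 20, 21, 22], [], [], [0, 5, 13, 14, 24, 28], [0, 14, 18, 28], [0, 3, 13, 18, 20,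
   27], [], [], [], [], [], [], [], [0, 8, 13, 25, 27, 32], [], [], [0, 5, 16, 25, 27, 32], [0,
   2, 10, 21, 26, 27], [0, 6, 11, 13, 14, 26], [0, 4, 20, 26], [0, 8, 17, 22, 29, 30], [], [0, 8,
   10, 11, 12, 18], [], [0, 11, 13, 20, 22, 24], [], [], [0, 2, 3, 6, 10, 14], [], [0, 13, 14,
   18, 19, 29], [0, 6, 8, 12, 13, 23], [0, 4, 11, 26, 27], [0, 2, 12, 23, 28], [0, 10, 18, 23,
   25, 27], [0, 3, 4, 13, 17, 24], [0, 6, 8, 16, 17], [], [], [0, 3, 4, 17, 22], [], [], [0, 12,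
   15, 16, 22, 23], [], [0, 2, 16, 19, 25], [], [0, 4, 9, 14, 17, 21], [0, 14, 16, 22], [], [0,
   4], [0, 1, 9, 13, 20], [0, 14, 19, 25], [], [0, 4, 8, 11, 24, 31], [0, 10, 21, 25, 27, 29],
   [0, 1, 14, 19, 20], [], [], [0, 4, 17, 22, 25], [], [0, 16, 18, 20, 21, 23], [], [], [0, 1, 5,
   7, 9, 23], [0, 1, 9, 18, 20, 22], [0, 1, 12, 24, 29, 32], [], [0, 4, 6, 7, 17, 25], [0, 7, 13,
   17, 18, 20], [], [], [], [0, 4], [], [], [0, 2, 12, 21], [0, 4, 8, 11, 23, 28], [0, 9, 14, 17,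
   20, 32], [0, 5, 11, 15, 21, 23], [0, 14, 18, 28, 30], [0, 5, 9, 10, 14, 22], [0, 4, 6, 10, 21,
   24], [], [0, 5, 6, 10, 17, 31], [], [], [], [], [], [0, 3, 16, 22, 23], [], [], [0, 5, 13, 16,
   17, 23], [0, 9, 10, 12, 19, 24], [0, 4, 19, 22, 24, 29], [0, 3, 6, 14, 19], [0, 14, 19, 25],
   [0, 4, 9, 13, 14, 23], [0, 1, 6, 19, 28], [0, 11, 13, 16, 17, 22], [0, 4, 9, 13, 14, 23], [0,
   4, 9, 13, 14, 23], [0, 6, 8, 16, 19, 30], [0, 4, 7, 12, 20, 29], [0, 8, 10, 13, 22], [0, 9,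
   14, 18, 22, 24], [0, 10, 16, 21, 22, 23], [], [0, 7, 13, 17, 18, 20], [], [0, 6, 14, 20, 21,
   22], [0, 2, 7, 14, 17, 20], [0, 4, 5, 6, 19, 27], [0, 6, 7, 10, 14, 22], [0, 2, 16, 17, 18,
   27], [], [], [0, 7, 18, 23, 24], [], [0, 4, 6, 17, 24, 33], [0, 3, 6, 7, 8, 16], [0, 3, 7, 18,
   20], [0, 10, 14, 23, 27, 28], [0, 10, 14, 23, 27, 28], [0, 5, 9, 22, 27], [0, 1, 5, 15, 23],
   [0, 10, 14, 23, 27, 28], [], [0, 5, 11, 14, 23, 27], [0, 3, 6, 8, 23, 28], [0, 4, 11, 12, 13,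
   17], [0, 14, 19, 25], [0, 1, 9, 12, 18, 28], [0, 4, 5, 8, 18, 25], [0, 3, 11, 12, 21, 29], [],
   [], [0, 9, 13, 16, 19, 28], [0, 15, 18, 19, 20, 22], [0, 10, 24, 26, 28], [], [0, 8, 12, 23,
   29], [], [0, 2, 10, 21, 26, 27], [0, 4, 8, 12, 18, 19], [0, 16, 18, 20, 21, 23], [], [], [0,
   2, 5, 15, 18], [], [0, 11, 16, 17], [0, 1, 4, 10, 21, 25], [0, 4, 8, 17, 24, 25], [], [0, 12,
   17, 24, 25, 27], [0, 13, 14, 18, 26], [0, 3, 10, 15, 19], [0, 3, 10, 15, 19], [0, 14, 28, 30],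
   [0, 6, 9, 10, 13], [], [0, 4, 10, 12, 17, 25], [], [], [0, 13, 23, 26, 29, 30], [0, 17, 23,
   24, 27], [], [0, 3, 17, 21, 24, 26], [0, 2, 3, 9, 14, 19], [0, 7, 12, 21, 23], [0, 13, 14, 21,
   26, 29], [0, 1, 3, 12, 25, 27], [0, 15, 17, 24], [], [], [], [0, 6, 8, 9, 11, 17], [0, 1, 6,
   8, 14], [], [0, 1, 7, 13, 18, 20], [0, 2, 10, 13, 16], [], [], [0, 1, 3, 4, 14, 19], [], [],
   [0, 1, 4, 12, 13, 17], [0, 6, 11, 13, 14, 28], [], [], [0, 4, 9, 14, 17, 19], [0, 6, 10, 11,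
   19, 23], [0, 2, 8, 9, 10], [], [0, 5, 12, 24, 27, 29], [0, 2, 8, 12, 15, 18], [], [0, 7, 14,
   15, 21, 25], [], [], [0, 6, 8, 19, 23, 33], [0, 7, 8, 10, 24, 25], [0, 6, 14, 16, 28], [], [],
   [], [0, 7, 16, 22], [0, 8, 11, 12, 21, 27], [0, 4, 5, 14, 19, 27], [], [0, 5, 13, 17, 18, 25],
   [], [0, 3, 5, 15, 21], [0, 4, 6, 18, 27], [0, 2, 5, 14, 27, 29], [0, 3, 7, 14, 16, 26], [0, 4,
   14, 16, 24, 32], [], [0, 4, 7, 23], [0, 5, 14, 16, 19, 24], [0, 6, 10, 20, 22, 24], [], [0, 4,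
   6, 8, 24], [0, 2, 8, 12, 15, 18], [0, 1, 4, 17, 24, 30], [], [], [0, 7, 13, 14, 15, 17], [],
   [], [], [], [], [0, 11, 17, 22, 25, 30], [], [0, 10, 19, 23, 26, 27], [0, 2, 5, 7, 14, 17],
   [0, 4, 10, 23, 31], [0, 2, 4, 8, 16, 19], [], [], [0, 7, 12, 17, 28, 31], [0, 3, 7, 18, 19,
   24], [0, 8, 9, 15, 19, 25], [0, 13, 22, 29, 31], [0, 4, 6, 18, 27], [0, 1, 3, 5, 10, 22], [0,
   2, 5, 14, 27, 29], [], [0, 5, 18, 19, 22, 26], [0, 1, 8, 11, 20, 30], [], [0, 5, 16, 24, 25,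
   32], [0, 4, 6, 11, 14], [0, 5, 12, 24, 27, 29], [0, 3, 11, 14, 24], [], [0, 6, 14, 20, 21,
   23], [], [0, 1, 12, 19, 32], [0, 4, 12, 16, 19, 24], [0, 5, 8, 14, 16, 23], [0, 9, 18, 19,
   23], [0, 4, 12, 16, 19, 24], [0, 8, 9, 11, 17, 20], [0, 8, 9, 11, 17, 20], [0, 8, 9, 11, 17,
   20], [0, 8, 9, 11, 17, 20], [], [0, 1, 8, 19, 25, 30], [0, 10, 17, 27, 29, 31], [0, 3, 4, 14,
   17, 29], [0, 7, 11, 19, 20, 27], [], [0, 3, 9, 11, 16, 28], [], [0, 13, 22, 29, 31], [0, 4, 6,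
   18, 27], [0, 2, 5, 14, 27, 29], [0, 17, 18, 20, 21, 24], [0, 1, 4, 6, 18, 23], [], [0, 10, 12,
   16, 23, 30], [], [], [], [0, 4, 5, 17, 22, 24], [0, 10, 14, 16, 21, 29], [], [], [0, 5, 8, 14,
   19, 21], [0, 2, 8, 12, 15, 18], [], [0, 2, 5, 10, 12, 19], [], [], [], [], [0, 1, 5, 12, 16,
   21], [0, 2, 5, 6, 8, 15], [0, 7, 10, 13, 24, 30], [0, 7, 10, 13, 24, 30], [0, 5, 6, 19, 22,
   29], [0, 7, 10, 13, 24, 30], [0, 2, 6, 11, 15, 18], [0, 13, 25, 27], [0, 2, 6, 11, 15, 18],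
   [0, 2, 6, 11, 15, 18], [0, 6], [0, 7, 16, 27], [0, 7, 16, 27], [0, 7, 16, 27], [0, 2, 12, 15,
   18, 23], [0, 1, 2, 12, 20, 31], [], [0, 11, 19, 22, 31, 32], [0, 1, 15, 17, 22, 29], [], [0,
   2, 3, 5, 13, 24], [0, 10, 12, 15, 22, 26], [], [0, 3, 11, 13, 16, 25], [0, 9, 10, 14, 17, 27],
   [0, 4, 14, 15, 18], [], [0, 15, 21, 23, 27], [], [], [0, 2, 21, 25], [0, 9, 14, 17, 25, 27],
   [], [0, 7, 14, 15, 19, 28], [], [], [], [0, 6, 11, 14, 22], [0, 19], [], [0, 5, 11, 12, 19,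
   25], [0, 1, 9, 17, 18, 22], [0, 7, 12, 17, 20, 28], [0, 1, 4, 11, 18, 24], [0, 8, 19, 21, 25],
   [0, 4, 7, 13, 28], [], [0, 2, 4, 15], [], [0, 9, 14, 17, 25, 27], [0, 6, 8, 9, 20, 25], [0, 7,
   14, 18, 24], [0, 3, 4, 12, 14], [], [0, 4, 7, 10, 23, 31], [], [], [], [0, 5, 13, 21, 22, 33],
   [0, 2, 5, 14, 27, 29], [0, 3, 10, 11, 16, 28], [0, 5, 8, 12, 16, 21], [0, 2, 12, 15, 18, 23],
   [0, 1, 2, 10, 11, 21], [0, 9, 10, 11, 13, 15], [], [0, 6, 12, 13, 17, 25], [], [0, 4, 11, 13,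
   26], [0, 2, 3, 20, 22, 24], [], [0, 3, 11, 13, 16, 25], [0, 9, 10, 14, 17, 27], [0, 3, 12, 24,
   31, 32], [], [0, 12, 16, 17, 20, 32], [0, 7, 8, 18, 23, 29], [0, 1, 6, 19, 25, 28], [0, 8, 9,
   14, 16, 30], [], [], [0, 8, 13, 15, 17, 25], [], [0, 2, 5, 14, 27, 29], [0, 1, 9, 14, 17, 25],
   [0, 8, 11, 13, 19, 23], [0, 2, 12, 15, 18, 23], [0, 2, 16, 22, 26, 29], [0, 11, 17, 21, 24,
   29], [0, 1, 7, 18, 29, 32], [], [], [0, 3, 11, 13, 16, 25], [0, 9, 10, 14, 17, 27], [0, 15,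
   16, 19, 20, 28], [], [], [0, 3, 5, 6, 14, 27], [0, 3, 6, 8, 17], [0, 3, 6, 8, 17], [0, 3, 6,
   8, 17], [], [0, 4, 8, 14, 20, 21], [], [], [], [0, 2, 4, 8, 19, 27], [0, 2, 5, 14, 27, 29],
   [0, 3, 10, 11, 16, 28], [0, 2, 5, 14, 27, 29], [0, 5, 10, 12, 14, 16], [0, 1, 2, 12, 20, 31],
   [0, 7, 10, 12, 13, 14], [], [], [0, 5, 20, 29], [0, 3, 11, 13, 16, 25], [0, 5, 9, 17, 22], [],
   [0, 5, 9, 14, 17, 26], [0, 5, 9, 14, 17, 26], [0, 5, 9, 14, 17, 26], [], [], [0, 9, 14, 17,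
   25, 27], [0, 7, 11, 21, 31, 34], [], [], [], [0, 5, 16, 18, 24, 29], [0, 2, 4, 7, 12, 24], [0,
   7, 16, 27], [0, 7, 16, 27], [0, 7, 16, 27], [0, 2, 12, 15, 18, 23], [0, 4, 9, 14, 25, 32], [],
   [0, 6, 8, 14, 17, 20], [0, 10, 12, 24, 32], [0, 2, 15, 19, 26, 31], [0, 4, 8, 17, 24, 25], [0,
   4, 6, 10, 18, 23], [0, 6, 10, 12, 14, 15], [], [], [], [], [], [0, 11, 13, 17, 29], [0, 4, 8,
   10, 15, 20], [], [0, 5, 11, 24, 25, 27], [], [0, 7, 15, 29], [], [], [], [], [0, 6, 9, 10, 16,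
   24], [], [0, 10, 18, 25, 27, 29], [0, 1, 6, 11, 14, 19], [], [], [], [0, 11, 16, 19], [], [0,
   11, 14, 21, 25, 27], [0, 1, 2, 12, 20, 23], [0, 2, 5, 13, 18, 22], [0, 5, 11, 17, 19, 22], [],
   [], [], [], [0, 2, 14, 17, 19, 26], [], [], [0, 6, 11, 13, 14, 28], [0, 12, 19, 24, 27, 32],
   [], [0, 10, 16, 29, 30], [], [0, 10, 26, 28], [], [], [0, 1, 2, 6, 12, 25], [0, 5, 12, 24, 27,
   29], [0, 2, 8, 12, 15, 18], [], [], [], [0, 1, 3, 4, 5, 22], [0, 10, 20, 21, 27], [], [0, 7,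
   10, 13, 25, 26], [0, 2, 5, 9, 13], [], [], [0, 2, 7, 17, 20, 29], [], [0, 3, 4, 12, 14], [],
   [], [0, 2, 5, 13, 18, 22], [], [0, 2, 4, 9, 16, 23], [0, 9, 16, 22, 23, 26], [0, 1, 4, 5, 18],
   [], [0, 8, 18, 19, 20, 31], [], [0, 7, 9, 13, 21, 28], [0, 3, 4, 11, 20, 22], [0, 2, 12, 15,
   18, 23], [0, 12, 13, 14], [0, 5, 11, 12, 24, 26], [0, 5, 11, 12, 24, 26], [0, 5, 11, 12, 24,
   26], [], [0, 2, 4, 7, 21], [], [0, 3, 17, 18, 23, 31], [0, 6, 12, 22, 23], [0, 8, 12, 23, 29,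
   33], [0, 3, 11, 14, 19, 20], [0, 1, 2, 6, 12, 25], [0, 4, 6, 8, 24], [0, 2, 8, 12, 15, 18],
   [], [], [0, 6, 12, 14, 21], [], [], [0, 4, 7, 14, 17, 23], [], [0, 1, 5, 14, 16, 24], [], [0,
   10, 19, 23, 26, 27], [], [0, 4, 22, 25], [0, 5, 10, 17, 21, 29], [], [0, 12, 26, 27, 28, 29],
   [0, 2, 7, 12, 13, 17], [0, 4, 6, 8, 12, 13], [], [0, 9, 11, 13, 19, 29], [], [], [], [], [0,
   7, 8, 11, 21, 22], [], [0, 2, 12, 15, 18, 23], [0, 2, 8, 11, 23], [0, 7, 18, 20, 26], [0, 3,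
   4, 13, 20, 22], [0, 1, 7, 17, 21, 22], [0, 3, 6, 20, 22], [], [0, 1, 7, 17, 26, 27], [], [0,
   2, 10, 12, 17, 24], [0, 4, 9, 11, 17], [0, 3, 6, 15, 16, 17], [], [0, 6, 7, 19, 22, 31], [0,
   11, 13, 17, 29], [0, 5, 17, 23, 24, 29], [0, 5, 16, 24, 25, 32], [0, 1, 2, 6, 12, 25], [0, 5,
   12, 24, 27, 29], [0, 2, 8, 12, 15, 18], [0, 9, 20, 32], [0, 4, 8, 9, 13, 26], [0, 7, 11, 18,
   23], [0, 9, 18, 19, 23], [0, 4, 8, 9, 13, 26], [], [0, 5, 7, 23, 26], [0, 3, 5, 6, 14, 27],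
   [], [0, 6, 9, 10, 16, 24], [0, 9, 12, 25, 32], [0, 1, 4, 15, 23, 28], [], [0, 10, 17, 27, 29,
   31], [], [0, 10, 13, 14, 17, 22], [], [0, 2, 4, 8, 19, 27], [0, 5, 10, 21, 22, 32], [], [0, 5,
   10, 12, 14, 16], [], [], [0, 3, 15, 24, 28, 32], [], [0, 4, 5, 6, 14, 22], [0, 9, 10, 19, 26,
   32], [0, 5, 7, 20, 21, 26], [], [], [0, 6, 8, 9, 13, 27], [0, 9, 20, 23, 31, 33], [0, 1, 2, 6,
   12, 25], [0, 13, 14, 29], [0, 2, 8, 12, 15, 18], [0, 4, 10, 25, 28], [0, 6, 11, 25, 26, 27],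
   [], [], [], [0, 5, 9, 14, 17, 26], [0, 5, 9, 14, 17, 26], [0, 5, 9, 14, 17, 26], [0, 5, 9, 14,
   17, 26], [0, 6, 8, 15, 22, 24], [0, 5, 13, 23, 26], [0, 2, 3, 5, 8, 15], [0, 2, 3, 5, 8, 15],
   [0, 2, 3, 5, 8, 15], [0, 12, 17, 29, 32], [0, 6, 8, 9, 13, 27], [], [], [0, 15, 17, 19, 22,
   23], [0, 5, 15, 16, 25, 32], [0, 11, 15, 28], [], [], [0, 6, 8, 17, 29, 30], [0, 13, 21, 26,
   29, 30]]

/-- Pairs `(m, t)` such that dilation by `m` followed by rotation by `t` may take one of the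
`candidates` to one of the `representatives`. -/
def symmetries : List (ℕ × ℕ) := [(1, 0), (26, 20), (17, 22), (8, 31), (19, 18), (28, 11)]

/-- Tests that one of the `symmetries` takes `vec r` to one of the `representatives`. -/
def isRepresented (r : ℕ) : Bool :=
  symmetries.any fun s => force (rotate 45 s.2 (scale 45 s.1 r)) fun x => representatives.any x.beq

/-- Tests that `wordWeight (vec r) (indicator S) < 14`, given `R = repeatBits 8 45 r`. -/
def isLight (R : ℕ) (S : List ℕ) : Bool :=
  (S.length + (shiftSum R S &&& repunit 45 7) % 127).blt 14

/-- Tests that each number in the first list is covered by `commonSupports` or by the next entry of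
the second list. -/
def covers : List ℕ → List (List ℕ) → Bool
  | [], _ => true
  | r :: L, Ws => force r fun r => force (repeatBits 8 45 r) fun R =>
    bif commonSupports.any (isLight R) then covers L Ws
    else match Ws with
      | [] => false
      | S :: Ws => (bif S.isEmpty then isRepresented r else isLight R S) && covers L Ws

theorem covers_candidates : covers candidates certificates = true := by
  decide +kernel

theorem ne_nil_and_nodup_of_mem_commonSupports :
    ∀ S ∈ commonSupports, S ≠ [] ∧ S.Nodup ∧ ∀ i ∈ S, i < 45 := by
  decide

theorem nodup_of_mem_certificates : ∀ S ∈ certificates, S.Nodup ∧ ∀ i ∈ S, i < 45 := by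
  decide +kernel

theorem exists_mem_representatives {r : ℕ} (h : isRepresented r = true) :
    ∃ s ∈ representatives,
      CodeEquiv (hankelCode (vec s : Fin 45 → ZMod 2)) (hankelCode (vec r)) := by
  obtain ⟨⟨m, t⟩, hs, hany⟩ := List.any_eq_true.1 h
  have hcoprime : ∀ s ∈ symmetries, (Nat.card (Fin 45)).Coprime s.1 ∧ s.2 < 45 := by
    rw [Nat.card_fin]
    decide
  obtain ⟨hm, ht⟩ := hcoprime _ hs
  rw [force_eq, List.any_eq_true] at hany
  obtain ⟨s, hs, heq⟩ := hany
  refine ⟨s, hs, .symm ?_⟩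
  rw [← Nat.eq_of_beq_eq_true heq, vec_rotate ⟨t, ht⟩, vec_scale hm]
  exact (codeEquiv_hankelCode_comp _ _).trans (codeEquiv_hankelCode_translate _ _)

theorem not_minWeightIs_of_isLight {r : ℕ} {S : List ℕ} (hnodup : S.Nodup)
    (hlt : ∀ i ∈ S, i < 45) (hne : S ≠ []) (h : isLight (repeatBits 8 45 r) S = true) :
    ¬ MinWeightIs (hankelCode (vec r : Fin 45 → ZMod 2)) 14 := by
  rw [isLight, Nat.blt_eq, ← hammingNorm_indicator (n := 45) hnodup hlt,
    show 127 = 2 ^ 7 - 1 from rfl,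
    ← hammingNorm_indicator_correlation_vec (k := 7) (by norm_num) (by norm_num) (by norm_num)
      (by norm_num) hnodup hlt, ← wordWeight, ← hammingNorm_elim_correlation] at h
  refine fun hmin => h.not_ge (hmin.2 _ (elim_mem_hankelCode _ _) fun hzero => hne ?_)
  have hindicator : (indicator S : Fin 45 → ZMod 2) = 0 :=
    funext fun i => congrFun hzero (Sum.inl i)
  rw [← List.length_eq_zero_iff, ← hammingNorm_indicator (n := 45) hnodup hlt, hindicator,
    hammingNorm_zero]

theorem covers_cons_nil (r : ℕ) (L : List ℕ) : covers (r :: L) [] =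
    (commonSupports.any (isLight (repeatBits 8 45 r)) && covers L []) := by
  rw [covers, force_eq, force_eq]
  cases commonSupports.any (isLight (repeatBits 8 45 r)) <;> rfl

theorem covers_cons_cons (r : ℕ) (L S : List ℕ) (Ws : List (List ℕ)) :
    covers (r :: L) (S :: Ws) =
      bif commonSupports.any (isLight (repeatBits 8 45 r)) then covers L (S :: Ws)
      else (bif S.isEmpty then isRepresented r else isLight (repeatBits 8 45 r) S) &&
        covers L Ws := by
  rw [covers, force_eq, force_eq]

theorem isRepresented_of_covers {L : List ℕ} {Ws : List (List ℕ)}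
    (hWs : ∀ S ∈ Ws, S.Nodup ∧ ∀ i ∈ S, i < 45) (h : covers L Ws = true) {r : ℕ} (hr : r ∈ L)
    (hmin : MinWeightIs (hankelCode (vec r : Fin 45 → ZMod 2)) 14) : isRepresented r = true := by
  have hcommon : commonSupports.any (isLight (repeatBits 8 45 r)) = false := by
    refine List.any_eq_false.2 fun S hS hlight => ?_
    obtain ⟨hne, hnodup, hlt⟩ := ne_nil_and_nodup_of_mem_commonSupports S hS
    exact not_minWeightIs_of_isLight hnodup hlt hne hlight hmin
  induction L generalizing Ws with
  | nil => exact absurd hr List.not_mem_nil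
  | cons q L ih =>
    cases Ws with
    | nil =>
      rw [covers_cons_nil, Bool.and_eq_true] at h
      obtain rfl | hrL := List.mem_cons.1 hr
      · exact absurd h.1 (Bool.eq_false_iff.1 hcommon)
      · exact ih hWs h.2 hrL
    | cons S Ws =>
      rw [covers_cons_cons] at h
      obtain rfl | hrL := List.mem_cons.1 hr
      · rw [hcommon, cond_false, Bool.and_eq_true] at h
        obtain ⟨hnodup, hlt⟩ := hWs S List.mem_cons_self
        cases S with
        | nil =>
          rw [List.isEmpty_nil, cond_true] at h
          exact h.1
        | cons i S =>
          rw [List.isEmpty_cons, cond_false] at h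
          exact absurd hmin (not_minWeightIs_of_isLight hnodup hlt (List.cons_ne_nil i S) h.1)
      · cases hany : commonSupports.any (isLight (repeatBits 8 45 q))
        · rw [hany, cond_false, Bool.and_eq_true] at h
          exact ih (fun S hS => hWs S (List.mem_cons_of_mem _ hS)) h.2 hrL
        · rw [hany, cond_true] at h
          exact ih hWs h hrL

theorem exists_mem_representatives_of_mem_candidates {r : ℕ} (hr : r ∈ candidates)
    (hmin : MinWeightIs (hankelCode (vec r : Fin 45 → ZMod 2)) 14) : ∃ s ∈ representatives,
      CodeEquiv (hankelCode (vec s : Fin 45 → ZMod 2)) (hankelCode (vec r)) :=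
  exists_mem_representatives
    (isRepresented_of_covers nodup_of_mem_certificates covers_candidates hr hmin)

end Coverage

section Classification

/-- The word given by the `k`-th of the `representatives`. -/
def representative (k : Fin 716) : Fin 45 → ZMod 2 :=
  vec (representatives.get (k.cast representatives_length.symm))

theorem representative_spec (k : Fin 716) : IsOrthogonal (representative k) ∧
    MinWeightIs (hankelCode (representative k)) 14 ∧
    pairInvariant pairWeight (hankelCode (representative k)) 14 (Sum.inl 0) =
      codeInvariant (representatives.get (k.cast representatives_length.symm)) :=
  checkCode_spec (checkCode_of_ascending ascending_representatives _ (List.get_mem _ _)).1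

theorem eq_of_codeEquiv_representative {k l : Fin 716}
    (h : CodeEquiv (hankelCode (representative k)) (hankelCode (representative l))) : k = l := by
  obtain ⟨horth, -, hk⟩ := representative_spec k
  obtain ⟨-, -, hl⟩ := representative_spec l
  have heq := pairInvariant_hankelCode_of_codeEquiv pairWeight 14 horth h (Sum.inl 0)
  rw [hk, hl] at heq
  have hlt := List.pairwise_iff_get.1 (pairwise_of_ascending ascending_representatives)
  obtain h | h | h := lt_trichotomy k l
  · exact absurd heq (hlt _ _ (Fin.cast_lt_cast _ |>.2 h)).ne'
  · exact h
  · exact absurd heq (hlt _ _ (Fin.cast_lt_cast _ |>.2 h)).ne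

theorem exists_codeEquiv_representative {v : Fin 45 → ZMod 2} (hv : IsOrthogonal v)
    (hmin : MinWeightIs (hankelCode v) 14) :
    ∃ k, CodeEquiv (hankelCode (representative k)) (hankelCode v) := by
  obtain ⟨r, hr, hrv⟩ := exists_mem_candidates hv
  obtain ⟨s, hs, hsr⟩ :=
    exists_mem_representatives_of_mem_candidates hr (hrv.symm.minWeightIs hmin)
  obtain ⟨k, rfl⟩ := List.get_of_mem hs
  refine ⟨k.cast representatives_length, ?_⟩
  rw [representative, Fin.cast_cast, Fin.cast_eq_self]
  exact hsr.trans hrv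

end Classification

end DoubleCirculant

open DoubleCirculant in
theorem classification_pure_dcc_90_45_14 :
    ∃ reps : Fin 716 → Submodule (ZMod 2) (Fin 45 ⊕ Fin 45 → ZMod 2),
      (∀ k, (∃ R : Matrix (Fin 45) (Fin 45) (ZMod 2), IsCirculant R ∧ reps k = pureDCC R) ∧
        IsSelfDual (reps k) ∧ MinWeightIs (reps k) 14) ∧
      (∀ k l, CodeEquiv (reps k) (reps l) → k = l) ∧
      (∀ R : Matrix (Fin 45) (Fin 45) (ZMod 2), IsCirculant R → IsSelfDual (pureDCC R) →
        MinWeightIs (pureDCC R) 14 → ∃ k, CodeEquiv (reps k) (pureDCC R)) := by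
  refine ⟨fun k => pureDCC (Matrix.circulant (representative k)), fun k => ?_, fun k l h => ?_, ?_⟩
  · have hequiv := codeEquiv_hankelCode_pureDCC (representative k)
    obtain ⟨horth, hmin, -⟩ := representative_spec k
    exact ⟨⟨_, ⟨_, rfl⟩, rfl⟩, hequiv.isSelfDual (isSelfDual_hankelCode_iff.2 horth),
      hequiv.minWeightIs hmin⟩
  · exact eq_of_codeEquiv_representative (((codeEquiv_hankelCode_pureDCC _).trans h).trans
      (codeEquiv_hankelCode_pureDCC _).symm)
  · rintro _ ⟨v, rfl⟩ hself hmin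
    have hequiv := codeEquiv_hankelCode_pureDCC v
    obtain ⟨k, hk⟩ := exists_codeEquiv_representative
      (isSelfDual_hankelCode_iff.1 (hequiv.symm.isSelfDual hself)) (hequiv.symm.minWeightIs hmin)
    exact ⟨k, ((codeEquiv_hankelCode_pureDCC _).symm.trans hk).trans hequiv⟩
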